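/- Let μ be a finite positive Borel measure on the unit sphere S^{m−1} ⊂ R^m (m ≥ 2) such that ∫_{S^{m−1}} x dμ(x) = 0 and μ is not concentrated on any great subsphere (i.e., for every hyperplane Π through the origin, μ(S^{m−1} \ Π) > 0). Then there exists a convex body K ⊂ R^m whose surface area measure equals μ, and K is unique up to translation. -/

import Mathlib

open MeasureTheory Set
open scoped ENNReal Pointwise RealInnerProductSpace Topology

noncomputable section

abbrev Euc (m : ℕ) : Type := EuclideanSpace ℝ (Fin m)

/-- A convex body: compact convex set with nonempty interior. -/
def IsConvexBody {m : ℕ} (K : Set (Euc m)) : Prop :=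
  Convex ℝ K ∧ IsCompact K ∧ (interior K).Nonempty

/-- A (compact convex) polytope: convex hull of a finite set. -/
def IsPolytope {m : ℕ} (P : Set (Euc m)) : Prop :=
  ∃ s : Finset (Euc m), P = convexHull ℝ (s : Set (Euc m))

def unitSphere (m : ℕ) : Set (Euc m) := Metric.sphere 0 1

/-- `n` is an outward unit normal to `K` at the boundary point `x`. -/
def IsOutwardNormalAt {m : ℕ} (K : Set (Euc m)) (x n : Euc m) : Prop :=
  x ∈ frontier K ∧ ‖n‖ = 1 ∧ ∀ y ∈ K, ⟪y - x, n⟫ ≤ 0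

open Classical in
/-- The (set-valued choice of) Gauss map of `K`. -/
def gaussMap {m : ℕ} (K : Set (Euc m)) (x : Euc m) : Euc m :=
  if h : ∃ n, IsOutwardNormalAt K x n then h.choose else 0

/-- The surface area measure of `K`: the pushforward under the Gauss map of the
`(m-1)`-dimensional Hausdorff measure on the boundary of `K`. -/
def surfMeasure {m : ℕ} (K : Set (Euc m)) : Measure (Euc m) :=
  Measure.map (gaussMap K) (μH[(m : ℝ) - 1].restrict (frontier K))

/-- The face of `P` in direction `n`. -/
def faceIn {m : ℕ} (P : Set (Euc m)) (n : Euc m) : Set (Euc m) :=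
  {x ∈ P | ∀ y ∈ P, ⟪y, n⟫ ≤ ⟪x, n⟫}

/-- The `(m-1)`-dimensional volume of the face of `P` in direction `n`. -/
def faceArea {m : ℕ} (P : Set (Euc m)) (n : Euc m) : ℝ≥0∞ :=
  μH[(m : ℝ) - 1] (faceIn P n)

/-- `n` is the outward unit normal to a facet ((m-1)-dimensional face) of `P`. -/
def IsFacetNormal {m : ℕ} (P : Set (Euc m)) (n : Euc m) : Prop :=
  ‖n‖ = 1 ∧ 0 < faceArea P n

/-!
The Prékopa–Leindler inequality gives the Brunn–Minkowski inequality
`vol(K + L)^(1/m) ≥ vol(K)^(1/m) + vol(L)^(1/m)`, with equality for convex bodies of equal volume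
only when they are translates. The bridge to surface area measures is the first variation of
volume: perturbing the support function of `K` by `t • f` on the sphere moves the volume at the rate
`∫ f dS(K, ·)`, as one sees in polar coordinates, where the Hausdorff measure of the boundary has
the density of the cone measure.

Uniqueness: with `f = h_L` the first variation and Brunn–Minkowski give Minkowski's first inequality
`(1/m ∫ h_L dS(K, ·))^m ≥ vol(K)^(m-1) vol(L)`. If `S(K, ·) = S(L, ·)`, using it in both directions
shows that `K` and `L` have equal volume and give equality in Brunn–Minkowski.

Existence: the scale- and translation-invariant ratio `(∫ h_L dμ)^m / vol(L)` attains its minimum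
over convex bodies, since the condition on great subspheres makes `∫ h_L dμ` control the diameter
of `L` and Blaschke's selection theorem applies. The first variation at a minimiser `K` vanishes,
which says that `S(K, ·)` is proportional to `μ`; a dilation turns this into equality.
-/

/-! ### The Prékopa–Leindler inequality on intervals -/

theorem exists_hasDerivAt_inverse {G G' : ℝ → ℝ} {a b : ℝ} (hab : a ≤ b)
    (hG : ContinuousOn G (Icc a b)) (hd : ∀ s ∈ Ioo a b, HasDerivAt G (G' s) s)
    (hpos : ∀ s ∈ Ioo a b, 0 < G' s) :
    ∃ q : ℝ → ℝ, q '' Ioo (G a) (G b) = Ioo a b ∧ StrictMonoOn q (Ioo (G a) (G b)) ∧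
      ∀ τ ∈ Ioo (G a) (G b), HasDerivAt q (G' (q τ))⁻¹ τ := by
  have hmono : StrictMonoOn G (Icc a b) :=
    strictMonoOn_of_deriv_pos (convex_Icc a b) hG fun s hs => by
      rw [interior_Icc] at hs
      rw [(hd s hs).deriv]
      exact hpos s hs
  have hmaps : ∀ s ∈ Ioo a b, G s ∈ Ioo (G a) (G b) := fun s hs =>
    ⟨hmono (left_mem_Icc.2 hab) (Ioo_subset_Icc_self hs) hs.1,
      hmono (Ioo_subset_Icc_self hs) (right_mem_Icc.2 hab) hs.2⟩
  choose! q hq hGq using fun τ (hτ : τ ∈ Ioo (G a) (G b)) => intermediate_value_Ioo hab hG hτ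
  have hqG : ∀ s ∈ Ioo a b, q (G s) = s := fun s hs =>
    hmono.injOn (Ioo_subset_Icc_self (hq _ (hmaps s hs))) (Ioo_subset_Icc_self hs)
      (hGq _ (hmaps s hs))
  have himage : q '' Ioo (G a) (G b) = Ioo a b :=
    Subset.antisymm (image_subset_iff.2 hq) fun s hs => ⟨G s, hmaps s hs, hqG s hs⟩
  have hqmono : StrictMonoOn q (Ioo (G a) (G b)) := fun x hx y hy hxy =>
    (hmono.lt_iff_lt (Ioo_subset_Icc_self (hq x hx)) (Ioo_subset_Icc_self (hq y hy))).1 <| by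
      rwa [hGq x hx, hGq y hy]
  refine ⟨q, himage, hqmono, fun τ hτ => ?_⟩
  have hcont : ContinuousAt q τ :=
    hqmono.continuousAt_of_image_mem_nhds (isOpen_Ioo.mem_nhds hτ) <| by
      rw [himage]
      exact isOpen_Ioo.mem_nhds (hq τ hτ)
  exact (hd _ (hq τ hτ)).of_local_left_inverse hcont (hpos _ (hq τ hτ)).ne'
    (Filter.eventually_of_mem (isOpen_Ioo.mem_nhds hτ) hGq)

/-- `q : (0, 1) → I` is the quantile function of the density `f` on `I`: the mass of `f` to the left
of `q τ` is the fraction `τ` of the total mass. The derivative condition encodes this. -/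
structure IsQuantile (f : ℝ → ℝ) (I : Set ℝ) (q : ℝ → ℝ) : Prop where
  image_eq : q '' Ioo 0 1 = I
  strictMonoOn : StrictMonoOn q (Ioo 0 1)
  hasDerivAt : ∀ τ ∈ Ioo (0 : ℝ) 1, HasDerivAt q ((∫ x in I, f x) / f (q τ)) τ

theorem setIntegral_Ioo_pos {f : ℝ → ℝ} {a b : ℝ} (hab : a < b) (hpos : ∀ s ∈ Ioo a b, 0 < f s)
    (hint : IntegrableOn f (Ioo a b)) : 0 < ∫ x in Ioo a b, f x := by
  rw [← integral_Ioc_eq_integral_Ioo, ← intervalIntegral.integral_of_le hab.le]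
  exact intervalIntegral.intervalIntegral_pos_of_pos_on
    ((intervalIntegrable_iff_integrableOn_Ioo_of_le hab.le).2 hint) hpos hab

theorem exists_isQuantile {f : ℝ → ℝ} {a b : ℝ} (hab : a < b) (hf : ContinuousOn f (Ioo a b))
    (hpos : ∀ s ∈ Ioo a b, 0 < f s) (hint : IntegrableOn f (Ioo a b)) :
    ∃ q, IsQuantile f (Ioo a b) q := by
  set F := ∫ x in Ioo a b, f x with hF
  have hFpos : 0 < F := setIntegral_Ioo_pos hab hpos hint
  have hII : IntervalIntegrable f volume a b :=
    (intervalIntegrable_iff_integrableOn_Ioo_of_le hab.le).2 hint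
  let G : ℝ → ℝ := fun s => (∫ x in a..s, f x) / F
  have hGd : ∀ s ∈ Ioo a b, HasDerivAt G (f s / F) s := fun s hs => by
    refine (intervalIntegral.integral_hasDerivAt_right (hII.mono_set ?_)
      (hf.stronglyMeasurableAtFilter isOpen_Ioo s hs)
      (hf.continuousAt (isOpen_Ioo.mem_nhds hs))).div_const F
    rw [uIcc_of_le hs.1.le, uIcc_of_le hab.le]
    exact Icc_subset_Icc_right hs.2.le
  have hGc : ContinuousOn G (Icc a b) := by
    have := intervalIntegral.continuousOn_primitive_interval (μ := volume) (f := f) (a := a)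
      (b := b) (by rwa [uIcc_of_le hab.le, integrableOn_Icc_iff_integrableOn_Ioo])
    rw [uIcc_of_le hab.le] at this
    exact this.div_const F
  have hGa : G a = 0 := by simp [G]
  have hGb : G b = 1 := by
    simp only [G]
    rw [intervalIntegral.integral_of_le hab.le, integral_Ioc_eq_integral_Ioo, ← hF,
      div_self hFpos.ne']
  obtain ⟨q, himage, hmono, hd⟩ :=
    exists_hasDerivAt_inverse hab.le hGc hGd fun s hs => div_pos (hpos s hs) hFpos
  rw [hGa, hGb] at himage hmono hd
  exact ⟨q, himage, hmono, fun τ hτ => by simpa only [inv_div] using hd τ hτ⟩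

/-- The integrand of the transport argument: the speed of `τ ↦ w₁ * q₁ τ + w₂ * q₂ τ`, for quantile
functions `qᵢ` of densities with masses `Fᵢ` and current values `x`, `y`, times the geometric mean
of these values. -/
def transportIntegrand (w₁ w₂ F₁ F₂ x y : ℝ) : ℝ :=
  (w₁ * (F₁ / x) + w₂ * (F₂ / y)) * (x ^ w₁ * y ^ w₂)

section TransportIntegrand

variable {w₁ w₂ F₁ F₂ x y : ℝ}

theorem geom_mean_eq_div_geom_mean_mul (hF₁ : 0 ≤ F₁) (hF₂ : 0 ≤ F₂) (hx : 0 < x) (hy : 0 < y) :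
    F₁ ^ w₁ * F₂ ^ w₂ = ((F₁ / x) ^ w₁ * (F₂ / y) ^ w₂) * (x ^ w₁ * y ^ w₂) := by
  rw [Real.div_rpow hF₁ hx.le, Real.div_rpow hF₂ hy.le]
  field_simp

theorem le_transportIntegrand (hw₁ : 0 ≤ w₁) (hw₂ : 0 ≤ w₂) (hw : w₁ + w₂ = 1)
    (hF₁ : 0 ≤ F₁) (hF₂ : 0 ≤ F₂) (hx : 0 < x) (hy : 0 < y) :
    F₁ ^ w₁ * F₂ ^ w₂ ≤ transportIntegrand w₁ w₂ F₁ F₂ x y := by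
  rw [geom_mean_eq_div_geom_mean_mul hF₁ hF₂ hx hy, transportIntegrand]
  gcongr
  exact Real.geom_mean_le_arith_mean2_weighted hw₁ hw₂ (by positivity) (by positivity) hw

theorem div_eq_div_of_transportIntegrand_eq (hw₁ : 0 < w₁) (hw₂ : 0 < w₂) (hw : w₁ + w₂ = 1)
    (hF₁ : 0 ≤ F₁) (hF₂ : 0 ≤ F₂) (hx : 0 < x) (hy : 0 < y)
    (h : transportIntegrand w₁ w₂ F₁ F₂ x y = F₁ ^ w₁ * F₂ ^ w₂) : F₁ / x = F₂ / y := by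
  rw [geom_mean_eq_div_geom_mean_mul hF₁ hF₂ hx hy, transportIntegrand] at h
  have hmean := mul_right_cancel₀ (by positivity) h
  have := (Real.geom_mean_eq_arith_mean_weighted_iff_of_pos Finset.univ ![w₁, w₂]
    ![F₁ / x, F₂ / y] (by simp [Fin.forall_fin_two, hw₁, hw₂])
    (by simpa [Fin.sum_univ_two] using hw)
    (by simp [Fin.forall_fin_two, div_nonneg, hF₁, hF₂, hx.le, hy.le])).1
      (by simpa [Fin.prod_univ_two, Fin.sum_univ_two] using hmean.symm)
  simpa using this 0 (Finset.mem_univ _) 1 (Finset.mem_univ _)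

end TransportIntegrand

section PrekopaLeindler

variable {f₁ f₂ q₁ q₂ : ℝ → ℝ} {f₃ : ℝ → ℝ≥0∞} {w₁ w₂ : ℝ}

theorem IsQuantile.apply_mem {f q : ℝ → ℝ} {I : Set ℝ} (hq : IsQuantile f I q) {τ : ℝ}
    (hτ : τ ∈ Ioo (0 : ℝ) 1) : q τ ∈ I :=
  hq.image_eq ▸ mem_image_of_mem q hτ

theorem IsQuantile.continuousOn_comp {f q : ℝ → ℝ} {I : Set ℝ} (hq : IsQuantile f I q)
    (hf : ContinuousOn f I) : ContinuousOn (fun τ => f (q τ)) (Ioo 0 1) :=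
  hf.comp (fun τ hτ => (hq.hasDerivAt τ hτ).continuousAt.continuousWithinAt) fun _ => hq.apply_mem

theorem IsQuantile.lintegral_transportIntegrand_le {I₁ I₂ : Set ℝ} (hq₁ : IsQuantile f₁ I₁ q₁)
    (hq₂ : IsQuantile f₂ I₂ q₂) (hw₁ : 0 < w₁) (hw₂ : 0 < w₂)
    (hp₁ : ∀ s ∈ I₁, 0 < f₁ s) (hp₂ : ∀ s ∈ I₂, 0 < f₂ s)
    (hF₁ : 0 < ∫ x in I₁, f₁ x) (hF₂ : 0 < ∫ x in I₂, f₂ x)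
    (h₃ : ∀ s ∈ I₁, ∀ t ∈ I₂, ENNReal.ofReal (f₁ s ^ w₁ * f₂ t ^ w₂) ≤ f₃ (w₁ * s + w₂ * t)) :
    ∫⁻ τ in Ioo (0 : ℝ) 1, ENNReal.ofReal (transportIntegrand w₁ w₂ (∫ x in I₁, f₁ x)
      (∫ x in I₂, f₂ x) (f₁ (q₁ τ)) (f₂ (q₂ τ))) ≤ ∫⁻ x, f₃ x := by
  set z : ℝ → ℝ := fun τ => w₁ * q₁ τ + w₂ * q₂ τ
  have hz : StrictMonoOn z (Ioo 0 1) := fun x hx y hy hxy =>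
    add_lt_add (mul_lt_mul_of_pos_left (hq₁.strictMonoOn hx hy hxy) hw₁)
      (mul_lt_mul_of_pos_left (hq₂.strictMonoOn hx hy hxy) hw₂)
  refine le_trans (setLIntegral_mono' measurableSet_Ioo fun τ hτ => ?_)
    ((lintegral_image_eq_lintegral_abs_deriv_mul measurableSet_Ioo
      (fun τ hτ => (((hq₁.hasDerivAt τ hτ).const_mul w₁).add
        ((hq₂.hasDerivAt τ hτ).const_mul w₂)).hasDerivWithinAt)
      hz.injOn f₃).symm.le.trans (setLIntegral_le_lintegral _ _))
  have hpos₁ := hp₁ _ (hq₁.apply_mem hτ)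
  have hpos₂ := hp₂ _ (hq₂.apply_mem hτ)
  rw [transportIntegrand, ENNReal.ofReal_mul (by positivity), abs_of_pos (by positivity)]
  exact mul_le_mul_right (h₃ _ (hq₁.apply_mem hτ) _ (hq₂.apply_mem hτ)) _

variable {a₁ b₁ a₂ b₂ : ℝ}

theorem prekopa_leindler_Ioo (hab₁ : a₁ < b₁) (hab₂ : a₂ < b₂)
    (hw₁ : 0 < w₁) (hw₂ : 0 < w₂) (hw : w₁ + w₂ = 1)
    (hf₁ : ContinuousOn f₁ (Ioo a₁ b₁)) (hf₂ : ContinuousOn f₂ (Ioo a₂ b₂))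
    (hp₁ : ∀ s ∈ Ioo a₁ b₁, 0 < f₁ s) (hp₂ : ∀ s ∈ Ioo a₂ b₂, 0 < f₂ s)
    (hi₁ : IntegrableOn f₁ (Ioo a₁ b₁)) (hi₂ : IntegrableOn f₂ (Ioo a₂ b₂))
    (h₃ : ∀ s ∈ Ioo a₁ b₁, ∀ t ∈ Ioo a₂ b₂,
      ENNReal.ofReal (f₁ s ^ w₁ * f₂ t ^ w₂) ≤ f₃ (w₁ * s + w₂ * t)) :
    ENNReal.ofReal ((∫ x in Ioo a₁ b₁, f₁ x) ^ w₁ * (∫ x in Ioo a₂ b₂, f₂ x) ^ w₂) ≤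
      ∫⁻ x, f₃ x := by
  obtain ⟨q₁, hq₁⟩ := exists_isQuantile hab₁ hf₁ hp₁ hi₁
  obtain ⟨q₂, hq₂⟩ := exists_isQuantile hab₂ hf₂ hp₂ hi₂
  have hF₁ := setIntegral_Ioo_pos hab₁ hp₁ hi₁
  have hF₂ := setIntegral_Ioo_pos hab₂ hp₂ hi₂
  calc ENNReal.ofReal ((∫ x in Ioo a₁ b₁, f₁ x) ^ w₁ * (∫ x in Ioo a₂ b₂, f₂ x) ^ w₂)
      = ∫⁻ _ in Ioo (0 : ℝ) 1,
          ENNReal.ofReal ((∫ x in Ioo a₁ b₁, f₁ x) ^ w₁ * (∫ x in Ioo a₂ b₂, f₂ x) ^ w₂) := by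
        simp
    _ ≤ _ := setLIntegral_mono' measurableSet_Ioo fun τ hτ => ENNReal.ofReal_le_ofReal <|
        le_transportIntegrand hw₁.le hw₂.le hw hF₁.le hF₂.le (hp₁ _ (hq₁.apply_mem hτ))
          (hp₂ _ (hq₂.apply_mem hτ))
    _ ≤ ∫⁻ x, f₃ x := hq₁.lintegral_transportIntegrand_le hq₂ hw₁ hw₂ hp₁ hp₂ hF₁ hF₂ h₃

/-- In the case of equality, the transport argument loses nothing: the AM-GM inequality is an
equality at almost every, hence by continuity every, `τ`. -/
theorem IsQuantile.div_eq_div_of_lintegral_le {I₁ I₂ : Set ℝ} (hq₁ : IsQuantile f₁ I₁ q₁)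
    (hq₂ : IsQuantile f₂ I₂ q₂) (hw₁ : 0 < w₁) (hw₂ : 0 < w₂) (hw : w₁ + w₂ = 1)
    (hf₁ : ContinuousOn f₁ I₁) (hf₂ : ContinuousOn f₂ I₂)
    (hp₁ : ∀ s ∈ I₁, 0 < f₁ s) (hp₂ : ∀ s ∈ I₂, 0 < f₂ s)
    (hF₁ : 0 < ∫ x in I₁, f₁ x) (hF₂ : 0 < ∫ x in I₂, f₂ x)
    (h₃ : ∀ s ∈ I₁, ∀ t ∈ I₂, ENNReal.ofReal (f₁ s ^ w₁ * f₂ t ^ w₂) ≤ f₃ (w₁ * s + w₂ * t))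
    (hle : ∫⁻ x, f₃ x ≤ ENNReal.ofReal ((∫ x in I₁, f₁ x) ^ w₁ * (∫ x in I₂, f₂ x) ^ w₂)) {τ : ℝ}
    (hτ : τ ∈ Ioo (0 : ℝ) 1) :
    (∫ x in I₁, f₁ x) / f₁ (q₁ τ) = (∫ x in I₂, f₂ x) / f₂ (q₂ τ) := by
  set F₁ := ∫ x in I₁, f₁ x
  set F₂ := ∫ x in I₂, f₂ x
  set Ψ : ℝ → ℝ := fun τ => transportIntegrand w₁ w₂ F₁ F₂ (f₁ (q₁ τ)) (f₂ (q₂ τ))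
  have hpos₁ : ∀ τ ∈ Ioo (0 : ℝ) 1, 0 < f₁ (q₁ τ) := fun τ hτ => hp₁ _ (hq₁.apply_mem hτ)
  have hpos₂ : ∀ τ ∈ Ioo (0 : ℝ) 1, 0 < f₂ (q₂ τ) := fun τ hτ => hp₂ _ (hq₂.apply_mem hτ)
  have hΨc : ContinuousOn Ψ (Ioo 0 1) := by
    have hc₁ := hq₁.continuousOn_comp hf₁
    have hc₂ := hq₂.continuousOn_comp hf₂
    exact ((continuousOn_const.mul (continuousOn_const.div hc₁ fun τ hτ => (hpos₁ τ hτ).ne')).add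
      (continuousOn_const.mul (continuousOn_const.div hc₂ fun τ hτ => (hpos₂ τ hτ).ne'))).mul
      ((hc₁.rpow_const fun _ _ => Or.inr hw₁.le).mul (hc₂.rpow_const fun _ _ => Or.inr hw₂.le))
  have hΨge : ∀ τ ∈ Ioo (0 : ℝ) 1, F₁ ^ w₁ * F₂ ^ w₂ ≤ Ψ τ := fun τ hτ =>
    le_transportIntegrand hw₁.le hw₂.le hw hF₁.le hF₂.le (hpos₁ τ hτ) (hpos₂ τ hτ)
  have hae : (fun _ => ENNReal.ofReal (F₁ ^ w₁ * F₂ ^ w₂)) =ᵐ[volume.restrict (Ioo (0 : ℝ) 1)]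
      fun τ => ENNReal.ofReal (Ψ τ) := by
    refine ae_eq_of_ae_le_of_lintegral_le ?_ (by simp)
      (hΨc.aemeasurable measurableSet_Ioo).ennreal_ofReal ?_
    · filter_upwards [ae_restrict_mem measurableSet_Ioo] with τ hτ
      exact ENNReal.ofReal_le_ofReal (hΨge τ hτ)
    · exact (hq₁.lintegral_transportIntegrand_le hq₂ hw₁ hw₂ hp₁ hp₂ hF₁ hF₂ h₃).trans
        (hle.trans (by simp))
  have hae' : Ψ =ᵐ[volume.restrict (Ioo (0 : ℝ) 1)] fun _ => F₁ ^ w₁ * F₂ ^ w₂ := by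
    filter_upwards [hae, ae_restrict_mem measurableSet_Ioo] with τ h hτ
    rw [ENNReal.ofReal_eq_ofReal_iff (by positivity)
      ((by positivity : 0 ≤ F₁ ^ w₁ * F₂ ^ w₂).trans (hΨge τ hτ))] at h
    exact h.symm
  exact div_eq_div_of_transportIntegrand_eq hw₁ hw₂ hw hF₁.le hF₂.le (hpos₁ τ hτ) (hpos₂ τ hτ)
    (Measure.eqOn_open_of_ae_eq hae' isOpen_Ioo hΨc continuousOn_const hτ)

theorem Ioo_eq_Ioo_iff_of_lt {a b c d : ℝ} (hab : a < b) (hcd : c < d) :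
    Ioo a b = Ioo c d ↔ a = c ∧ b = d := by
  refine ⟨fun h => ?_, fun ⟨h₁, h₂⟩ => h₁ ▸ h₂ ▸ rfl⟩
  exact ⟨by rw [← csInf_Ioo hab, h, csInf_Ioo hcd], by rw [← csSup_Ioo hab, h, csSup_Ioo hcd]⟩

theorem eq_translate_of_prekopa_leindler_Ioo_le (hab₁ : a₁ < b₁) (hab₂ : a₂ < b₂)
    (hw₁ : 0 < w₁) (hw₂ : 0 < w₂) (hw : w₁ + w₂ = 1)
    (hf₁ : ContinuousOn f₁ (Ioo a₁ b₁)) (hf₂ : ContinuousOn f₂ (Ioo a₂ b₂))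
    (hp₁ : ∀ s ∈ Ioo a₁ b₁, 0 < f₁ s) (hp₂ : ∀ s ∈ Ioo a₂ b₂, 0 < f₂ s)
    (hi₁ : IntegrableOn f₁ (Ioo a₁ b₁)) (hi₂ : IntegrableOn f₂ (Ioo a₂ b₂))
    (h₃ : ∀ s ∈ Ioo a₁ b₁, ∀ t ∈ Ioo a₂ b₂,
      ENNReal.ofReal (f₁ s ^ w₁ * f₂ t ^ w₂) ≤ f₃ (w₁ * s + w₂ * t))
    (hle : ∫⁻ x, f₃ x ≤
      ENNReal.ofReal ((∫ x in Ioo a₁ b₁, f₁ x) ^ w₁ * (∫ x in Ioo a₂ b₂, f₂ x) ^ w₂)) :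
    ∃ c, a₂ = a₁ + c ∧ b₂ = b₁ + c ∧ ∀ s ∈ Ioo a₁ b₁,
      f₂ (s + c) / ∫ x in Ioo a₂ b₂, f₂ x = f₁ s / ∫ x in Ioo a₁ b₁, f₁ x := by
  obtain ⟨q₁, hq₁⟩ := exists_isQuantile hab₁ hf₁ hp₁ hi₁
  obtain ⟨q₂, hq₂⟩ := exists_isQuantile hab₂ hf₂ hp₂ hi₂
  have hspeed := fun {τ} => hq₁.div_eq_div_of_lintegral_le hq₂ hw₁ hw₂ hw hf₁ hf₂ hp₁ hp₂
    (setIntegral_Ioo_pos hab₁ hp₁ hi₁) (setIntegral_Ioo_pos hab₂ hp₂ hi₂) h₃ hle (τ := τ)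
  set c := q₂ (1 / 2) - q₁ (1 / 2)
  have hshift : ∀ τ ∈ Ioo (0 : ℝ) 1, q₂ τ = q₁ τ + c := fun τ hτ => by
    have hd : ∀ τ ∈ Ioo (0 : ℝ) 1, HasDerivAt (q₂ - q₁) 0 τ := fun τ hτ => by
      simpa only [hspeed hτ, sub_self] using (hq₂.hasDerivAt τ hτ).sub (hq₁.hasDerivAt τ hτ)
    have := isOpen_Ioo.is_const_of_deriv_eq_zero isPreconnected_Ioo
      (fun τ hτ => (hd τ hτ).differentiableAt.differentiableWithinAt)
      (fun τ hτ => (hd τ hτ).deriv) hτ (show (1 / 2 : ℝ) ∈ Ioo (0 : ℝ) 1 by norm_num)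
    simp only [Pi.sub_apply] at this
    linarith
  have hIoo : Ioo a₂ b₂ = Ioo (a₁ + c) (b₁ + c) := by
    rw [← hq₂.image_eq, ← image_add_const_Ioo, ← hq₁.image_eq, image_image]
    exact image_congr hshift
  obtain ⟨ha, hb⟩ := (Ioo_eq_Ioo_iff_of_lt hab₂ (by linarith)).1 hIoo
  refine ⟨c, ha, hb, fun s hs => ?_⟩
  obtain ⟨τ, hτ, rfl⟩ : s ∈ q₁ '' Ioo 0 1 := hq₁.image_eq ▸ hs
  rw [← hshift τ hτ, ← inv_div, ← hspeed hτ, inv_div]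

end PrekopaLeindler

/-! ### Support functions and Wulff shapes -/

section Support

variable {E : Type*} [NormedAddCommGroup E] [InnerProductSpace ℝ E] {K L : Set E} {φ : E → ℝ}

/-- The support function `h_K(u) = sup {⟪x, u⟫ | x ∈ K}` of a set, as a real number; it is only
meaningful for nonempty bounded `K`. -/
def supportFun (K : Set E) (u : E) : ℝ := sSup ((fun x => ⟪x, u⟫) '' K)

theorem continuous_supportFun (hK : IsCompact K) : Continuous (supportFun K) :=
  hK.continuous_sSup (f := fun u x : E => ⟪x, u⟫) (by fun_prop)

theorem inner_le_supportFun (hK : IsCompact K) {x : E} (hx : x ∈ K) (u : E) :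
    ⟪x, u⟫ ≤ supportFun K u :=
  le_csSup (hK.image (by fun_prop)).bddAbove (mem_image_of_mem _ hx)

theorem supportFun_le (hne : K.Nonempty) {u : E} {c : ℝ} (h : ∀ x ∈ K, ⟪x, u⟫ ≤ c) :
    supportFun K u ≤ c :=
  csSup_le (hne.image _) (forall_mem_image.2 h)

theorem exists_inner_eq_supportFun (hK : IsCompact K) (hne : K.Nonempty) (u : E) :
    ∃ x ∈ K, ⟪x, u⟫ = supportFun K u :=
  (hK.image (f := fun x => ⟪x, u⟫) (by fun_prop)).sSup_mem (hne.image _)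

theorem supportFun_singleton (v u : E) : supportFun {v} u = ⟪v, u⟫ := by
  simp [supportFun]

theorem supportFun_add (hK : IsCompact K) (hL : IsCompact L) (hKne : K.Nonempty)
    (hLne : L.Nonempty) (u : E) : supportFun (K + L) u = supportFun K u + supportFun L u := by
  have himage : (fun x => ⟪x, u⟫) '' (K + L) =
      (fun x => ⟪x, u⟫) '' K + (fun x => ⟪x, u⟫) '' L :=
    image_image2_distrib fun x y => inner_add_left x y u
  rw [supportFun, himage]
  exact csSup_add (hKne.image _) (hK.image (by fun_prop)).bddAbove (hLne.image _)
    (hL.image (by fun_prop)).bddAbove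

theorem supportFun_vadd (hK : IsCompact K) (hne : K.Nonempty) (v u : E) :
    supportFun (v +ᵥ K) u = ⟪v, u⟫ + supportFun K u := by
  rw [← singleton_vadd, vadd_eq_add,
    supportFun_add isCompact_singleton hK (singleton_nonempty v) hne, supportFun_singleton]

theorem supportFun_smul (K : Set E) {c : ℝ} (hc : 0 ≤ c) (u : E) :
    supportFun (c • K) u = c * supportFun K u := by
  have himage : (fun x => ⟪x, u⟫) '' (c • K) = c • ((fun x => ⟪x, u⟫) '' K) :=
    image_smul_comm _ _ _ fun x => real_inner_smul_left x u c
  rw [supportFun, himage, Real.sSup_smul_of_nonneg hc, smul_eq_mul, supportFun]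

theorem abs_supportFun_le (hK : IsCompact K) (hne : K.Nonempty) {R : ℝ}
    (hR : K ⊆ Metric.closedBall 0 R) {u : E} (hu : ‖u‖ = 1) : |supportFun K u| ≤ R := by
  obtain ⟨x, hx, hxu⟩ := exists_inner_eq_supportFun hK hne u
  calc |supportFun K u| ≤ ‖x‖ * ‖u‖ := hxu ▸ abs_real_inner_le_norm x u
    _ ≤ R := by rw [hu, mul_one]; exact mem_closedBall_zero_iff.1 (hR hx)

theorem lipschitzWith_supportFun (hK : IsCompact K) (hne : K.Nonempty) {R : NNReal}
    (hR : K ⊆ Metric.closedBall 0 R) : LipschitzWith R (supportFun K) := by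
  refine LipschitzWith.of_le_add_mul R fun u v => supportFun_le hne fun x hx => ?_
  calc ⟪x, u⟫ = ⟪x, v⟫ + ⟪x, u - v⟫ := by rw [← inner_add_right, add_sub_cancel]
    _ ≤ supportFun K v + ‖x‖ * ‖u - v‖ :=
      add_le_add (inner_le_supportFun hK hx v) (real_inner_le_norm x _)
    _ ≤ supportFun K v + R * dist u v := by
      rw [dist_eq_norm]
      gcongr
      exact mem_closedBall_zero_iff.1 (hR hx)

/-- The Wulff shape of `φ`: the intersection of the half-spaces `⟪x, u⟫ ≤ φ u` over all unit
vectors `u`. -/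
def wulff (φ : E → ℝ) : Set E := {x | ∀ u, ‖u‖ = 1 → ⟪x, u⟫ ≤ φ u}

theorem wulff_eq_iInter (φ : E → ℝ) : wulff φ = ⋂ u, ⋂ _ : ‖u‖ = 1, {x | ⟪x, u⟫ ≤ φ u} := by
  ext x
  simp [wulff]

theorem convex_wulff (φ : E → ℝ) : Convex ℝ (wulff φ) := by
  rw [wulff_eq_iInter]
  exact convex_iInter₂ fun u _ => convex_halfSpace_le
    ⟨fun x y => inner_add_left x y u, fun c x => real_inner_smul_left x u c⟩ _

theorem isClosed_wulff (φ : E → ℝ) : IsClosed (wulff φ) := by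
  rw [wulff_eq_iInter]
  exact isClosed_iInter fun u => isClosed_iInter fun _ => isClosed_le (by fun_prop) (by fun_prop)

theorem supportFun_wulff_le (hne : (wulff φ).Nonempty) {u : E} (hu : ‖u‖ = 1) :
    supportFun (wulff φ) u ≤ φ u :=
  supportFun_le hne fun _ hx => hx u hu

theorem wulff_subset_closedBall {R : ℝ} (hR : 0 ≤ R) (h : ∀ u, ‖u‖ = 1 → φ u ≤ R) :
    wulff φ ⊆ Metric.closedBall 0 R := by
  intro x hx
  rw [mem_closedBall_zero_iff]
  rcases eq_or_ne x 0 with rfl | hx0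
  · simpa using hR
  have hnorm : ‖‖x‖⁻¹ • x‖ = 1 := norm_smul_inv_norm hx0
  calc ‖x‖ = ⟪x, ‖x‖⁻¹ • x⟫ := by
        rw [real_inner_smul_right, real_inner_self_eq_norm_sq]
        field_simp
    _ ≤ R := (hx _ hnorm).trans (h _ hnorm)

theorem mem_of_forall_inner_le [CompleteSpace E] (hc : Convex ℝ K) (hcl : IsClosed K)
    (hne : K.Nonempty) {x : E} (h : ∀ u, ‖u‖ = 1 → ∃ y ∈ K, ⟪x, u⟫ ≤ ⟪y, u⟫) : x ∈ K := by
  by_contra hx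
  obtain ⟨f, s, hs, hxs⟩ := geometric_hahn_banach_closed_point hc hcl hx
  obtain ⟨z, rfl⟩ := (InnerProductSpace.toDual ℝ E).surjective f
  simp only [InnerProductSpace.toDual_apply_apply] at hs hxs
  have hz : z ≠ 0 := by
    rintro rfl
    obtain ⟨y, hy⟩ := hne
    simpa using (hs y hy).trans hxs
  obtain ⟨y, hy, hxy⟩ := h (‖z‖⁻¹ • z) (norm_smul_inv_norm hz)
  rw [real_inner_smul_right, real_inner_smul_right,
    mul_le_mul_iff_right₀ (inv_pos.2 (norm_pos_iff.2 hz)), real_inner_comm,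
    real_inner_comm z] at hxy
  exact absurd ((hs y hy).trans hxs) hxy.not_gt

theorem wulff_supportFun [CompleteSpace E] (hc : Convex ℝ K) (hK : IsCompact K)
    (hne : K.Nonempty) : wulff (supportFun K) = K := by
  refine Subset.antisymm (fun x hx => ?_) fun x hx u _ => inner_le_supportFun hK hx u
  refine mem_of_forall_inner_le hc hK.isClosed hne fun u hu => ?_
  obtain ⟨y, hy, hyu⟩ := exists_inner_eq_supportFun hK hne u
  exact ⟨y, hy, hyu ▸ hx u hu⟩

theorem wulff_mono {ψ : E → ℝ} (h : ∀ u, ‖u‖ = 1 → φ u ≤ ψ u) : wulff φ ⊆ wulff ψ :=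
  fun _ hx u hu => (hx u hu).trans (h u hu)

theorem wulff_congr {ψ : E → ℝ} (h : ∀ u, ‖u‖ = 1 → φ u = ψ u) : wulff φ = wulff ψ := by
  ext x
  exact forall₂_congr fun u hu => by rw [h u hu]

end Support

section ConvexBodyBasics

variable {m : ℕ} {K : Set (Euc m)}

theorem IsConvexBody.convex (hK : IsConvexBody K) : Convex ℝ K := hK.1

theorem IsConvexBody.isCompact (hK : IsConvexBody K) : IsCompact K := hK.2.1

theorem IsConvexBody.nonempty (hK : IsConvexBody K) : K.Nonempty := hK.2.2.mono interior_subset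

theorem IsConvexBody.wulff_supportFun (hK : IsConvexBody K) : wulff (supportFun K) = K :=
  _root_.wulff_supportFun hK.convex hK.isCompact hK.nonempty

theorem IsConvexBody.eq_of_supportFun_eq {L : Set (Euc m)} (hK : IsConvexBody K)
    (hL : IsConvexBody L) (h : ∀ u, ‖u‖ = 1 → supportFun K u = supportFun L u) : K = L := by
  rw [← hK.wulff_supportFun, wulff_congr h, hL.wulff_supportFun]

theorem IsConvexBody.volume_pos (hK : IsConvexBody K) : 0 < volume.real K :=
  ENNReal.toReal_pos (Measure.measure_pos_of_nonempty_interior _ hK.2.2).ne'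
    hK.isCompact.measure_ne_top

theorem IsConvexBody.vadd (hK : IsConvexBody K) (v : Euc m) : IsConvexBody (v +ᵥ K) :=
  ⟨hK.convex.vadd v, hK.isCompact.vadd v, by rw [interior_vadd]; exact hK.2.2.vadd_set⟩

theorem IsConvexBody.smul (hK : IsConvexBody K) {c : ℝ} (hc : c ≠ 0) : IsConvexBody (c • K) :=
  ⟨hK.convex.smul c, hK.isCompact.smul c, by rw [interior_smul₀ hc]; exact hK.2.2.smul_set⟩

theorem IsConvexBody.add {L : Set (Euc m)} (hK : IsConvexBody K) (hL : IsConvexBody L) :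
    IsConvexBody (K + L) := by
  refine ⟨hK.convex.add hL.convex, hK.isCompact.add hL.isCompact, ?_⟩
  obtain ⟨x, hx⟩ := hK.2.2
  obtain ⟨y, hy⟩ := hL.nonempty
  exact ⟨x + y, subset_interior_add_left (add_mem_add hx hy)⟩

theorem isConvexBody_of_volume_ne_zero (hc : Convex ℝ K) (hK : IsCompact K)
    (h : volume K ≠ 0) : IsConvexBody K := by
  refine ⟨hc, hK, nonempty_iff_ne_empty.2 fun hempty => h ?_⟩
  have hfrontier := hc.addHaar_frontier volume
  rwa [hK.isClosed.frontier_eq, hempty, sdiff_empty] at hfrontier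

end ConvexBodyBasics

/-! ### Slicing by parallel hyperplanes -/

section Slicing

variable {E F : Type*} [NormedAddCommGroup E] [InnerProductSpace ℝ E] [NormedAddCommGroup F]
  [InnerProductSpace ℝ F] (L : WithLp 2 (ℝ × F) ≃ₗᵢ[ℝ] E)

/-- The unit vector normal to the hyperplanes `{s} × F` in the orthogonal splitting
`E ≃ ℝ × F`. -/
def splitNormal : E := L (WithLp.toLp 2 (1, 0))

/-- The slice of `A` at height `s` along the normal of the splitting, as a subset of `F`. -/
def slice (A : Set E) (s : ℝ) : Set F := {y | L (WithLp.toLp 2 (s, y)) ∈ A}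

theorem norm_splitNormal : ‖splitNormal L‖ = 1 := by
  simp [splitNormal, L.norm_map]

theorem inner_splitNormal (p : WithLp 2 (ℝ × F)) : ⟪L p, splitNormal L⟫ = p.fst := by
  simp [splitNormal, L.inner_map_map, WithLp.prod_inner_apply]

theorem exists_splitNormal_eq [FiniteDimensional ℝ E] [FiniteDimensional ℝ F]
    (hdim : Module.finrank ℝ E = Module.finrank ℝ F + 1) {n : E} (hn : ‖n‖ = 1) :
    ∃ L : WithLp 2 (ℝ × F) ≃ₗᵢ[ℝ] E, splitNormal L = n := by
  have hdim' : Module.finrank ℝ (WithLp 2 (ℝ × F)) = Module.finrank ℝ E := by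
    rw [(WithLp.linearEquiv 2 ℝ (ℝ × F)).finrank_eq, Module.finrank_prod, Module.finrank_self,
      hdim, add_comm]
  let L := (stdOrthonormalBasis ℝ (WithLp 2 (ℝ × F))).equiv (stdOrthonormalBasis ℝ E)
    (finCongr hdim')
  -- The reflection in the bisecting hyperplane exchanges two vectors of equal length.
  refine ⟨L.trans (ℝ ∙ (splitNormal L - n))ᗮ.reflection, ?_⟩
  exact Submodule.reflection_sub ((norm_splitNormal L).trans hn.symm)

variable {L} {A B : Set E}

theorem isometry_split (s : ℝ) : Isometry fun y : F => L (WithLp.toLp 2 (s, y)) :=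
  L.isometry.comp <| Isometry.of_dist_eq fun y z => by simp [WithLp.prod_dist_eq_of_L2]

theorem isCompact_slice [CompleteSpace F] (hA : IsCompact A) (s : ℝ) : IsCompact (slice L A s) :=
  (isometry_split s).isClosedEmbedding.isCompact_preimage hA

theorem slice_combo_subset (w₁ w₂ s t : ℝ) :
    w₁ • slice L A s + w₂ • slice L B t ⊆ slice L (w₁ • A + w₂ • B) (w₁ * s + w₂ * t) := by
  rintro _ ⟨_, ⟨y, hy, rfl⟩, _, ⟨z, hz, rfl⟩, rfl⟩
  refine ⟨_, smul_mem_smul_set hy, _, smul_mem_smul_set hz, ?_⟩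
  simp only [← map_smul, ← map_add, ← WithLp.toLp_smul, ← WithLp.toLp_add, Prod.smul_mk,
    Prod.mk_add_mk, smul_eq_mul]

theorem convex_slice (hA : Convex ℝ A) (s : ℝ) : Convex ℝ (slice L A s) := by
  refine convex_iff_pointwise_add_subset.2 fun a b ha hb hab => ?_
  calc a • slice L A s + b • slice L A s ⊆ slice L (a • A + b • A) (a * s + b * s) :=
      slice_combo_subset a b s s
    _ = slice L A s := by rw [← hA.add_smul ha hb, hab, one_smul, ← add_mul, hab, one_mul]

theorem mem_Icc_of_mem_slice (hA : IsCompact A) {s : ℝ} {y : F} (hy : y ∈ slice L A s) :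
    s ∈ Icc (-supportFun A (-splitNormal L)) (supportFun A (splitNormal L)) := by
  have hupper := inner_le_supportFun hA hy (splitNormal L)
  have hlower := inner_le_supportFun hA hy (-splitNormal L)
  rw [inner_neg_right, inner_splitNormal] at hlower
  rw [inner_splitNormal] at hupper
  exact ⟨neg_le.1 hlower, hupper⟩

theorem slice_eq_empty (hA : IsCompact A) {s : ℝ}
    (hs : s ∉ Icc (-supportFun A (-splitNormal L)) (supportFun A (splitNormal L))) :
    slice L A s = ∅ :=
  eq_empty_of_forall_notMem fun _ hy => hs (mem_Icc_of_mem_slice hA hy)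

theorem exists_mem_interior_inner_eq (hA : Convex ℝ A) (hAc : IsCompact A)
    (hint : (interior A).Nonempty) {n : E} {s : ℝ}
    (hs : s ∈ Ioo (-supportFun A (-n)) (supportFun A n)) : ∃ p ∈ interior A, ⟪p, n⟫ = s := by
  have hclosure : closure (interior A) = A := by
    rw [hA.closure_interior_eq_closure_of_nonempty_interior hint, hAc.isClosed.closure_eq]
  have exists_gt (u : E) {c : ℝ} (hc : c < supportFun A u) : ∃ p ∈ interior A, c < ⟪p, u⟫ := by
    obtain ⟨x, hx, hxu⟩ := exists_inner_eq_supportFun hAc (hint.mono interior_subset) u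
    obtain ⟨p, hcp, hp⟩ := mem_closure_iff.1 (hclosure.symm ▸ hx) {p | c < ⟪p, u⟫}
      (isOpen_lt continuous_const (by fun_prop)) (hc.trans_eq hxu.symm)
    exact ⟨p, hp, hcp⟩
  obtain ⟨p, hp, hps⟩ := exists_gt n hs.2
  obtain ⟨q, hq, hqs⟩ := exists_gt (-n) (neg_lt.1 hs.1)
  rw [inner_neg_right, neg_lt_neg_iff] at hqs
  exact hA.interior.isPreconnected.intermediate_value hq hp (by fun_prop) ⟨hqs.le, hps.le⟩

theorem nonempty_interior_slice (hA : Convex ℝ A) (hAc : IsCompact A)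
    (hint : (interior A).Nonempty) {s : ℝ}
    (hs : s ∈ Ioo (-supportFun A (-splitNormal L)) (supportFun A (splitNormal L))) :
    (interior (slice L A s)).Nonempty := by
  obtain ⟨p, hp, rfl⟩ := exists_mem_interior_inner_eq hA hAc hint hs
  obtain ⟨⟨s, y⟩, rfl⟩ := L.surjective p
  rw [inner_splitNormal]
  have hopen : IsOpen (slice L (interior A) s) := isOpen_interior.preimage (by fun_prop)
  have hsubset : slice L (interior A) s ⊆ slice L A s := preimage_mono interior_subset
  exact ⟨y, interior_maximal hsubset hopen hp⟩

theorem neg_supportFun_neg_lt_supportFun (hAc : IsCompact A) (hint : (interior A).Nonempty)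
    {n : E} (hn : n ≠ 0) : -supportFun A (-n) < supportFun A n := by
  obtain ⟨z, hz⟩ := hint
  have hcont : Continuous fun t : ℝ => z + t • n := by fun_prop
  have hev : ∀ᶠ t : ℝ in 𝓝[>] 0, z + t • n ∈ A :=
    nhdsWithin_le_nhds <| hcont.continuousAt.eventually_mem <| by
      simpa using mem_interior_iff_mem_nhds.1 hz
  obtain ⟨t, ht, ht0 : 0 < t⟩ := (hev.and self_mem_nhdsWithin).exists
  have hlower := inner_le_supportFun hAc (interior_subset hz) (-n)
  rw [inner_neg_right] at hlower
  calc -supportFun A (-n) ≤ ⟪z, n⟫ := neg_le.1 hlower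
    _ < ⟪z, n⟫ + t * ⟪n, n⟫ := lt_add_of_pos_right _ (mul_pos ht0 (real_inner_self_pos.2 hn))
    _ = ⟪z + t • n, n⟫ := by rw [inner_add_left, real_inner_smul_left]
    _ ≤ supportFun A n := inner_le_supportFun hAc ht n

section Volume

variable [FiniteDimensional ℝ F] [MeasurableSpace F] [BorelSpace F]

theorem volume_slice_pos (hA : Convex ℝ A) (hAc : IsCompact A) (hint : (interior A).Nonempty)
    {s : ℝ} (hs : s ∈ Ioo (-supportFun A (-splitNormal L)) (supportFun A (splitNormal L))) :
    0 < volume.real (slice L A s) :=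
  ENNReal.toReal_pos
    (Measure.measure_pos_of_nonempty_interior _ (nonempty_interior_slice hA hAc hint hs)).ne'
    (isCompact_slice hAc s).measure_ne_top

theorem volume_slice_eq_zero (hA : IsCompact A) {s : ℝ}
    (hs : s ∉ Icc (-supportFun A (-splitNormal L)) (supportFun A (splitNormal L))) :
    volume.real (slice L A s) = 0 := by
  rw [slice_eq_empty hA hs, measureReal_empty]

variable [FiniteDimensional ℝ E] [MeasurableSpace E] [BorelSpace E]

theorem measurePreserving_split :
    MeasurePreserving fun p : ℝ × F => L (WithLp.toLp 2 p) :=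
  L.measurePreserving.comp (WithLp.volume_preserving_toLp ℝ F)

theorem measurable_volume_slice (hA : MeasurableSet A) :
    Measurable fun s => volume (slice L A s) :=
  measurable_measure_prodMk_left (measurePreserving_split.measurable hA)

theorem volume_eq_lintegral_slice (hA : MeasurableSet A) :
    volume A = ∫⁻ s, volume (slice L A s) := by
  rw [← (measurePreserving_split (L := L)).measure_preimage hA.nullMeasurableSet,
    Measure.volume_eq_prod,
    Measure.prod_apply (measurePreserving_split.measurable hA)]
  rfl

theorem setIntegral_inner_eq_integral_slice (hA : MeasurableSet A) {φ : ℝ → ℝ}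
    (hφ : IntegrableOn (fun x => φ ⟪x, splitNormal L⟫) A) :
    ∫ x in A, φ ⟪x, splitNormal L⟫ = ∫ s, φ s * volume.real (slice L A s) := by
  let Φ : ℝ × F → E := fun p => L (WithLp.toLp 2 p)
  have hΦ : MeasurePreserving Φ := measurePreserving_split
  have hemb : MeasurableEmbedding Φ :=
    hΦ.measurable.measurableEmbedding (L.injective.comp (WithLp.toLp_injective 2))
  have hinner : ∀ p, ⟪Φ p, splitNormal L⟫ = p.1 := fun p => inner_splitNormal L _
  have hint : IntegrableOn (fun p => φ p.1) (Φ ⁻¹' A) := by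
    simpa only [hinner, Function.comp_def] using (hΦ.integrableOn_comp_preimage hemb).2 hφ
  rw [← hΦ.setIntegral_preimage_emb hemb]
  simp only [hinner]
  rw [← integral_indicator (hΦ.measurable hA), Measure.volume_eq_prod,
    integral_prod _ (hint.integrable_indicator (hΦ.measurable hA))]
  refine integral_congr_ae (.of_forall fun s => ?_)
  have hslice : MeasurableSet (slice L A s) := measurable_prodMk_left (hΦ.measurable hA)
  calc ∫ y, (Φ ⁻¹' A).indicator (fun p => φ p.1) (s, y)
      = ∫ y, (slice L A s).indicator (fun _ => φ s) y := rfl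
    _ = φ s * volume.real (slice L A s) := by
      rw [integral_indicator hslice, setIntegral_const, smul_eq_mul, mul_comm]

theorem integrable_volume_slice (hA : IsCompact A) :
    Integrable fun s => volume.real (slice L A s) := by
  refine integrable_toReal_of_lintegral_ne_top
    (measurable_volume_slice hA.measurableSet).aemeasurable ?_
  rw [← volume_eq_lintegral_slice hA.measurableSet]
  exact hA.measure_ne_top

theorem integral_volume_slice (hA : IsCompact A) :
    ∫ s, volume.real (slice L A s) = volume.real A := by
  have hslices := setIntegral_inner_eq_integral_slice (L := L) hA.measurableSet
    (φ := fun _ => 1) (integrableOn_const hA.measure_ne_top)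
  simpa using hslices.symm

theorem setIntegral_volume_slice (hA : IsCompact A) :
    ∫ s in Ioo (-supportFun A (-splitNormal L)) (supportFun A (splitNormal L)),
      volume.real (slice L A s) = volume.real A := by
  rw [← integral_Icc_eq_integral_Ioo, setIntegral_eq_integral_of_forall_compl_eq_zero
    fun s hs => volume_slice_eq_zero hA hs, integral_volume_slice hA]

/-- The centre of mass of a set. -/
def centroid (A : Set E) : E := ⨍ x in A, x

theorem inner_centroid_add_eq_integral_slice (hA : IsCompact A) (hA0 : volume.real A ≠ 0)
    (c : ℝ) : ⟪centroid A, splitNormal L⟫ + c =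
      ∫ s, (s + c) * (volume.real (slice L A s) / volume.real A) := by
  have hid : IntegrableOn (fun x : E => x) A := continuousOn_id.integrableOn_compact hA
  have hinner : IntegrableOn (fun x : E => ⟪x, splitNormal L⟫) A :=
    ContinuousOn.integrableOn_compact hA (by fun_prop)
  have hconst : IntegrableOn (fun _ : E => c) A := integrableOn_const hA.measure_ne_top
  calc ⟪centroid A, splitNormal L⟫ + c
      = (volume.real A)⁻¹ * ∫ x in A, (⟪x, splitNormal L⟫ + c) := by
        rw [integral_add hinner hconst, setIntegral_const, smul_eq_mul, mul_add,
          inv_mul_cancel_left₀ hA0, centroid, setAverage_eq, real_inner_smul_left,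
          real_inner_comm, ← integral_inner hid]
        simp only [real_inner_comm]
    _ = (volume.real A)⁻¹ * ∫ s, (s + c) * volume.real (slice L A s) := by
        rw [setIntegral_inner_eq_integral_slice (φ := fun s => s + c) hA.measurableSet
          (hinner.add hconst)]
    _ = ∫ s, (s + c) * (volume.real (slice L A s) / volume.real A) := by
        rw [← integral_const_mul]
        exact integral_congr_ae (.of_forall fun s => by ring)

end Volume

end Slicing

/-! ### The Brunn–Minkowski inequality -/

/-- The multiplicative Brunn–Minkowski inequality for compact convex sets in dimension `k`. -/
def BrunnMinkowski (k : ℕ) : Prop :=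
  ∀ A B : Set (Euc k), Convex ℝ A → Convex ℝ B → IsCompact A → IsCompact B → A.Nonempty →
    B.Nonempty → ∀ w₁ w₂ : ℝ, 0 < w₁ → 0 < w₂ → w₁ + w₂ = 1 →
      volume.real A ^ w₁ * volume.real B ^ w₂ ≤ volume.real (w₁ • A + w₂ • B)

section BrunnMinkowskiStep

variable {k : ℕ} {L : WithLp 2 (ℝ × Euc k) ≃ₗᵢ[ℝ] Euc (k + 1)} {A B : Set (Euc (k + 1))}
  {w₁ w₂ : ℝ}

theorem IsConvexBody.neg_supportFun_neg_lt (hA : IsConvexBody A) :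
    -supportFun A (-splitNormal L) < supportFun A (splitNormal L) :=
  neg_supportFun_neg_lt_supportFun hA.isCompact hA.2.2
    (norm_ne_zero_iff.1 (norm_splitNormal L ▸ one_ne_zero))

theorem BrunnMinkowski.volume_slice_combo (hBM : BrunnMinkowski k) (hA : IsConvexBody A)
    (hB : IsConvexBody B) (hw₁ : 0 < w₁) (hw₂ : 0 < w₂) (hw : w₁ + w₂ = 1) {s t : ℝ}
    (hs : s ∈ Ioo (-supportFun A (-splitNormal L)) (supportFun A (splitNormal L)))
    (ht : t ∈ Ioo (-supportFun B (-splitNormal L)) (supportFun B (splitNormal L))) :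
    volume.real (slice L A s) ^ w₁ * volume.real (slice L B t) ^ w₂ ≤
      volume.real (slice L (w₁ • A + w₂ • B) (w₁ * s + w₂ * t)) := by
  have hslice := hBM _ _ (convex_slice hA.convex s) (convex_slice hB.convex t)
    (isCompact_slice hA.isCompact s) (isCompact_slice hB.isCompact t)
    ((nonempty_interior_slice hA.convex hA.isCompact hA.2.2 hs).mono interior_subset)
    ((nonempty_interior_slice hB.convex hB.isCompact hB.2.2 ht).mono interior_subset)
    w₁ w₂ hw₁ hw₂ hw
  have hcombo : IsCompact (w₁ • A + w₂ • B) := (hA.isCompact.smul w₁).add (hB.isCompact.smul w₂)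
  exact hslice.trans
    (measureReal_mono (slice_combo_subset w₁ w₂ s t) (isCompact_slice hcombo _).measure_ne_top)

theorem BrunnMinkowski.continuousOn_volume_slice (hBM : BrunnMinkowski k)
    (hA : IsConvexBody A) :
    ContinuousOn (fun s => volume.real (slice L A s))
      (Ioo (-supportFun A (-splitNormal L)) (supportFun A (splitNormal L))) := by
  have hpos {s : ℝ} := volume_slice_pos (L := L) (s := s) hA.convex hA.isCompact hA.2.2
  have hconc : ConcaveOn ℝ (Ioo (-supportFun A (-splitNormal L)) (supportFun A (splitNormal L)))
      fun s => Real.log (volume.real (slice L A s)) := by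
    refine concaveOn_iff_forall_pos.2 ⟨convex_Ioo _ _, fun s hs t ht w₁ w₂ hw₁ hw₂ hw => ?_⟩
    have hps := hpos hs
    have hpt := hpos ht
    have hslice := hBM.volume_slice_combo hA hA hw₁ hw₂ hw hs ht
    rw [← hA.convex.add_smul hw₁.le hw₂.le, hw, one_smul] at hslice
    have hlog := Real.log_le_log (by positivity) hslice
    rwa [Real.log_mul (by positivity) (by positivity), Real.log_rpow hps, Real.log_rpow hpt]
      at hlog
  exact (hconc.continuousOn isOpen_Ioo).rexp.congr fun s hs => (Real.exp_log (hpos hs)).symm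

theorem BrunnMinkowski.succ_of_isConvexBody (hBM : BrunnMinkowski k) (hA : IsConvexBody A)
    (hB : IsConvexBody B) (hw₁ : 0 < w₁) (hw₂ : 0 < w₂) (hw : w₁ + w₂ = 1) :
    volume.real A ^ w₁ * volume.real B ^ w₂ ≤ volume.real (w₁ • A + w₂ • B) := by
  obtain ⟨L, -⟩ := exists_splitNormal_eq (F := Euc k) (by simp)
    (show ‖(EuclideanSpace.single 0 1 : Euc (k + 1))‖ = 1 by simp)
  have hcombo : IsCompact (w₁ • A + w₂ • B) := (hA.isCompact.smul w₁).add (hB.isCompact.smul w₂)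
  have hPL := prekopa_leindler_Ioo (hA.neg_supportFun_neg_lt (L := L)) hB.neg_supportFun_neg_lt
    hw₁ hw₂ hw (hBM.continuousOn_volume_slice hA) (hBM.continuousOn_volume_slice hB)
    (fun _ => volume_slice_pos hA.convex hA.isCompact hA.2.2)
    (fun _ => volume_slice_pos hB.convex hB.isCompact hB.2.2)
    (integrable_volume_slice hA.isCompact).integrableOn
    (integrable_volume_slice hB.isCompact).integrableOn
    (f₃ := fun s => volume (slice L (w₁ • A + w₂ • B) s))
    (fun s hs t ht => ENNReal.ofReal_le_of_le_toReal
      (hBM.volume_slice_combo hA hB hw₁ hw₂ hw hs ht))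
  rw [setIntegral_volume_slice hA.isCompact, setIntegral_volume_slice hB.isCompact,
    ← volume_eq_lintegral_slice hcombo.measurableSet] at hPL
  exact (ENNReal.ofReal_le_iff_le_toReal hcombo.measure_ne_top).1 hPL

end BrunnMinkowskiStep

theorem brunnMinkowski_zero : BrunnMinkowski 0 := by
  intro A B _ _ _ _ hA hB w₁ w₂ _ _ _
  rw [Subsingleton.eq_univ_of_nonempty (hA.smul_set.add hB.smul_set : (w₁ • A + w₂ • B).Nonempty),
    Subsingleton.eq_univ_of_nonempty hA, Subsingleton.eq_univ_of_nonempty hB]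
  have hvol : volume.real (univ : Set (Euc 0)) = 1 := by
    have hcube := (EuclideanSpace.basisFun (Fin 0) ℝ).volume_parallelepiped
    have hne : (parallelepiped (EuclideanSpace.basisFun (Fin 0) ℝ)).Nonempty :=
      ⟨0, (mem_parallelepiped_iff _ _).2 ⟨0, by simp, by simp⟩⟩
    rw [measureReal_def, ← Subsingleton.eq_univ_of_nonempty hne, hcube, ENNReal.toReal_one]
  simp [hvol]

theorem brunnMinkowski (k : ℕ) : BrunnMinkowski k := by
  induction k with
  | zero => exact brunnMinkowski_zero
  | succ k ih =>
    intro A B hAc hBc hA hB _ _ w₁ w₂ hw₁ hw₂ hw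
    by_cases hA0 : volume A = 0
    · simp [measureReal_def, hA0, hw₁.ne']
    by_cases hB0 : volume B = 0
    · simp [measureReal_def, hB0, hw₂.ne']
    exact ih.succ_of_isConvexBody (isConvexBody_of_volume_ne_zero hAc hA hA0)
      (isConvexBody_of_volume_ne_zero hBc hB hB0) hw₁ hw₂ hw

section Equality

variable {k : ℕ} {L : WithLp 2 (ℝ × Euc k) ≃ₗᵢ[ℝ] Euc (k + 1)} {A B : Set (Euc (k + 1))}
  {w₁ w₂ : ℝ}

theorem exists_ae_slice_eq_of_volume_combo_le (hA : IsConvexBody A) (hB : IsConvexBody B)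
    (hw₁ : 0 < w₁) (hw₂ : 0 < w₂) (hw : w₁ + w₂ = 1)
    (hle : volume.real (w₁ • A + w₂ • B) ≤ volume.real A ^ w₁ * volume.real B ^ w₂) :
    ∃ c, supportFun B (splitNormal L) = supportFun A (splitNormal L) + c ∧
      ∀ᵐ s, volume.real (slice L B (s + c)) / volume.real B =
        volume.real (slice L A s) / volume.real A := by
  have hBM := brunnMinkowski k
  have hcombo : IsCompact (w₁ • A + w₂ • B) := (hA.isCompact.smul w₁).add (hB.isCompact.smul w₂)
  obtain ⟨c, ha, hb, hc⟩ := eq_translate_of_prekopa_leindler_Ioo_le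
    (hA.neg_supportFun_neg_lt (L := L)) hB.neg_supportFun_neg_lt
    hw₁ hw₂ hw (hBM.continuousOn_volume_slice hA) (hBM.continuousOn_volume_slice hB)
    (fun _ => volume_slice_pos hA.convex hA.isCompact hA.2.2)
    (fun _ => volume_slice_pos hB.convex hB.isCompact hB.2.2)
    (integrable_volume_slice hA.isCompact).integrableOn
    (integrable_volume_slice hB.isCompact).integrableOn
    (f₃ := fun s => volume (slice L (w₁ • A + w₂ • B) s))
    (fun s hs t ht => ENNReal.ofReal_le_of_le_toReal
      (hBM.volume_slice_combo hA hB hw₁ hw₂ hw hs ht))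
    (by
      rw [setIntegral_volume_slice hA.isCompact, setIntegral_volume_slice hB.isCompact,
        ← volume_eq_lintegral_slice hcombo.measurableSet]
      exact (ENNReal.le_ofReal_iff_toReal_le hcombo.measure_ne_top (by positivity)).2 hle)
  rw [setIntegral_volume_slice hA.isCompact, setIntegral_volume_slice hB.isCompact] at hc
  refine ⟨c, hb, ?_⟩
  have hIcc : Icc (-supportFun A (-splitNormal L)) (supportFun A (splitNormal L)) =ᵐ[volume]
      Ioo (-supportFun A (-splitNormal L)) (supportFun A (splitNormal L)) := Ioo_ae_eq_Icc.symm
  filter_upwards [hIcc.mem_iff] with s hs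
  by_cases hsA : s ∈ Icc (-supportFun A (-splitNormal L)) (supportFun A (splitNormal L))
  · exact hc s (hs.1 hsA)
  · rw [volume_slice_eq_zero hA.isCompact hsA, volume_slice_eq_zero hB.isCompact, zero_div,
      zero_div]
    rw [ha, hb]
    exact fun h => hsA ⟨by linarith [h.1], by linarith [h.2]⟩

theorem inner_centroid_sub_of_ae_slice_eq (hA : IsCompact A) (hA0 : volume.real A ≠ 0)
    (hB : IsCompact B) (hB0 : volume.real B ≠ 0) {c : ℝ}
    (h : ∀ᵐ s, volume.real (slice L B (s + c)) / volume.real B =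
      volume.real (slice L A s) / volume.real A) :
    ⟪centroid B - centroid A, splitNormal L⟫ = c := by
  have hshift : ⟪centroid B, splitNormal L⟫ = ⟪centroid A, splitNormal L⟫ + c :=
    calc ⟪centroid B, splitNormal L⟫
        = ∫ s, s * (volume.real (slice L B s) / volume.real B) := by
          simpa using inner_centroid_add_eq_integral_slice (L := L) hB hB0 0
      _ = ∫ s, (s + c) * (volume.real (slice L B (s + c)) / volume.real B) :=
          (integral_add_right_eq_self
            (fun s => s * (volume.real (slice L B s) / volume.real B)) c).symm
      _ = ∫ s, (s + c) * (volume.real (slice L A s) / volume.real A) :=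
          integral_congr_ae (h.mono fun s hs => congrArg ((s + c) * ·) hs)
      _ = ⟪centroid A, splitNormal L⟫ + c :=
          (inner_centroid_add_eq_integral_slice hA hA0 c).symm
  rw [inner_sub_left, hshift, add_sub_cancel_left]

-- The one-dimensional equality case provides a translation for each direction separately; the
-- centroids show that these are the components of one vector.
theorem eq_vadd_of_volume_combo_le (hA : IsConvexBody A) (hB : IsConvexBody B)
    (hw₁ : 0 < w₁) (hw₂ : 0 < w₂) (hw : w₁ + w₂ = 1)
    (hle : volume.real (w₁ • A + w₂ • B) ≤ volume.real A ^ w₁ * volume.real B ^ w₂) :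
    B = (centroid B - centroid A) +ᵥ A := by
  refine hB.eq_of_supportFun_eq (hA.vadd _) fun n hn => ?_
  obtain ⟨L, rfl⟩ := exists_splitNormal_eq (F := Euc k) (by simp) hn
  obtain ⟨c, hc, hslice⟩ := exists_ae_slice_eq_of_volume_combo_le (L := L) hA hB hw₁ hw₂ hw hle
  rw [supportFun_vadd hA.isCompact hA.nonempty,
    inner_centroid_sub_of_ae_slice_eq hA.isCompact hA.volume_pos.ne' hB.isCompact
      hB.volume_pos.ne' hslice, hc, add_comm]

end Equality

/-! ### Gauge, radial projection and Gauss map -/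

theorem ne_zero_of_mem_frontier {E : Type*} [NormedAddCommGroup E] {K : Set E}
    (h0 : 0 ∈ interior K) {x : E} (hx : x ∈ frontier K) : x ≠ 0 := by
  rintro rfl
  exact hx.2 h0

section Radial

variable {E : Type*} [NormedAddCommGroup E] [NormedSpace ℝ E] {K : Set E}

/-- The radial projection `x ↦ x / ‖x‖_K` onto the boundary of a convex body `K` containing the
origin in its interior; it sends `0` to `0`. -/
def radial (K : Set E) (x : E) : E := (gauge K x)⁻¹ • x

theorem radial_smul {c : ℝ} (hc : 0 < c) (x : E) : radial K (c • x) = radial K x := by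
  rw [radial, gauge_smul_of_nonneg hc.le, smul_eq_mul, smul_smul, radial]
  congr 1
  field_simp

theorem differentiableAt_gauge_smul {c : ℝ} (hc : 0 < c) {x : E}
    (hx : DifferentiableAt ℝ (gauge K) x) : DifferentiableAt ℝ (gauge K) (c • x) := by
  have hgauge : gauge K = fun y => c * gauge K (c⁻¹ • y) := by
    ext y
    rw [gauge_smul_of_nonneg (inv_nonneg.2 hc.le), smul_eq_mul, mul_inv_cancel_left₀ hc.ne']
  rw [← inv_smul_smul₀ hc.ne' x] at hx
  rw [hgauge]
  exact (hx.comp (c • x) (differentiableAt_id.const_smul c⁻¹)).const_mul c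

/-- The boundary points of `K` at which the gauge of `K` is differentiable. At these points the
outward unit normal is unique, and almost every ray meets this part of the boundary. -/
def regularBoundary (K : Set E) : Set E :=
  frontier K ∩ {x | DifferentiableAt ℝ (gauge K) x}

theorem measurableSet_regularBoundary [MeasurableSpace E] [BorelSpace E] :
    MeasurableSet (regularBoundary K) :=
  isClosed_frontier.measurableSet.inter (measurableSet_of_differentiableAt ℝ _)

end Radial

namespace IsConvexBody

variable {m : ℕ} {K : Set (Euc m)}

theorem continuous_gauge (hK : IsConvexBody K) (h0 : 0 ∈ interior K) : Continuous (gauge K) :=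
  _root_.continuous_gauge hK.convex (mem_interior_iff_mem_nhds.1 h0)

theorem gauge_le_one_iff (hK : IsConvexBody K) (h0 : 0 ∈ interior K) {x : Euc m} :
    gauge K x ≤ 1 ↔ x ∈ K := by
  rw [gauge_le_one_iff_mem_closure hK.convex (mem_interior_iff_mem_nhds.1 h0),
    hK.isCompact.isClosed.closure_eq]

theorem gauge_eq_one_iff (hK : IsConvexBody K) (h0 : 0 ∈ interior K) {x : Euc m} :
    gauge K x = 1 ↔ x ∈ frontier K :=
  gauge_eq_one_iff_mem_frontier hK.convex (mem_interior_iff_mem_nhds.1 h0)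

theorem gauge_pos (hK : IsConvexBody K) (h0 : 0 ∈ interior K) {x : Euc m} (hx : x ≠ 0) :
    0 < gauge K x :=
  (_root_.gauge_pos (absorbent_nhds_zero (mem_interior_iff_mem_nhds.1 h0))
    (NormedSpace.isVonNBounded_of_isBounded _ hK.isCompact.isBounded)).2 hx

theorem measurable_radial (hK : IsConvexBody K) (h0 : 0 ∈ interior K) : Measurable (radial K) :=
  (hK.continuous_gauge h0).measurable.inv.smul measurable_id

theorem gauge_radial (hK : IsConvexBody K) (h0 : 0 ∈ interior K) {x : Euc m} (hx : x ≠ 0) :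
    gauge K (radial K x) = 1 := by
  rw [radial, gauge_smul_of_nonneg (inv_nonneg.2 (gauge_nonneg x)), smul_eq_mul,
    inv_mul_cancel₀ (hK.gauge_pos h0 hx).ne']

theorem radial_mem_frontier (hK : IsConvexBody K) (h0 : 0 ∈ interior K) {x : Euc m}
    (hx : x ≠ 0) : radial K x ∈ frontier K :=
  (hK.gauge_eq_one_iff h0).1 (hK.gauge_radial h0 hx)

theorem radial_of_mem_frontier (hK : IsConvexBody K) (h0 : 0 ∈ interior K) {x : Euc m}
    (hx : x ∈ frontier K) : radial K x = x := by
  rw [radial, (hK.gauge_eq_one_iff h0).2 hx, inv_one, one_smul]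

theorem gauge_smul_radial (hK : IsConvexBody K) (h0 : 0 ∈ interior K) (x : Euc m) :
    gauge K x • radial K x = x := by
  rcases eq_or_ne x 0 with rfl | hx
  · simp [radial]
  · rw [radial, smul_smul, mul_inv_cancel₀ (hK.gauge_pos h0 hx).ne', one_smul]

theorem frontier_subset (hK : IsConvexBody K) : frontier K ⊆ K :=
  hK.isCompact.isClosed.frontier_subset

theorem isCompact_frontier (hK : IsConvexBody K) : IsCompact (frontier K) :=
  hK.isCompact.of_isClosed_subset isClosed_frontier hK.frontier_subset

theorem exists_isOutwardNormalAt (hK : IsConvexBody K) {x : Euc m} (hx : x ∈ frontier K) :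
    ∃ n, IsOutwardNormalAt K x n := by
  obtain ⟨f, hf⟩ := geometric_hahn_banach_open_point hK.convex.interior isOpen_interior hx.2
  obtain ⟨z, rfl⟩ := (InnerProductSpace.toDual ℝ (Euc m)).surjective f
  simp only [InnerProductSpace.toDual_apply_apply] at hf
  have hz : z ≠ 0 := by
    rintro rfl
    obtain ⟨y, hy⟩ := hK.2.2
    simpa using hf y hy
  have hle : ∀ y ∈ K, ⟪z, y⟫ ≤ ⟪z, x⟫ := fun y hy => by
    refine closure_minimal (fun w hw => (hf w hw).le) (isClosed_le (by fun_prop)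
      continuous_const : IsClosed {w | ⟪z, w⟫ ≤ ⟪z, x⟫}) ?_
    rw [hK.convex.closure_interior_eq_closure_of_nonempty_interior hK.2.2]
    exact subset_closure hy
  refine ⟨‖z‖⁻¹ • z, hx, norm_smul_inv_norm hz, fun y hy => ?_⟩
  rw [real_inner_smul_right, inner_sub_left, real_inner_comm, real_inner_comm z x]
  exact mul_nonpos_of_nonneg_of_nonpos (inv_nonneg.2 (norm_nonneg z)) (sub_nonpos.2 (hle y hy))

theorem isOutwardNormalAt_gaussMap (hK : IsConvexBody K) {x : Euc m} (hx : x ∈ frontier K) :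
    IsOutwardNormalAt K x (gaussMap K x) := by
  have hnormal := hK.exists_isOutwardNormalAt hx
  rw [gaussMap, dif_pos hnormal]
  exact hnormal.choose_spec

theorem inner_eq_supportFun (hK : IsConvexBody K) {x n : Euc m} (h : IsOutwardNormalAt K x n) :
    ⟪x, n⟫ = supportFun K n := by
  refine le_antisymm (inner_le_supportFun hK.isCompact (hK.frontier_subset h.1) n)
    (supportFun_le hK.nonempty fun y hy => ?_)
  simpa only [inner_sub_left, sub_nonpos] using h.2.2 y hy

theorem exists_pos_le_supportFun (hK : IsConvexBody K) (h0 : 0 ∈ interior K) :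
    ∃ r, 0 < r ∧ ∀ u, ‖u‖ = 1 → r ≤ supportFun K u := by
  obtain ⟨r, hr, hrK⟩ := Metric.nhds_basis_closedBall.mem_iff.1 (mem_interior_iff_mem_nhds.1 h0)
  refine ⟨r, hr, fun u hu => ?_⟩
  have hru : r • u ∈ K := hrK (by simp [norm_smul, hu, abs_of_pos hr])
  simpa [real_inner_smul_left, hu] using inner_le_supportFun hK.isCompact hru u

theorem inner_pos (hK : IsConvexBody K) (h0 : 0 ∈ interior K) {x n : Euc m}
    (h : IsOutwardNormalAt K x n) : 0 < ⟪x, n⟫ := by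
  obtain ⟨r, hr, hrK⟩ := hK.exists_pos_le_supportFun h0
  rw [hK.inner_eq_supportFun h]
  exact hr.trans_le (hrK n h.2.1)

theorem inner_le_gauge_mul (hK : IsConvexBody K) (h0 : 0 ∈ interior K) {x n : Euc m}
    (h : IsOutwardNormalAt K x n) (y : Euc m) : ⟪y, n⟫ ≤ gauge K y * ⟪x, n⟫ := by
  rcases eq_or_ne y 0 with rfl | hy
  · simp
  conv_lhs => rw [← hK.gauge_smul_radial h0 y]
  rw [inner_smul_left, conj_trivial]
  refine mul_le_mul_of_nonneg_left ?_ (gauge_nonneg y)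
  have := h.2.2 _ (hK.frontier_subset (hK.radial_mem_frontier h0 hy))
  rw [inner_sub_left] at this
  linarith

theorem inner_mul_fderiv_gauge (hK : IsConvexBody K) (h0 : 0 ∈ interior K) {x n : Euc m}
    (hx : x ∈ regularBoundary K) (h : IsOutwardNormalAt K x n) (y : Euc m) :
    ⟪x, n⟫ * fderiv ℝ (gauge K) x y = ⟪y, n⟫ := by
  have hmin : IsLocalMin (fun y => gauge K y * ⟪x, n⟫ - innerSL ℝ n y) x := by
    refine Filter.Eventually.of_forall fun y => ?_
    have hle := hK.inner_le_gauge_mul h0 h y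
    simp only [innerSL_apply_apply, (hK.gauge_eq_one_iff h0).2 hx.1, real_inner_comm x n,
      real_inner_comm y n]
    linarith
  have hderiv := (hx.2.hasFDerivAt.mul_const ⟪x, n⟫).sub (innerSL ℝ n).hasFDerivAt
  have hzero := DFunLike.congr_fun (hmin.hasFDerivAt_eq_zero hderiv) y
  simp only [sub_apply, smul_apply, innerSL_apply_apply, zero_apply, smul_eq_mul] at hzero
  rw [real_inner_comm n y]
  linarith

theorem isOutwardNormalAt_unique (hK : IsConvexBody K) (h0 : 0 ∈ interior K) {x n n' : Euc m}
    (hx : x ∈ regularBoundary K) (h : IsOutwardNormalAt K x n) (h' : IsOutwardNormalAt K x n') :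
    n = n' := by
  have hparallel : ⟪x, n'⟫ • n = ⟪x, n⟫ • n' := by
    refine ext_inner_left ℝ fun y => ?_
    rw [real_inner_smul_right, real_inner_smul_right, ← hK.inner_mul_fderiv_gauge h0 hx h y,
      ← hK.inner_mul_fderiv_gauge h0 hx h' y]
    ring
  have hpos := hK.inner_pos h0 h
  have hnorm : ⟪x, n'⟫ = ⟪x, n⟫ := by
    simpa [norm_smul, h.2.1, h'.2.1, abs_of_pos hpos, abs_of_pos (hK.inner_pos h0 h')]
      using congrArg norm hparallel
  rw [hnorm] at hparallel
  exact smul_right_injective _ hpos.ne' hparallel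

theorem isCompact_setOf_isOutwardNormalAt (hK : IsConvexBody K) :
    IsCompact {p : Euc m × Euc m | IsOutwardNormalAt K p.1 p.2} := by
  refine (hK.isCompact_frontier.prod (isCompact_sphere (0 : Euc m) 1)).of_isClosed_subset ?_
    fun p hp => ⟨hp.1, mem_sphere_zero_iff_norm.2 hp.2.1⟩
  simp only [IsOutwardNormalAt, ofPred_and, ofPred_forall]
  exact (isClosed_frontier.preimage continuous_fst).inter
    ((isClosed_eq (by fun_prop) continuous_const).inter
      (isClosed_biInter fun y _ => isClosed_le (by fun_prop) continuous_const))

theorem eventually_norm_normal_sub_lt (hK : IsConvexBody K) (h0 : 0 ∈ interior K)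
    {x n : Euc m} (hx : x ∈ regularBoundary K) (h : IsOutwardNormalAt K x n) {ε : ℝ}
    (hε : 0 < ε) : ∀ᶠ y in 𝓝 x, ∀ n', IsOutwardNormalAt K y n' → ‖n' - n‖ < ε := by
  -- The normals at distance at least `ε` from `n` have their base points in a compact set, which
  -- avoids `x` by uniqueness of the normal.
  let far : Set (Euc m × Euc m) := {p | IsOutwardNormalAt K p.1 p.2} ∩ {p | ε ≤ ‖p.2 - n‖}
  have hfar : IsCompact far :=
    hK.isCompact_setOf_isOutwardNormalAt.inter_right (isClosed_le continuous_const (by fun_prop))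
  have hx_far : x ∉ Prod.fst '' far := by
    rintro ⟨⟨y, n'⟩, ⟨hn', hfar⟩, rfl⟩
    rw [mem_ofPred_eq, hK.isOutwardNormalAt_unique h0 hx hn' h, sub_self, norm_zero] at hfar
    exact hfar.not_gt hε
  filter_upwards [(hfar.image continuous_fst).isClosed.isOpen_compl.mem_nhds hx_far]
    with y hy n' hn'
  by_contra hlt
  exact hy ⟨(y, n'), ⟨hn', not_lt.1 hlt⟩, rfl⟩

theorem continuousOn_gaussMap (hK : IsConvexBody K) (h0 : 0 ∈ interior K) :
    ContinuousOn (gaussMap K) (regularBoundary K) := by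
  intro x hx
  rw [ContinuousWithinAt, Metric.tendsto_nhds]
  intro ε hε
  filter_upwards [nhdsWithin_le_nhds (hK.eventually_norm_normal_sub_lt h0 hx
    (hK.isOutwardNormalAt_gaussMap hx.1) hε), self_mem_nhdsWithin] with y hy hyR
  rw [dist_eq_norm]
  exact hy _ (hK.isOutwardNormalAt_gaussMap hyR.1)

theorem ae_differentiableAt_gauge (hK : IsConvexBody K) (h0 : 0 ∈ interior K) :
    ∀ᵐ x, DifferentiableAt ℝ (gauge K) x := by
  obtain ⟨C, hC⟩ := hK.convex.lipschitz_gauge (mem_interior_iff_mem_nhds.1 h0)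
  exact hC.ae_differentiableAt

theorem ae_radial_mem_regularBoundary (hK : IsConvexBody K) (h0 : 0 ∈ interior K) (hm : m ≠ 0) :
    ∀ᵐ x, radial K x ∈ regularBoundary K := by
  have : Nonempty (Fin m) := ⟨⟨0, Nat.pos_of_ne_zero hm⟩⟩
  filter_upwards [hK.ae_differentiableAt_gauge h0, compl_mem_ae_iff.2 (measure_singleton 0)]
    with x hx hx0
  have hx0 : x ≠ 0 := hx0
  exact ⟨hK.radial_mem_frontier h0 hx0,
    differentiableAt_gauge_smul (inv_pos.2 (hK.gauge_pos h0 hx0)) hx⟩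

end IsConvexBody

/-! ### Hausdorff measure of hyperplane sections of cones -/

/-- The ratio between the Hausdorff measure and the Lebesgue measure on `Euc k`; it need not be `1`,
as `μH` is not normalised on unit cubes of a Euclidean space. -/
def hausdorffFactor (k : ℕ) : ℝ :=
  (Measure.addHaarScalarFactor (μH[k] : Measure (Euc k)) volume : ℝ)

instance instIsAddHaarMeasureHausdorff (k : ℕ) :
    Measure.IsAddHaarMeasure (μH[k] : Measure (Euc k)) := by
  simpa using isAddHaarMeasure_hausdorffMeasure (E := Euc k)

theorem hausdorffFactor_pos (k : ℕ) : 0 < hausdorffFactor k :=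
  NNReal.coe_pos.2 (Measure.addHaarScalarFactor_pos_of_isAddHaarMeasure _ _)

theorem hausdorffMeasure_eq_smul_volume (k : ℕ) (s : Set (Euc k)) :
    μH[k] s = ENNReal.ofReal (hausdorffFactor k) * volume s := by
  conv_lhs => rw [Measure.isAddLeftInvariant_eq_smul (μH[k] : Measure (Euc k)) volume]
  rw [Measure.smul_apply, hausdorffFactor, ENNReal.ofReal_coe_nnreal, ENNReal.smul_def, smul_eq_mul]

/-- A set stable under multiplication by positive scalars. Neither convexity nor membership of the
origin is required, so that preimages under radial projection are cones. -/
def IsPosCone {E : Type*} [SMul ℝ E] (A : Set E) : Prop :=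
  ∀ ⦃c : ℝ⦄, 0 < c → ∀ ⦃x⦄, x ∈ A → c • x ∈ A

theorem IsPosCone.smul_mem_iff {E : Type*} [AddCommGroup E] [Module ℝ E] {A : Set E}
    (hA : IsPosCone A) {c : ℝ} (hc : 0 < c) {x : E} : c • x ∈ A ↔ x ∈ A :=
  ⟨fun hx => by simpa only [inv_smul_smul₀ hc.ne'] using hA (inv_pos.2 hc) hx, fun hx => hA hc hx⟩

theorem lintegral_Ioc_pow (d : ℕ) {h : ℝ} (hh : 0 < h) :
    ∫⁻ s in Ioc 0 h, ENNReal.ofReal (s ^ d) = ENNReal.ofReal (h ^ (d + 1) / (d + 1)) := by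
  rw [← ofReal_integral_eq_lintegral_ofReal, ← intervalIntegral.integral_of_le hh.le]
  · simp
  · exact (intervalIntegral.intervalIntegrable_pow d).1
  · filter_upwards [ae_restrict_mem measurableSet_Ioc] with s hs using pow_nonneg hs.1.le d

section Cones

variable {E F : Type*} [NormedAddCommGroup E] [InnerProductSpace ℝ E] [NormedAddCommGroup F]
  [InnerProductSpace ℝ F] {L : WithLp 2 (ℝ × F) ≃ₗᵢ[ℝ] E} {A : Set E}

theorem IsPosCone.slice_eq_smul (hA : IsPosCone A) {s : ℝ} (hs : 0 < s) :
    slice L A s = s • slice L A 1 := by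
  ext y
  rw [mem_smul_set_iff_inv_smul_mem₀ hs.ne']
  have hsplit : L (WithLp.toLp 2 (s, y)) = s • L (WithLp.toLp 2 (1, s⁻¹ • y)) := by
    rw [← map_smul, ← WithLp.toLp_smul, Prod.smul_mk, smul_eq_mul, mul_one, smul_inv_smul₀ hs.ne']
  rw [slice, mem_ofPred_eq, hsplit, hA.smul_mem_iff hs, slice, mem_ofPred_eq]

theorem inter_hyperplane_eq_image_slice (s : ℝ) :
    A ∩ {x | ⟪x, splitNormal L⟫ = s} = (fun y => L (WithLp.toLp 2 (s, y))) '' slice L A s := by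
  ext x
  constructor
  · rintro ⟨hx, rfl⟩
    obtain ⟨⟨s, y⟩, rfl⟩ := L.surjective x
    rw [inner_splitNormal]
    exact ⟨y, hx, rfl⟩
  · rintro ⟨y, hy, rfl⟩
    exact ⟨hy, inner_splitNormal L _⟩

theorem slice_inter_slab (I : Set ℝ) (s : ℝ) [Decidable (s ∈ I)] :
    slice L (A ∩ {x | ⟪x, splitNormal L⟫ ∈ I}) s = if s ∈ I then slice L A s else ∅ := by
  split_ifs with hs <;> ext y <;> simp [slice, inner_splitNormal, hs]

variable [FiniteDimensional ℝ F] [MeasurableSpace F] [BorelSpace F]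

theorem IsPosCone.volume_slice (hA : IsPosCone A) {s : ℝ} (hs : 0 < s) :
    volume (slice L A s) =
      ENNReal.ofReal (s ^ Module.finrank ℝ F) * volume (slice L A 1) := by
  rw [hA.slice_eq_smul hs, Measure.addHaar_smul_of_nonneg _ hs.le]

variable [FiniteDimensional ℝ E] [MeasurableSpace E] [BorelSpace E]

theorem IsPosCone.volume_inter_slab (hA : IsPosCone A) (hAm : MeasurableSet A) {h : ℝ}
    (hh : 0 < h) : volume (A ∩ {x | ⟪x, splitNormal L⟫ ∈ Ioc 0 h}) =
      ENNReal.ofReal (h ^ (Module.finrank ℝ F + 1) / (Module.finrank ℝ F + 1)) *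
        volume (slice L A 1) := by
  classical
  have hslab : MeasurableSet {x | ⟪x, splitNormal L⟫ ∈ Ioc 0 h} :=
    measurableSet_Ioc.preimage
      (by fun_prop : Continuous fun x : E => ⟪x, splitNormal L⟫).measurable
  calc volume (A ∩ {x | ⟪x, splitNormal L⟫ ∈ Ioc 0 h})
      = ∫⁻ s, (Ioc 0 h).indicator (fun s => volume (slice L A s)) s := by
        rw [volume_eq_lintegral_slice (L := L) (hAm.inter hslab)]
        refine lintegral_congr fun s => ?_
        rw [slice_inter_slab, indicator_apply]
        split_ifs <;> simp
    _ = ∫⁻ s in Ioc 0 h, ENNReal.ofReal (s ^ Module.finrank ℝ F) * volume (slice L A 1) := by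
        rw [lintegral_indicator measurableSet_Ioc]
        exact setLIntegral_congr_fun measurableSet_Ioc fun s hs => hA.volume_slice hs.1
    _ = _ := by rw [lintegral_mul_const _ (by fun_prop), lintegral_Ioc_pow _ hh]

end Cones

section Sections

variable {k : ℕ} {A : Set (Euc (k + 1))} {n : Euc (k + 1)}

theorem hausdorffMeasure_inter_hyperplane (L : WithLp 2 (ℝ × Euc k) ≃ₗᵢ[ℝ] Euc (k + 1)) (s : ℝ) :
    μH[k] (A ∩ {x | ⟪x, splitNormal L⟫ = s}) =
      ENNReal.ofReal (hausdorffFactor k) * volume (slice L A s) := by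
  rw [inter_hyperplane_eq_image_slice,
    (isometry_split s).hausdorffMeasure_image (Or.inl (Nat.cast_nonneg k)),
    hausdorffMeasure_eq_smul_volume]

theorem IsPosCone.hausdorffMeasure_inter_hyperplane (hA : IsPosCone A) (hAm : MeasurableSet A)
    (hn : ‖n‖ = 1) {h : ℝ} (hh : 0 < h) : μH[k] (A ∩ {x | ⟪x, n⟫ = h}) =
      ENNReal.ofReal (hausdorffFactor k * (k + 1) / h) * volume (A ∩ {x | ⟪x, n⟫ ∈ Ioc 0 h}) := by
  obtain ⟨L, rfl⟩ := exists_splitNormal_eq (F := Euc k) (by simp) hn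
  have hκ := hausdorffFactor_pos k
  rw [_root_.hausdorffMeasure_inter_hyperplane, hA.volume_inter_slab hAm hh, hA.volume_slice hh,
    ← mul_assoc, ← mul_assoc, ← ENNReal.ofReal_mul hκ.le, ← ENNReal.ofReal_mul (by positivity),
    finrank_euclideanSpace_fin]
  congr 2
  field_simp
  ring

theorem IsPosCone.hausdorffMeasure_inter_hyperplane_eq_zero (hA : IsPosCone A)
    (hAm : MeasurableSet A) (hA0 : volume A = 0) (hn : ‖n‖ = 1) :
    μH[k] (A ∩ {x | ⟪x, n⟫ = 1}) = 0 := by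
  rw [hA.hausdorffMeasure_inter_hyperplane hAm hn one_pos,
    measure_mono_null inter_subset_left hA0, mul_zero]

end Sections

/-! ### Hausdorff measure on the boundary of a convex body -/

theorem setOf_ne_zero_subset_iUnion_halfSpace (k : ℕ) : {x : Euc k | x ≠ 0} ⊆
    ⋃ i, {x | 0 < ⟪x, EuclideanSpace.single i (1 : ℝ)⟫} ∪
      {x | 0 < ⟪x, -EuclideanSpace.single i (1 : ℝ)⟫} := by
  intro x hx
  obtain ⟨i, hi⟩ : ∃ i, x i ≠ 0 := by
    by_contra! h
    exact hx (by ext i; simpa using h i)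
  refine mem_iUnion.2 ⟨i, ?_⟩
  rcases lt_or_gt_of_ne hi with hneg | hpos
  · exact Or.inr (by simpa [EuclideanSpace.inner_single_right, inner_neg_right] using hneg)
  · exact Or.inl (by simpa [EuclideanSpace.inner_single_right] using hpos)

theorem isPosCone_setOf_not_differentiableAt_gauge {E : Type*} [NormedAddCommGroup E]
    [NormedSpace ℝ E] (K : Set E) : IsPosCone {x | DifferentiableAt ℝ (gauge K) x}ᶜ :=
  fun c hc x hx hcx => hx <| by
    rw [← inv_smul_smul₀ hc.ne' x]
    exact differentiableAt_gauge_smul (inv_pos.2 hc) hcx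

theorem isPosCone_radial_preimage {E : Type*} [NormedAddCommGroup E] [NormedSpace ℝ E]
    (K S : Set E) : IsPosCone (radial K ⁻¹' S) :=
  fun c hc x hx => by rwa [mem_preimage, radial_smul hc]

theorem dist_inv_smul_le {E : Type*} [NormedAddCommGroup E] [NormedSpace ℝ E] {a b R C : ℝ}
    {x y : E} (ha : 0 < a) (hb : 0 < b) (haR : a⁻¹ ≤ R) (hy : ‖b⁻¹ • y‖ ≤ R)
    (hab : |a - b| ≤ C * dist x y) :
    dist (a⁻¹ • x) (b⁻¹ • y) ≤ (R + R * R * C) * dist x y := by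
  have hsplit : a⁻¹ • x - b⁻¹ • y = a⁻¹ • (x - y) + (a⁻¹ * (b - a)) • b⁻¹ • y := by
    rw [smul_smul, show a⁻¹ * (b - a) * b⁻¹ = a⁻¹ - b⁻¹ by field_simp]
    module
  rw [abs_sub_comm] at hab
  have hR : 0 ≤ R := (inv_pos.2 ha).le.trans haR
  calc dist (a⁻¹ • x) (b⁻¹ • y)
      ≤ a⁻¹ * dist x y + a⁻¹ * |b - a| * ‖b⁻¹ • y‖ := by
        rw [dist_eq_norm, dist_eq_norm, hsplit]
        refine (norm_add_le _ _).trans_eq ?_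
        rw [norm_smul, norm_smul _ (b⁻¹ • y), norm_mul, Real.norm_of_nonneg (inv_nonneg.2 ha.le),
          Real.norm_eq_abs]
    _ ≤ R * dist x y + R * (C * dist x y) * R := by
        gcongr
        exact mul_nonneg hR ((abs_nonneg _).trans hab)
    _ = (R + R * R * C) * dist x y := by ring

namespace IsConvexBody

variable {m : ℕ} {K : Set (Euc m)}

theorem norm_le_mul_gauge (hK : IsConvexBody K) (h0 : 0 ∈ interior K) {R : ℝ}
    (hR : ∀ x ∈ K, ‖x‖ ≤ R) (x : Euc m) : ‖x‖ ≤ R * gauge K x := by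
  rcases eq_or_ne x 0 with rfl | hx
  · simp
  have hrad := hR _ (hK.frontier_subset (hK.radial_mem_frontier h0 hx))
  have hg := hK.gauge_pos h0 hx
  rwa [radial, norm_smul, norm_inv, Real.norm_of_nonneg hg.le, inv_mul_le_iff₀ hg,
    mul_comm] at hrad

theorem exists_lipschitzOnWith_radial (hK : IsConvexBody K) (h0 : 0 ∈ interior K) :
    ∃ C, LipschitzOnWith C (radial K) {x | 1 ≤ ‖x‖} := by
  obtain ⟨C, hC⟩ := hK.convex.lipschitz_gauge (mem_interior_iff_mem_nhds.1 h0)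
  obtain ⟨R, hR, hRK⟩ := hK.isCompact.isBounded.exists_pos_norm_le
  have ne_zero {x : Euc m} (hx : 1 ≤ ‖x‖) : x ≠ 0 := norm_pos_iff.1 (one_pos.trans_le hx)
  refine ⟨(R + R * R * C).toNNReal, LipschitzOnWith.of_dist_le_mul fun x hx y hy => ?_⟩
  rw [Real.coe_toNNReal _ (by positivity)]
  have hgx := hK.gauge_pos h0 (ne_zero hx)
  refine dist_inv_smul_le hgx (hK.gauge_pos h0 (ne_zero hy)) ?_
    (hRK _ (hK.frontier_subset (hK.radial_mem_frontier h0 (ne_zero hy)))) (hC.dist_le_mul x y)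
  rw [inv_le_iff_one_le_mul₀ hgx]
  exact le_trans hx (hK.norm_le_mul_gauge h0 hRK x)

end IsConvexBody

namespace IsConvexBody

variable {k : ℕ} {K A : Set (Euc (k + 1))}

theorem hausdorffMeasure_frontier_inter_cone_halfSpace (hK : IsConvexBody K)
    (h0 : 0 ∈ interior K) (hA : IsPosCone A) (hAm : MeasurableSet A) (hA0 : volume A = 0)
    {n : Euc (k + 1)} (hn : ‖n‖ = 1) :
    μH[k] (frontier K ∩ A ∩ {x | 0 < ⟪x, n⟫}) = 0 := by
  obtain ⟨C, hC⟩ := hK.exists_lipschitzOnWith_radial h0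
  have hsub : frontier K ∩ A ∩ {x | 0 < ⟪x, n⟫} ⊆ radial K '' (A ∩ {x | ⟪x, n⟫ = 1}) := by
    rintro x ⟨⟨hxK, hxA⟩, hx : 0 < ⟪x, n⟫⟩
    refine ⟨⟪x, n⟫⁻¹ • x, ⟨hA (inv_pos.2 hx) hxA, ?_⟩, ?_⟩
    · simp [inner_smul_left, hx.ne']
    · rw [radial_smul (inv_pos.2 hx), hK.radial_of_mem_frontier h0 hxK]
  have hnorm : A ∩ {x | ⟪x, n⟫ = 1} ⊆ {x | 1 ≤ ‖x‖} := by
    rintro x ⟨-, hx : ⟪x, n⟫ = 1⟩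
    calc 1 = ⟪x, n⟫ := hx.symm
      _ ≤ ‖x‖ := by simpa only [hn, mul_one] using real_inner_le_norm x n
  have hle := (hC.mono hnorm).hausdorffMeasure_image_le (Nat.cast_nonneg k)
  rw [hA.hausdorffMeasure_inter_hyperplane_eq_zero hAm hA0 hn, mul_zero] at hle
  exact measure_mono_null hsub (nonpos_iff_eq_zero.1 hle)

theorem hausdorffMeasure_frontier_inter_cone (hK : IsConvexBody K) (h0 : 0 ∈ interior K)
    (hA : IsPosCone A) (hAm : MeasurableSet A) (hA0 : volume A = 0) :
    μH[k] (frontier K ∩ A) = 0 := by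
  have hcover : frontier K ∩ A ⊆ ⋃ i,
      (frontier K ∩ A ∩ {x | 0 < ⟪x, EuclideanSpace.single i (1 : ℝ)⟫}) ∪
      (frontier K ∩ A ∩ {x | 0 < ⟪x, -EuclideanSpace.single i (1 : ℝ)⟫}) := by
    simp only [← inter_union_distrib_left, ← inter_iUnion]
    exact fun x hx =>
      ⟨hx, setOf_ne_zero_subset_iUnion_halfSpace _ (ne_zero_of_mem_frontier h0 hx.1)⟩
  refine measure_mono_null hcover (measure_iUnion_null fun i => measure_union_null ?_ ?_) <;>
    exact hK.hausdorffMeasure_frontier_inter_cone_halfSpace h0 hA hAm hA0 (by simp)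

theorem hausdorffMeasure_frontier_diff_regularBoundary (hK : IsConvexBody K)
    (h0 : 0 ∈ interior K) : μH[k] (frontier K \ regularBoundary K) = 0 := by
  rw [regularBoundary, sdiff_self_inter, sdiff_eq]
  exact hK.hausdorffMeasure_frontier_inter_cone h0 (isPosCone_setOf_not_differentiableAt_gauge K)
    (measurableSet_of_differentiableAt ℝ _).compl (hK.ae_differentiableAt_gauge h0)

end IsConvexBody

section LocalComparison

variable {X : Type*} [TopologicalSpace X] [SecondCountableTopology X] [MeasurableSpace X]
  [BorelSpace X] {μ ν : Measure X} {R : Set X}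

theorem measure_le_mul_of_locally_le {c : ℝ≥0∞}
    (h : ∀ x ∈ R, ∃ U, IsOpen U ∧ x ∈ U ∧ ∀ E ⊆ U ∩ R, MeasurableSet E → μ E ≤ c * ν E)
    {E : Set X} (hE : MeasurableSet E) (hER : E ⊆ R) : μ E ≤ c * ν E := by
  choose! U hUo hxU hU using h
  obtain ⟨t, htR, htc, hcover⟩ := TopologicalSpace.countable_cover_nhdsWithin
    fun x hx => mem_nhdsWithin_of_mem_nhds ((hUo x hx).mem_nhds (hxU x hx))
  rcases t.eq_empty_or_nonempty with rfl | htne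
  · rw [biUnion_empty] at hcover
    simp [subset_empty_iff.1 (hER.trans hcover)]
  obtain ⟨u, rfl⟩ := htc.exists_eq_range htne
  let D : ℕ → Set X := fun i => E ∩ disjointed (fun i => U (u i)) i
  have hD (i) : MeasurableSet (D i) :=
    hE.inter (MeasurableSet.disjointed (fun i => (hUo _ (htR ⟨i, rfl⟩)).measurableSet) i)
  have hdisj : Pairwise (Function.onFun Disjoint D) := fun i j hij =>
    (disjoint_disjointed (fun i => U (u i)) hij).mono inter_subset_right inter_subset_right
  have hunion : E = ⋃ i, D i := by
    rw [← inter_iUnion, iUnion_disjointed, eq_comm, inter_eq_left]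
    simpa only [biUnion_range] using hER.trans hcover
  have hDU (i) : D i ⊆ U (u i) ∩ R := fun x hx =>
    ⟨disjointed_subset (fun i => U (u i)) i hx.2, hER hx.1⟩
  calc μ E = ∑' i, μ (D i) := by
        conv_lhs => rw [hunion]
        exact measure_iUnion hdisj hD
    _ ≤ ∑' i, c * ν (D i) :=
        ENNReal.tsum_le_tsum fun i => hU (u i) (htR ⟨i, rfl⟩) _ (hDU i) (hD i)
    _ = c * ν E := by
        rw [ENNReal.tsum_mul_left, ← measure_iUnion hdisj hD, ← hunion]

theorem measure_le_of_locally_le (hR : MeasurableSet R) (hμ : μ Rᶜ = 0)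
    (h : ∀ r : ℝ, 1 < r → ∀ x ∈ R, ∃ U, IsOpen U ∧ x ∈ U ∧ ∀ E ⊆ U ∩ R, MeasurableSet E →
      μ E ≤ ENNReal.ofReal r * ν E) : μ ≤ ν := by
  refine Measure.le_iff.2 fun E hE => ?_
  have hmul (r : ℝ) (hr : 1 < r) : μ E ≤ ENNReal.ofReal r * ν E :=
    calc μ E = μ (E ∩ R) := (measure_inter_conull' (measure_mono_null (fun _ hx => hx.2) hμ)).symm
      _ ≤ ENNReal.ofReal r * ν (E ∩ R) :=
        measure_le_mul_of_locally_le (h r hr) (hE.inter hR) inter_subset_right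
      _ ≤ ENNReal.ofReal r * ν E := by gcongr; exact inter_subset_left
  have hone : Filter.Tendsto ENNReal.ofReal (𝓝[>] 1) (𝓝 1) := by
    simpa using (ENNReal.continuous_ofReal.tendsto 1).mono_left nhdsWithin_le_nhds
  have hlim := ENNReal.Tendsto.mul_const (b := ν E) hone (Or.inl one_ne_zero)
  rw [one_mul] at hlim
  refine ge_of_tendsto hlim ?_
  filter_upwards [self_mem_nhdsWithin] with r hr using hmul r hr

end LocalComparison

/-! ### The cone measure and the Hausdorff measure of the boundary -/

/-- Central projection from the origin to the hyperplane through `p` with normal `n`; it sends the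
points orthogonal to `n` to `0`. -/
def centralProj {E : Type*} [NormedAddCommGroup E] [InnerProductSpace ℝ E] (p n x : E) : E :=
  (⟪p, n⟫ / ⟪x, n⟫) • x

theorem norm_div_smul_sub_div_smul_sub_le {E : Type*} [NormedAddCommGroup E] [NormedSpace ℝ E]
    {x y : E} {a b c ε R : ℝ} (hc : 0 < c) (hε : ε ≤ 1 / 2) (ha : (1 - ε) * c ≤ a) (hac : a ≤ c)
    (hb : (1 - ε) * c ≤ b) (hab : |a - b| ≤ ε * ‖x - y‖) (hy : ‖y‖ ≤ R) :
    ‖(c / a) • x - (c / b) • y - (x - y)‖ ≤ ε * (2 + 4 * R / c) * ‖x - y‖ := by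
  have ha2 : c / 2 ≤ a := by nlinarith
  have hb2 : c / 2 ≤ b := by nlinarith
  have ha0 : 0 < a := by linarith
  have hb0 : 0 < b := by linarith
  have hsplit : (c / a) • x - (c / b) • y - (x - y) =
      (c / a - 1) • (x - y) + (c * (b - a) / (a * b)) • y := by
    rw [show c * (b - a) / (a * b) = c / a - c / b by field_simp]
    module
  have hfirst : |c / a - 1| ≤ 2 * ε := by
    rw [show c / a - 1 = (c - a) / a by field_simp, abs_of_nonneg (by
      apply div_nonneg <;> linarith), div_le_iff₀ ha0]
    nlinarith
  have hsecond : |c * (b - a) / (a * b)| ≤ 4 / c * (ε * ‖x - y‖) := by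
    rw [abs_div, abs_mul, abs_of_pos hc, abs_of_pos (mul_pos ha0 hb0), div_le_iff₀ (by positivity),
      abs_sub_comm]
    have hcab : c * c ≤ 4 * (a * b) := by nlinarith
    have hdiff : 0 ≤ ε * ‖x - y‖ := (abs_nonneg _).trans hab
    calc c * |a - b| ≤ c * (ε * ‖x - y‖) := by gcongr
      _ = (c * c) * (ε * ‖x - y‖ / c) := by field_simp
      _ ≤ 4 * (a * b) * (ε * ‖x - y‖ / c) := by gcongr
      _ = 4 / c * (ε * ‖x - y‖) * (a * b) := by ring
  calc ‖(c / a) • x - (c / b) • y - (x - y)‖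
      ≤ |c / a - 1| * ‖x - y‖ + |c * (b - a) / (a * b)| * ‖y‖ := by
        rw [hsplit]
        refine (norm_add_le _ _).trans_eq ?_
        rw [norm_smul, norm_smul, Real.norm_eq_abs, Real.norm_eq_abs]
    _ ≤ 2 * ε * ‖x - y‖ + 4 / c * (ε * ‖x - y‖) * R := by
        gcongr
        exact (abs_nonneg _).trans hsecond
    _ = ε * (2 + 4 * R / c) * ‖x - y‖ := by ring

section AlmostIsometry

variable {E : Type*} [NormedAddCommGroup E] [MeasurableSpace E] [BorelSpace E] {f : E → E}
  {S : Set E} {δ : ℝ}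

theorem hausdorffMeasure_image_le_of_norm_sub_sub_le (k : ℕ) (hδ : 0 ≤ δ)
    (hf : ∀ x ∈ S, ∀ y ∈ S, ‖f x - f y - (x - y)‖ ≤ δ * ‖x - y‖) :
    μH[k] (f '' S) ≤ ENNReal.ofReal ((1 + δ) ^ k) * μH[k] S := by
  have hlip : LipschitzOnWith (1 + δ).toNNReal f S := by
    refine LipschitzOnWith.of_dist_le_mul fun x hx y hy => ?_
    rw [Real.coe_toNNReal _ (by positivity), dist_eq_norm, dist_eq_norm]
    calc ‖f x - f y‖ ≤ ‖f x - f y - (x - y)‖ + ‖x - y‖ := norm_le_norm_sub_add _ _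
      _ ≤ (1 + δ) * ‖x - y‖ := by linarith [hf x hx y hy]
  have hle := hlip.hausdorffMeasure_image_le (Nat.cast_nonneg k)
  rw [ENNReal.rpow_natCast] at hle
  rwa [ENNReal.ofReal_pow (by positivity)]

theorem hausdorffMeasure_le_image_of_norm_sub_sub_le (k : ℕ) (hδ : δ < 1)
    (hf : ∀ x ∈ S, ∀ y ∈ S, ‖f x - f y - (x - y)‖ ≤ δ * ‖x - y‖) :
    μH[k] S ≤ ENNReal.ofReal ((1 - δ)⁻¹ ^ k) * μH[k] (f '' S) := by
  have hδ' : 0 < 1 - δ := sub_pos.2 hδ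
  have expand : ∀ x ∈ S, ∀ y ∈ S, ‖x - y‖ ≤ (1 - δ)⁻¹ * ‖f x - f y‖ := fun x hx y hy => by
    rw [inv_mul_eq_div, le_div_iff₀ hδ']
    have htri := norm_sub_le (f x - f y) (f x - f y - (x - y))
    rw [sub_sub_cancel] at htri
    linarith [hf x hx y hy]
  have hinj : InjOn f S := fun x hx y hy hxy => by
    have hxy' := expand x hx y hy
    rw [hxy, sub_self, norm_zero, mul_zero] at hxy'
    exact sub_eq_zero.1 (norm_le_zero_iff.1 hxy')
  have hinv : LeftInvOn (Function.invFunOn f S) f S := hinj.leftInvOn_invFunOn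
  have hlip : LipschitzOnWith ((1 - δ)⁻¹).toNNReal (Function.invFunOn f S) (f '' S) := by
    refine LipschitzOnWith.of_dist_le_mul ?_
    rintro _ ⟨x, hx, rfl⟩ _ ⟨y, hy, rfl⟩
    rw [hinv hx, hinv hy, Real.coe_toNNReal _ (by positivity), dist_eq_norm, dist_eq_norm]
    exact expand x hx y hy
  have hle := hlip.hausdorffMeasure_image_le (Nat.cast_nonneg k)
  rw [hinv.image_image, ENNReal.rpow_natCast] at hle
  rwa [ENNReal.ofReal_pow (by positivity)]

end AlmostIsometry

theorem exists_isOpen_withDensity_comparison {X : Type*} [TopologicalSpace X] [MeasurableSpace X]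
    (μ : Measure X) {f : X → ℝ} {R : Set X} (hf : ContinuousOn f R) {x₀ : X} (hx₀ : x₀ ∈ R)
    (hpos : 0 < f x₀) {r : ℝ} (hr : 1 < r) :
    ∃ U, IsOpen U ∧ x₀ ∈ U ∧ ∀ E ⊆ U ∩ R, MeasurableSet E →
      μ.withDensity (fun x => ENNReal.ofReal (f x)) E ≤
          ENNReal.ofReal r * (ENNReal.ofReal (f x₀) * μ E) ∧
        ENNReal.ofReal (f x₀) * μ E ≤
          ENNReal.ofReal r * μ.withDensity (fun x => ENNReal.ofReal (f x)) E := by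
  have hupper := (hf x₀ hx₀).eventually_lt_const (u := r * f x₀) (by nlinarith)
  have hlower := ((hf x₀ hx₀).const_mul r).eventually_const_lt (u := f x₀) (by nlinarith)
  obtain ⟨U, hU, hxU, hsub⟩ := mem_nhdsWithin.1 (hupper.and hlower)
  refine ⟨U, hU, hxU, fun E hE hEm => ?_⟩
  have hr0 : 0 ≤ r := by linarith
  rw [withDensity_apply _ hEm]
  constructor
  · rw [← mul_assoc, ← ENNReal.ofReal_mul hr0, ← setLIntegral_const]
    exact setLIntegral_mono' hEm fun x hx => ENNReal.ofReal_le_ofReal (hsub (hE hx)).1.le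
  · rw [← setLIntegral_const, ← lintegral_const_mul' _ _ ENNReal.ofReal_ne_top]
    refine setLIntegral_mono' hEm fun x hx => ?_
    rw [← ENNReal.ofReal_mul hr0]
    exact ENNReal.ofReal_le_ofReal (hsub (hE hx)).2.le

namespace IsConvexBody

variable {m : ℕ} {K : Set (Euc m)} {x₀ n : Euc m}

theorem exists_mem_nhds_abs_inner_sub_le (hK : IsConvexBody K) (h0 : 0 ∈ interior K)
    (hx₀ : x₀ ∈ regularBoundary K) (hn : IsOutwardNormalAt K x₀ n) {ε : ℝ} (hε : 0 < ε) :
    ∃ U ∈ 𝓝 x₀, ∀ x ∈ U ∩ frontier K, ∀ y ∈ U ∩ frontier K,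
      |⟪x, n⟫ - ⟪y, n⟫| ≤ ε * ‖x - y‖ := by
  refine ⟨_, hK.eventually_norm_normal_sub_lt h0 hx₀ hn hε, ?_⟩
  rintro x ⟨hx, hxK⟩ y ⟨hy, hyK⟩
  have half {x y : Euc m} (hxK : x ∈ frontier K) (hyK : y ∈ frontier K)
      (hy : ∀ n', IsOutwardNormalAt K y n' → ‖n' - n‖ < ε) : ⟪x, n⟫ - ⟪y, n⟫ ≤ ε * ‖x - y‖ := by
    have hny := hK.isOutwardNormalAt_gaussMap hyK
    calc ⟪x, n⟫ - ⟪y, n⟫ = ⟪x - y, gaussMap K y⟫ + ⟪x - y, n - gaussMap K y⟫ := by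
          rw [← inner_add_right, add_sub_cancel, inner_sub_left]
      _ ≤ 0 + ‖x - y‖ * ε := by
          refine add_le_add (hny.2.2 x (hK.frontier_subset hxK)) ((real_inner_le_norm _ _).trans ?_)
          rw [norm_sub_rev n]
          exact mul_le_mul_of_nonneg_left (hy _ hny).le (norm_nonneg _)
      _ = ε * ‖x - y‖ := by ring
  refine abs_sub_le_iff.2 ⟨half hxK hyK hy, ?_⟩
  rw [norm_sub_rev]
  exact half hyK hxK hx

theorem inner_le_of_isOutwardNormalAt (hn : IsOutwardNormalAt K x₀ n) {x : Euc m} (hx : x ∈ K) :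
    ⟪x, n⟫ ≤ ⟪x₀, n⟫ := by
  simpa only [inner_sub_left, sub_nonpos] using hn.2.2 x hx

theorem exists_isOpen_centralProj_near (hK : IsConvexBody K) (h0 : 0 ∈ interior K)
    (hx₀ : x₀ ∈ regularBoundary K) (hn : IsOutwardNormalAt K x₀ n) {δ : ℝ} (hδ : 0 < δ) :
    ∃ U, IsOpen U ∧ x₀ ∈ U ∧ (∀ x ∈ U, (1 - δ) * ⟪x₀, n⟫ ≤ ⟪x, n⟫) ∧
      ∀ x ∈ U ∩ frontier K, ∀ y ∈ U ∩ frontier K,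
        ‖centralProj x₀ n x - centralProj x₀ n y - (x - y)‖ ≤ δ * ‖x - y‖ := by
  obtain ⟨R, hR, hRK⟩ := hK.isCompact.isBounded.exists_pos_norm_le
  have hc := hK.inner_pos h0 hn
  have hB : 1 ≤ 2 + 4 * R / ⟪x₀, n⟫ := by
    have : 0 < 4 * R / ⟪x₀, n⟫ := by positivity
    linarith
  let ε := min (1 / 2) (δ / (2 + 4 * R / ⟪x₀, n⟫))
  have hε : 0 < ε := lt_min (by norm_num) (div_pos hδ (by linarith))
  have hεB : ε * (2 + 4 * R / ⟪x₀, n⟫) ≤ δ :=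
    (le_div_iff₀ (by linarith)).1 (min_le_right _ _)
  have hεδ : ε ≤ δ := (le_mul_of_one_le_right hε.le hB).trans hεB
  have hev : ∀ᶠ x in 𝓝 x₀, (1 - ε) * ⟪x₀, n⟫ < ⟪x, n⟫ :=
    (by fun_prop : Continuous fun x : Euc m => ⟪x, n⟫).continuousAt.eventually_const_lt
      (by nlinarith)
  obtain ⟨V, hV, hinner⟩ := hK.exists_mem_nhds_abs_inner_sub_le h0 hx₀ hn hε
  obtain ⟨U, hU, hUo, hxU⟩ := mem_nhds_iff.1 (Filter.inter_mem hev hV)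
  refine ⟨U, hUo, hxU, fun x hx => ?_, ?_⟩
  · have hlow : (1 - ε) * ⟪x₀, n⟫ < ⟪x, n⟫ := (hU hx).1
    nlinarith
  rintro x ⟨hx, hxK⟩ y ⟨hy, hyK⟩
  calc ‖centralProj x₀ n x - centralProj x₀ n y - (x - y)‖
      ≤ ε * (2 + 4 * R / ⟪x₀, n⟫) * ‖x - y‖ :=
        norm_div_smul_sub_div_smul_sub_le hc (min_le_left _ _) (hU hx).1.le
          (inner_le_of_isOutwardNormalAt hn (hK.frontier_subset hxK)) (hU hy).1.le
          (hinner x ⟨(hU hx).2, hxK⟩ y ⟨(hU hy).2, hyK⟩) (hRK y (hK.frontier_subset hyK))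
    _ ≤ δ * ‖x - y‖ := by gcongr

theorem centralProj_image_eq (hK : IsConvexBody K) (h0 : 0 ∈ interior K) {E : Set (Euc m)}
    (hE : E ⊆ frontier K) (hc : 0 < ⟪x₀, n⟫) (hpos : ∀ x ∈ E, 0 < ⟪x, n⟫) :
    centralProj x₀ n '' E = radial K ⁻¹' E ∩ {x | ⟪x, n⟫ = ⟪x₀, n⟫} := by
  ext y
  constructor
  · rintro ⟨x, hx, rfl⟩
    refine ⟨?_, ?_⟩
    · rwa [mem_preimage, centralProj, radial_smul (div_pos hc (hpos x hx)),
        hK.radial_of_mem_frontier h0 (hE hx)]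
    · rw [mem_ofPred_eq, centralProj, real_inner_smul_left, div_mul_cancel₀ _ (hpos x hx).ne']
  · rintro ⟨hy, hyc : ⟪y, n⟫ = ⟪x₀, n⟫⟩
    have hy0 : y ≠ 0 := by
      rintro rfl
      rw [inner_zero_left] at hyc
      exact hc.ne hyc
    have hg := hK.gauge_pos h0 hy0
    refine ⟨radial K y, hy, ?_⟩
    rw [centralProj, radial, real_inner_smul_left, hyc, smul_smul,
      show ⟪x₀, n⟫ / ((gauge K y)⁻¹ * ⟪x₀, n⟫) * (gauge K y)⁻¹ = 1 by field_simp, one_smul]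

theorem radial_preimage_inter_subset_slab (hK : IsConvexBody K) (h0 : 0 ∈ interior K)
    {E : Set (Euc m)} (hE : E ⊆ frontier K) (hn : IsOutwardNormalAt K x₀ n)
    (hpos : ∀ x ∈ E, 0 < ⟪x, n⟫) :
    radial K ⁻¹' E ∩ K ⊆ radial K ⁻¹' E ∩ {x | ⟪x, n⟫ ∈ Ioc 0 ⟪x₀, n⟫} := by
  rintro x ⟨hx, hxK⟩
  refine ⟨hx, ?_, inner_le_of_isOutwardNormalAt hn hxK⟩
  have hx0 : x ≠ 0 := by
    rintro rfl
    rw [mem_preimage, radial, smul_zero] at hx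
    exact ne_zero_of_mem_frontier h0 (hE hx) rfl
  rw [← hK.gauge_smul_radial h0 x, real_inner_smul_left]
  exact mul_pos (hK.gauge_pos h0 hx0) (hpos _ hx)

theorem radial_preimage_inter_slab_subset (hK : IsConvexBody K) (h0 : 0 ∈ interior K)
    {E : Set (Euc m)} (hc : 0 < ⟪x₀, n⟫) {δ : ℝ} (hδ : δ < 1)
    (hlow : ∀ x ∈ E, (1 - δ) * ⟪x₀, n⟫ ≤ ⟪x, n⟫) :
    radial K ⁻¹' E ∩ {x | ⟪x, n⟫ ∈ Ioc 0 ⟪x₀, n⟫} ⊆ (1 - δ)⁻¹ • (radial K ⁻¹' E ∩ K) := by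
  have hδ' : 0 < 1 - δ := sub_pos.2 hδ
  rintro x ⟨hx, -, hxc⟩
  rw [mem_smul_set_iff_inv_smul_mem₀ (by positivity), inv_inv]
  refine ⟨isPosCone_radial_preimage K E hδ' hx, ?_⟩
  rw [← hK.gauge_le_one_iff h0, gauge_smul_of_nonneg hδ'.le, smul_eq_mul]
  refine le_of_mul_le_mul_right ?_ hc
  calc (1 - δ) * gauge K x * ⟪x₀, n⟫ = gauge K x * ((1 - δ) * ⟪x₀, n⟫) := by ring
    _ ≤ gauge K x * ⟪radial K x, n⟫ :=
      mul_le_mul_of_nonneg_left (hlow _ hx) (gauge_nonneg x)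
    _ = ⟪x, n⟫ := by rw [← real_inner_smul_left, hK.gauge_smul_radial h0 x]
    _ ≤ 1 * ⟪x₀, n⟫ := by rwa [one_mul]

end IsConvexBody

/-- The pushforward of Lebesgue measure on `K` under radial projection to the boundary. -/
def coneMeasure {m : ℕ} (K : Set (Euc m)) : Measure (Euc m) :=
  Measure.map (radial K) (volume.restrict K)

/-- The density of Hausdorff measure on the boundary with respect to the cone measure. -/
def surfaceDensity {k : ℕ} (K : Set (Euc (k + 1))) (x : Euc (k + 1)) : ℝ :=
  hausdorffFactor k * (k + 1) / ⟪x, gaussMap K x⟫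

namespace IsConvexBody

theorem coneMeasure_apply {m : ℕ} {K E : Set (Euc m)} (hK : IsConvexBody K)
    (h0 : 0 ∈ interior K) (hE : MeasurableSet E) :
    coneMeasure K E = volume (radial K ⁻¹' E ∩ K) := by
  rw [coneMeasure, Measure.map_apply (hK.measurable_radial h0) hE,
    Measure.restrict_apply (hK.measurable_radial h0 hE)]

variable {k : ℕ} {K E : Set (Euc (k + 1))} {x₀ : Euc (k + 1)}

theorem coneMeasure_compl_regularBoundary (hK : IsConvexBody K) (h0 : 0 ∈ interior K) :
    coneMeasure K (regularBoundary K)ᶜ = 0 := by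
  rw [hK.coneMeasure_apply h0 measurableSet_regularBoundary.compl]
  exact measure_mono_null inter_subset_left (hK.ae_radial_mem_regularBoundary h0 k.succ_ne_zero)

theorem inner_gaussMap_pos (hK : IsConvexBody K) (h0 : 0 ∈ interior K)
    (hx₀ : x₀ ∈ frontier K) : 0 < ⟪x₀, gaussMap K x₀⟫ :=
  hK.inner_pos h0 (hK.isOutwardNormalAt_gaussMap hx₀)

theorem surfaceDensity_pos (hK : IsConvexBody K) (h0 : 0 ∈ interior K)
    (hx₀ : x₀ ∈ frontier K) : 0 < surfaceDensity K x₀ :=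
  div_pos (mul_pos (hausdorffFactor_pos k) (by positivity)) (hK.inner_gaussMap_pos h0 hx₀)

theorem continuousOn_surfaceDensity (hK : IsConvexBody K) (h0 : 0 ∈ interior K) :
    ContinuousOn (surfaceDensity K) (regularBoundary K) :=
  continuousOn_const.div (continuousOn_id.inner (hK.continuousOn_gaussMap h0))
    fun _ hx => (hK.inner_gaussMap_pos h0 hx.1).ne'

theorem hausdorffMeasure_centralProj_image (hK : IsConvexBody K) (h0 : 0 ∈ interior K)
    (hx₀ : x₀ ∈ frontier K) (hE : E ⊆ frontier K) (hEm : MeasurableSet E)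
    (hpos : ∀ x ∈ E, 0 < ⟪x, gaussMap K x₀⟫) :
    μH[k] (centralProj x₀ (gaussMap K x₀) '' E) = ENNReal.ofReal (surfaceDensity K x₀) *
      volume (radial K ⁻¹' E ∩ {x | ⟪x, gaussMap K x₀⟫ ∈ Ioc 0 ⟪x₀, gaussMap K x₀⟫}) := by
  have hc := hK.inner_gaussMap_pos h0 hx₀
  rw [hK.centralProj_image_eq h0 hE hc hpos, surfaceDensity]
  exact (isPosCone_radial_preimage K E).hausdorffMeasure_inter_hyperplane
    (hK.measurable_radial h0 hEm) (hK.isOutwardNormalAt_gaussMap hx₀).2.1 hc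

theorem hausdorffMeasure_le_coneMeasure (hK : IsConvexBody K) (h0 : 0 ∈ interior K)
    (hx₀ : x₀ ∈ frontier K) (hE : E ⊆ frontier K) (hEm : MeasurableSet E) {δ : ℝ} (hδ : δ < 1)
    (hlow : ∀ x ∈ E, (1 - δ) * ⟪x₀, gaussMap K x₀⟫ ≤ ⟪x, gaussMap K x₀⟫)
    (hnear : ∀ x ∈ E, ∀ y ∈ E, ‖centralProj x₀ (gaussMap K x₀) x -
      centralProj x₀ (gaussMap K x₀) y - (x - y)‖ ≤ δ * ‖x - y‖) :
    μH[k] E ≤ ENNReal.ofReal ((1 - δ)⁻¹ ^ (2 * k + 1)) *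
      (ENNReal.ofReal (surfaceDensity K x₀) * coneMeasure K E) := by
  have hc := hK.inner_gaussMap_pos h0 hx₀
  have hδ' : 0 < 1 - δ := sub_pos.2 hδ
  have hpos : ∀ x ∈ E, 0 < ⟪x, gaussMap K x₀⟫ := fun x hx =>
    (mul_pos hδ' hc).trans_le (hlow x hx)
  have hvol : volume (radial K ⁻¹' E ∩ {x | ⟪x, gaussMap K x₀⟫ ∈ Ioc 0 ⟪x₀, gaussMap K x₀⟫}) ≤
      ENNReal.ofReal ((1 - δ)⁻¹ ^ (k + 1)) * coneMeasure K E := by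
    refine (measure_mono (hK.radial_preimage_inter_slab_subset h0 hc hδ hlow)).trans_eq ?_
    rw [Measure.addHaar_smul_of_nonneg _ (by positivity), finrank_euclideanSpace_fin,
      hK.coneMeasure_apply h0 hEm]
  calc μH[k] E ≤ ENNReal.ofReal ((1 - δ)⁻¹ ^ k) * (ENNReal.ofReal (surfaceDensity K x₀) *
        (ENNReal.ofReal ((1 - δ)⁻¹ ^ (k + 1)) * coneMeasure K E)) := by
        refine (hausdorffMeasure_le_image_of_norm_sub_sub_le k hδ hnear).trans ?_
        rw [hK.hausdorffMeasure_centralProj_image h0 hx₀ hE hEm hpos]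
        gcongr
    _ = _ := by
        rw [mul_left_comm (ENNReal.ofReal (surfaceDensity K x₀)), ← mul_assoc,
          ← ENNReal.ofReal_mul (by positivity), ← pow_add]
        ring_nf

theorem coneMeasure_le_hausdorffMeasure (hK : IsConvexBody K) (h0 : 0 ∈ interior K)
    (hx₀ : x₀ ∈ frontier K) (hE : E ⊆ frontier K) (hEm : MeasurableSet E) {δ : ℝ} (hδ : 0 ≤ δ)
    (hpos : ∀ x ∈ E, 0 < ⟪x, gaussMap K x₀⟫)
    (hnear : ∀ x ∈ E, ∀ y ∈ E, ‖centralProj x₀ (gaussMap K x₀) x -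
      centralProj x₀ (gaussMap K x₀) y - (x - y)‖ ≤ δ * ‖x - y‖) :
    ENNReal.ofReal (surfaceDensity K x₀) * coneMeasure K E ≤
      ENNReal.ofReal ((1 + δ) ^ k) * μH[k] E := by
  calc ENNReal.ofReal (surfaceDensity K x₀) * coneMeasure K E
      ≤ μH[k] (centralProj x₀ (gaussMap K x₀) '' E) := by
        rw [hK.hausdorffMeasure_centralProj_image h0 hx₀ hE hEm hpos, hK.coneMeasure_apply h0 hEm]
        exact mul_le_mul_right (measure_mono (hK.radial_preimage_inter_subset_slab h0 hE
          (hK.isOutwardNormalAt_gaussMap hx₀) hpos)) _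
    _ ≤ ENNReal.ofReal ((1 + δ) ^ k) * μH[k] E :=
        hausdorffMeasure_image_le_of_norm_sub_sub_le k hδ hnear

theorem exists_isOpen_coneMeasure_comparison (hK : IsConvexBody K) (h0 : 0 ∈ interior K)
    (hx₀ : x₀ ∈ regularBoundary K) {r : ℝ} (hr : 1 < r) :
    ∃ U, IsOpen U ∧ x₀ ∈ U ∧ ∀ E ⊆ U ∩ frontier K, MeasurableSet E →
      μH[k] E ≤ ENNReal.ofReal r * (ENNReal.ofReal (surfaceDensity K x₀) * coneMeasure K E) ∧
      ENNReal.ofReal (surfaceDensity K x₀) * coneMeasure K E ≤ ENNReal.ofReal r * μH[k] E := by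
  have hcont : ContinuousAt (fun δ : ℝ => (1 - δ)⁻¹ ^ (2 * k + 1)) 0 := by
    have : ContinuousAt (fun δ : ℝ => (1 - δ)⁻¹) 0 :=
      ContinuousAt.inv₀ (by fun_prop) (by norm_num)
    fun_prop
  have hev : ∀ᶠ δ : ℝ in 𝓝[>] 0, (1 - δ)⁻¹ ^ (2 * k + 1) < r ∧ (1 + δ) ^ k < r ∧ δ < 1 :=
    nhdsWithin_le_nhds <| (hcont.eventually_lt_const (by simpa using hr)).and <|
      ((by fun_prop : ContinuousAt (fun δ : ℝ => (1 + δ) ^ k) 0).eventually_lt_const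
        (by simpa using hr)).and (eventually_lt_nhds one_pos)
  obtain ⟨δ, ⟨hδinv, hδpow, hδ1⟩, hδ : 0 < δ⟩ := (hev.and self_mem_nhdsWithin).exists
  obtain ⟨U, hUo, hxU, hlow, hnear⟩ := hK.exists_isOpen_centralProj_near h0 hx₀
    (hK.isOutwardNormalAt_gaussMap hx₀.1) hδ
  refine ⟨U, hUo, hxU, fun E hE hEm => ?_⟩
  have hEK : E ⊆ frontier K := fun x hx => (hE hx).2
  have hlowE x (hx : x ∈ E) := hlow x (hE hx).1
  have hnearE x (hx : x ∈ E) y (hy : y ∈ E) := hnear x (hE hx) y (hE hy)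
  have hposE x (hx : x ∈ E) : 0 < ⟪x, gaussMap K x₀⟫ :=
    (mul_pos (sub_pos.2 hδ1) (hK.inner_gaussMap_pos h0 hx₀.1)).trans_le (hlowE x hx)
  exact ⟨(hK.hausdorffMeasure_le_coneMeasure h0 hx₀.1 hEK hEm hδ1 hlowE hnearE).trans (by gcongr),
    (hK.coneMeasure_le_hausdorffMeasure h0 hx₀.1 hEK hEm hδ.le hposE hnearE).trans (by gcongr)⟩

theorem exists_isOpen_withDensity_surfaceDensity_comparison (hK : IsConvexBody K)
    (h0 : 0 ∈ interior K) (hx₀ : x₀ ∈ regularBoundary K) {r : ℝ} (hr : 1 < r) :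
    ∃ U, IsOpen U ∧ x₀ ∈ U ∧ ∀ E ⊆ U ∩ regularBoundary K, MeasurableSet E →
      μH[k] E ≤ ENNReal.ofReal r *
        (coneMeasure K).withDensity (fun x => ENNReal.ofReal (surfaceDensity K x)) E ∧
      (coneMeasure K).withDensity (fun x => ENNReal.ofReal (surfaceDensity K x)) E ≤
        ENNReal.ofReal r * μH[k] E := by
  have hs : 1 < √r := Real.lt_sqrt_of_sq_lt (by simpa using hr)
  obtain ⟨U, hUo, hxU, hU⟩ := hK.exists_isOpen_coneMeasure_comparison h0 hx₀ hs
  obtain ⟨V, hVo, hxV, hV⟩ := exists_isOpen_withDensity_comparison (coneMeasure K)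
    (hK.continuousOn_surfaceDensity h0) hx₀ (hK.surfaceDensity_pos h0 hx₀.1) hs
  refine ⟨U ∩ V, hUo.inter hVo, ⟨hxU, hxV⟩, fun E hE hEm => ?_⟩
  obtain ⟨hU₁, hU₂⟩ := hU E (fun x hx => ⟨(hE hx).1.1, (hE hx).2.1⟩) hEm
  obtain ⟨hV₁, hV₂⟩ := hV E (fun x hx => ⟨(hE hx).1.2, (hE hx).2⟩) hEm
  rw [← Real.mul_self_sqrt (by linarith : 0 ≤ r), ENNReal.ofReal_mul (Real.sqrt_nonneg r),
    mul_assoc, mul_assoc]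
  exact ⟨hU₁.trans (by gcongr), hV₁.trans (by gcongr)⟩

theorem hausdorffMeasure_restrict_frontier (hK : IsConvexBody K) (h0 : 0 ∈ interior K) :
    (μH[k]).restrict (frontier K) =
      (coneMeasure K).withDensity fun x => ENNReal.ofReal (surfaceDensity K x) := by
  have hrestrict : ∀ E ⊆ regularBoundary K, MeasurableSet E →
      (μH[k]).restrict (frontier K) E = μH[k] E := fun E hE hEm => by
    rw [Measure.restrict_apply hEm, inter_eq_left.2 (hE.trans inter_subset_left)]
  apply le_antisymm <;>
    refine measure_le_of_locally_le (R := regularBoundary K) measurableSet_regularBoundary ?_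
      fun r hr x₀ hx₀ => ?_
  · rw [Measure.restrict_apply measurableSet_regularBoundary.compl, inter_comm]
    exact hK.hausdorffMeasure_frontier_diff_regularBoundary h0
  · obtain ⟨U, hUo, hxU, hU⟩ := hK.exists_isOpen_withDensity_surfaceDensity_comparison h0 hx₀ hr
    refine ⟨U, hUo, hxU, fun E hE hEm => ?_⟩
    rw [hrestrict E (hE.trans inter_subset_right) hEm]
    exact (hU E hE hEm).1
  · exact withDensity_absolutelyContinuous _ _ (hK.coneMeasure_compl_regularBoundary h0)
  · obtain ⟨U, hUo, hxU, hU⟩ := hK.exists_isOpen_withDensity_surfaceDensity_comparison h0 hx₀ hr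
    refine ⟨U, hUo, hxU, fun E hE hEm => ?_⟩
    rw [hrestrict E (hE.trans inter_subset_right) hEm]
    exact (hU E hE hEm).2

end IsConvexBody

/-! ### The surface area measure -/

theorem integrable_of_measure_compl_unitSphere {m : ℕ} {μ : Measure (Euc m)} [IsFiniteMeasure μ]
    {F : Type*} [NormedAddCommGroup F] (hμ : μ (unitSphere m)ᶜ = 0) {f : Euc m → F}
    (hf : Continuous f) : Integrable f μ := by
  rw [← Measure.restrict_eq_self_of_ae_mem (s := unitSphere m) hμ]
  exact hf.continuousOn.integrableOn_compact (isCompact_sphere _ _)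

namespace IsConvexBody

variable {k : ℕ} {K : Set (Euc (k + 1))}

theorem ae_mem_regularBoundary (hK : IsConvexBody K) (h0 : 0 ∈ interior K) :
    ∀ᵐ x ∂(coneMeasure K), x ∈ regularBoundary K :=
  hK.coneMeasure_compl_regularBoundary h0

theorem aemeasurable_coneMeasure {β : Type*} [TopologicalSpace β] [MeasurableSpace β]
    [BorelSpace β] (hK : IsConvexBody K) (h0 : 0 ∈ interior K) {f : Euc (k + 1) → β}
    (hf : ContinuousOn f (regularBoundary K)) : AEMeasurable f (coneMeasure K) := by
  rw [← Measure.restrict_eq_self_of_ae_mem (hK.ae_mem_regularBoundary h0)]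
  exact hf.aemeasurable measurableSet_regularBoundary

theorem aemeasurable_gaussMap_coneMeasure (hK : IsConvexBody K) (h0 : 0 ∈ interior K) :
    AEMeasurable (gaussMap K) (coneMeasure K) :=
  hK.aemeasurable_coneMeasure h0 (hK.continuousOn_gaussMap h0)

theorem aemeasurable_gaussMap_withDensity (hK : IsConvexBody K) (h0 : 0 ∈ interior K) :
    AEMeasurable (gaussMap K)
      ((coneMeasure K).withDensity fun x => ENNReal.ofReal (surfaceDensity K x)) :=
  (hK.aemeasurable_gaussMap_coneMeasure h0).mono_ac (withDensity_absolutelyContinuous _ _)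

theorem aemeasurable_gaussMap (hK : IsConvexBody K) (h0 : 0 ∈ interior K) :
    AEMeasurable (gaussMap K) (μH[((k + 1 : ℕ) : ℝ) - 1].restrict (frontier K)) := by
  rw [Nat.cast_succ, add_sub_cancel_right, hK.hausdorffMeasure_restrict_frontier h0]
  exact hK.aemeasurable_gaussMap_withDensity h0

theorem surfMeasure_eq_map (hK : IsConvexBody K) (h0 : 0 ∈ interior K) :
    surfMeasure K = Measure.map (gaussMap K)
      ((coneMeasure K).withDensity fun x => ENNReal.ofReal (surfaceDensity K x)) := by
  rw [← hK.hausdorffMeasure_restrict_frontier h0, surfMeasure, Nat.cast_succ, add_sub_cancel_right]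

theorem coneMeasure_univ_lt_top (hK : IsConvexBody K) (h0 : 0 ∈ interior K) :
    coneMeasure K univ < ∞ := by
  rw [hK.coneMeasure_apply h0 .univ, preimage_univ, univ_inter]
  exact hK.isCompact.measure_lt_top

theorem exists_surfaceDensity_le (hK : IsConvexBody K) (h0 : 0 ∈ interior K) :
    ∃ C, ∀ x ∈ frontier K, surfaceDensity K x ≤ C := by
  obtain ⟨r, hr, hle⟩ := hK.exists_pos_le_supportFun h0
  refine ⟨hausdorffFactor k * (k + 1) / r, fun x hx => ?_⟩
  have hn := hK.isOutwardNormalAt_gaussMap hx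
  have hrx : r ≤ ⟪x, gaussMap K x⟫ := (hle _ hn.2.1).trans_eq (hK.inner_eq_supportFun hn).symm
  have hκ := hausdorffFactor_pos k
  unfold surfaceDensity
  gcongr

theorem surfMeasure_univ_lt_top (hK : IsConvexBody K) (h0 : 0 ∈ interior K) :
    surfMeasure K univ < ∞ := by
  obtain ⟨C, hC⟩ := hK.exists_surfaceDensity_le h0
  rw [hK.surfMeasure_eq_map h0,
    Measure.map_apply_of_aemeasurable (hK.aemeasurable_gaussMap_withDensity h0) .univ,
    preimage_univ, withDensity_apply _ .univ, setLIntegral_univ]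
  calc ∫⁻ x, ENNReal.ofReal (surfaceDensity K x) ∂(coneMeasure K)
      ≤ ∫⁻ _, ENNReal.ofReal C ∂(coneMeasure K) := by
        refine lintegral_mono_ae ?_
        filter_upwards [hK.ae_mem_regularBoundary h0] with x hx
        exact ENNReal.ofReal_le_ofReal (hC x hx.1)
    _ = ENNReal.ofReal C * coneMeasure K univ := lintegral_const _
    _ < ∞ := ENNReal.mul_lt_top ENNReal.ofReal_lt_top (hK.coneMeasure_univ_lt_top h0)

theorem surfMeasure_compl_unitSphere (hK : IsConvexBody K) (h0 : 0 ∈ interior K) :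
    surfMeasure K (unitSphere (k + 1))ᶜ = 0 := by
  have hsphere : MeasurableSet (unitSphere (k + 1)) := Metric.isClosed_sphere.measurableSet
  rw [surfMeasure, Measure.map_apply_of_aemeasurable (hK.aemeasurable_gaussMap h0) hsphere.compl]
  refine (ae_restrict_iff' (p := fun x => gaussMap K x ∈ unitSphere (k + 1))
    isClosed_frontier.measurableSet).2 (Filter.Eventually.of_forall fun x hx => ?_)
  exact mem_sphere_zero_iff_norm.2 (hK.isOutwardNormalAt_gaussMap hx).2.1

theorem integral_surfMeasure (hK : IsConvexBody K) (h0 : 0 ∈ interior K) {F : Euc (k + 1) → ℝ}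
    (hF : Continuous F) :
    ∫ u, F u ∂(surfMeasure K) =
      ∫ x in K, surfaceDensity K (radial K x) * F (gaussMap K (radial K x)) := by
  have hgauss := hK.aemeasurable_gaussMap_coneMeasure h0
  have hdens := hK.aemeasurable_coneMeasure h0 (hK.continuousOn_surfaceDensity h0)
  rw [hK.surfMeasure_eq_map h0,
    integral_map (hK.aemeasurable_gaussMap_withDensity h0) hF.aestronglyMeasurable,
    integral_withDensity_eq_integral_toReal_smul₀ hdens.ennreal_ofReal
      (Filter.Eventually.of_forall fun _ => ENNReal.ofReal_lt_top)]
  calc ∫ x, (ENNReal.ofReal (surfaceDensity K x)).toReal • F (gaussMap K x) ∂(coneMeasure K)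
      = ∫ x, surfaceDensity K x * F (gaussMap K x) ∂(coneMeasure K) := by
        refine integral_congr_ae ?_
        filter_upwards [hK.ae_mem_regularBoundary h0] with x hx
        rw [ENNReal.toReal_ofReal (hK.surfaceDensity_pos h0 hx.1).le, smul_eq_mul]
    _ = ∫ x in K, surfaceDensity K (radial K x) * F (gaussMap K (radial K x)) :=
        integral_map (hK.measurable_radial h0).aemeasurable
          (hdens.mul (hF.measurable.comp_aemeasurable hgauss)).aestronglyMeasurable

theorem integrable_surfMeasure (hK : IsConvexBody K) (h0 : 0 ∈ interior K) {F : Euc (k + 1) → ℝ}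
    (hF : Continuous F) : Integrable F (surfMeasure K) :=
  have : IsFiniteMeasure (surfMeasure K) := ⟨hK.surfMeasure_univ_lt_top h0⟩
  integrable_of_measure_compl_unitSphere (hK.surfMeasure_compl_unitSphere h0) hF

end IsConvexBody

theorem frontier_vadd {E : Type*} [NormedAddCommGroup E] (v : E) (K : Set E) :
    frontier (v +ᵥ K) = v +ᵥ frontier K :=
  ((Homeomorph.addLeft v).image_frontier K).symm

theorem isOutwardNormalAt_vadd {m : ℕ} {K : Set (Euc m)} (v x n : Euc m) :
    IsOutwardNormalAt (v +ᵥ K) (v + x) n ↔ IsOutwardNormalAt K x n := by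
  unfold IsOutwardNormalAt
  rw [frontier_vadd, ← vadd_eq_add, vadd_mem_vadd_set_iff, ← image_vadd, forall_mem_image]
  simp only [vadd_eq_add, add_sub_add_left_eq_sub]

theorem gaussMap_vadd {m : ℕ} {K : Set (Euc m)} (v x : Euc m) :
    gaussMap (v +ᵥ K) (v + x) = gaussMap K x := by
  have hnormal : IsOutwardNormalAt (v +ᵥ K) (v + x) = IsOutwardNormalAt K x :=
    funext fun n => propext (isOutwardNormalAt_vadd v x n)
  unfold gaussMap
  rw [hnormal]

theorem surfMeasure_vadd {m : ℕ} (v : Euc m) (K : Set (Euc m)) :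
    surfMeasure (v +ᵥ K) = surfMeasure K := by
  have htrans : MeasurePreserving (IsometryEquiv.addLeft v)
      (μH[(m : ℝ) - 1].restrict (frontier K))
      (μH[(m : ℝ) - 1].restrict (frontier (v +ᵥ K))) := by
    have hpre : frontier K = IsometryEquiv.addLeft v ⁻¹' frontier (v +ᵥ K) := by
      rw [frontier_vadd]
      exact (preimage_image_eq _ (add_right_injective v)).symm
    rw [hpre]
    exact ((IsometryEquiv.addLeft v).measurePreserving_hausdorffMeasure _).restrict_preimage
      isClosed_frontier.measurableSet
  have hgauss : gaussMap K = gaussMap (v +ᵥ K) ∘ IsometryEquiv.addLeft v :=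
    funext fun x => (gaussMap_vadd v x).symm
  have hemb : MeasurableEmbedding (IsometryEquiv.addLeft v) :=
    (IsometryEquiv.addLeft v).toHomeomorph.measurableEmbedding
  unfold surfMeasure
  by_cases hm : AEMeasurable (gaussMap (v +ᵥ K)) (μH[(m : ℝ) - 1].restrict (frontier (v +ᵥ K)))
  · rw [← htrans.map_eq] at hm ⊢
    rw [AEMeasurable.map_map_of_aemeasurable hm htrans.aemeasurable, hgauss]
  · rw [Measure.map_of_not_aemeasurable hm, Measure.map_of_not_aemeasurable]
    rwa [hgauss, ← hemb.aemeasurable_map_iff, htrans.map_eq]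

/-! ### Volume in terms of the gauge -/

section Polar

variable {E : Type*} [NormedAddCommGroup E] [NormedSpace ℝ E] [FiniteDimensional ℝ E]
  [MeasurableSpace E] [BorelSpace E]

theorem lintegral_eq_lintegral_toSphere [Nontrivial E] (μ : Measure E) [μ.IsAddHaarMeasure]
    {f : E → ℝ≥0∞} (hf : Measurable f) :
    ∫⁻ x, f x ∂μ = ∫⁻ u : Metric.sphere (0 : E) 1, ∫⁻ r : Ioi (0 : ℝ), f ((r : ℝ) • (u : E))
      ∂(Measure.volumeIoiPow (Module.finrank ℝ E - 1)) ∂μ.toSphere := by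
  have hpolar : Measurable fun p : Metric.sphere (0 : E) 1 × Ioi (0 : ℝ) =>
      f ((p.2 : ℝ) • (p.1 : E)) := by fun_prop
  rw [← lintegral_prod _ hpolar.aemeasurable,
    ← μ.measurePreserving_homeomorphUnitSphereProd.lintegral_comp hpolar, ← setLIntegral_univ,
    ← setLIntegral_congr (ae_eq_univ.2 (by simp) : ({0}ᶜ : Set E) =ᵐ[μ] univ),
    ← lintegral_subtype_comap (measurableSet_singleton _).compl]
  refine lintegral_congr fun x => ?_
  have hx : ‖(x : E)‖ ≠ 0 := norm_ne_zero_iff.2 x.2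
  simp [smul_smul, hx]

theorem setLIntegral_interior_eq_lintegral_toSphere [Nontrivial E] (μ : Measure E)
    [μ.IsAddHaarMeasure] {K : Set E} (hK : Convex ℝ K) (h0 : K ∈ 𝓝 0)
    (hbdd : Bornology.IsVonNBounded ℝ K) {f : E → ℝ≥0∞} (hf : Measurable f)
    (hhom : ∀ c : ℝ, 0 < c → ∀ x, f (c • x) = f x) :
    ∫⁻ x in interior K, f x ∂μ = ∫⁻ u : Metric.sphere (0 : E) 1,
      f u * ENNReal.ofReal ((gauge K u)⁻¹ ^ Module.finrank ℝ E / Module.finrank ℝ E)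
        ∂μ.toSphere := by
  rw [← lintegral_indicator isOpen_interior.measurableSet,
    lintegral_eq_lintegral_toSphere μ (hf.indicator isOpen_interior.measurableSet)]
  refine lintegral_congr fun u => ?_
  have hgauge : 0 < gauge K u :=
    (gauge_pos (absorbent_nhds_zero h0) hbdd).2 (ne_zero_of_mem_unit_sphere u)
  have hray (r : Ioi (0 : ℝ)) : (interior K).indicator f ((r : ℝ) • (u : E)) =
      (Iio (⟨(gauge K u)⁻¹, inv_pos.2 hgauge⟩ : Ioi (0 : ℝ))).indicator (fun _ => f u) r := by
    have hr : (0 : ℝ) < r := r.2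
    have hmem : (r : ℝ) • (u : E) ∈ interior K ↔
        r ∈ Iio (⟨(gauge K u)⁻¹, inv_pos.2 hgauge⟩ : Ioi (0 : ℝ)) := by
      rw [← gauge_lt_one_iff_mem_interior hK h0, gauge_smul_of_nonneg hr.le, smul_eq_mul,
        ← lt_inv_mul_iff₀' hgauge, mul_one]
      rfl
    simp only [indicator, hmem, hhom r hr]
  have hdim : 0 < Module.finrank ℝ E := Module.finrank_pos
  simp_rw [hray]
  rw [lintegral_indicator measurableSet_Iio, setLIntegral_const, Measure.volumeIoiPow_apply_Iio,
    Nat.sub_add_cancel hdim, Nat.cast_pred hdim, sub_add_cancel]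

end Polar

namespace IsConvexBody

variable {k : ℕ} {K L : Set (Euc (k + 1))}

theorem setLIntegral_eq_lintegral_toSphere (hK : IsConvexBody K) (h0 : 0 ∈ interior K)
    {f : Euc (k + 1) → ℝ≥0∞} (hf : Measurable f)
    (hhom : ∀ c : ℝ, 0 < c → ∀ x, f (c • x) = f x) :
    ∫⁻ x in K, f x = ∫⁻ u : Metric.sphere (0 : Euc (k + 1)) 1,
      f u * ENNReal.ofReal ((gauge K u)⁻¹ ^ (k + 1) / (k + 1 : ℕ)) ∂volume.toSphere := by
  rw [← setLIntegral_congr (interior_ae_eq_of_null_frontier (hK.convex.addHaar_frontier _)),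
    setLIntegral_interior_eq_lintegral_toSphere volume hK.convex (mem_interior_iff_mem_nhds.1 h0)
      ((NormedSpace.isVonNBounded_iff ℝ).2 hK.isCompact.isBounded) hf hhom]
  simp only [finrank_euclideanSpace_fin]

theorem volume_eq_setLIntegral (hK : IsConvexBody K) (h0 : 0 ∈ interior K) (hL : IsConvexBody L)
    (h0L : 0 ∈ interior L) :
    volume L = ∫⁻ x in K, ENNReal.ofReal ((gauge K x / gauge L x) ^ (k + 1)) := by
  have hmeas : Measurable fun x => ENNReal.ofReal ((gauge K x / gauge L x) ^ (k + 1)) :=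
    (((hK.continuous_gauge h0).measurable.div
      (hL.continuous_gauge h0L).measurable).pow_const _).ennreal_ofReal
  have hhom : ∀ c : ℝ, 0 < c → ∀ x, ENNReal.ofReal ((gauge K (c • x) / gauge L (c • x)) ^ (k + 1)) =
      ENNReal.ofReal ((gauge K x / gauge L x) ^ (k + 1)) := fun c hc x => by
    rw [gauge_smul_of_nonneg hc.le, gauge_smul_of_nonneg hc.le, smul_eq_mul, smul_eq_mul,
      mul_div_mul_left _ _ hc.ne']
  rw [hK.setLIntegral_eq_lintegral_toSphere h0 hmeas hhom, ← setLIntegral_one,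
    hL.setLIntegral_eq_lintegral_toSphere h0L measurable_const fun _ _ _ => rfl]
  refine lintegral_congr fun u => ?_
  have hgaugeK := hK.gauge_pos h0 (ne_zero_of_mem_unit_sphere u)
  have hgaugeL := hL.gauge_pos h0L (ne_zero_of_mem_unit_sphere u)
  rw [← ENNReal.ofReal_mul (by positivity), one_mul, mul_div_assoc', ← mul_pow,
    div_mul_eq_mul_div, mul_inv_cancel₀ hgaugeK.ne', one_div]

theorem volume_real_eq_integral (hK : IsConvexBody K) (h0 : 0 ∈ interior K) (hL : IsConvexBody L)
    (h0L : 0 ∈ interior L) :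
    volume.real L = ∫ x in K, (gauge K x / gauge L x) ^ (k + 1) := by
  rw [measureReal_def, hK.volume_eq_setLIntegral h0 hL h0L, integral_eq_lintegral_of_nonneg_ae]
  · exact Filter.Eventually.of_forall fun x =>
      pow_nonneg (div_nonneg (gauge_nonneg _) (gauge_nonneg _)) _
  · exact (((hK.continuous_gauge h0).measurable.div
      (hL.continuous_gauge h0L).measurable).pow_const _).aestronglyMeasurable

end IsConvexBody

/-! ### First variation of volume -/

theorem eventually_mul_lt_one (C : ℝ) : ∀ᶠ t in 𝓝[>] (0 : ℝ), t * C < 1 :=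
  have hcont : Continuous fun t : ℝ => t * C := by fun_prop
  nhdsWithin_le_nhds (hcont.tendsto' 0 0 (zero_mul C) |>.eventually_lt_const one_pos)

theorem eventually_forall_nonneg_add_mul {X : Type*} [TopologicalSpace X] {S : Set X}
    (hS : IsCompact S) {p q : X → ℝ} (hp : Continuous p) (hq : Continuous q)
    (hp0 : ∀ u ∈ S, 0 ≤ p u) (hpq : ∀ u ∈ S, p u = 0 → 0 < q u) :
    ∀ᶠ t in 𝓝[>] (0 : ℝ), ∀ u ∈ S, 0 ≤ p u + t * q u := by
  suffices ∀ᶠ t in 𝓝 (0 : ℝ), ∀ u ∈ S, 0 < t → u ∈ S → 0 ≤ p u + t * q u from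
    eventually_nhdsWithin_iff.2 (this.mono fun t ht ht0 u hu => ht u hu ht0 hu)
  refine hS.eventually_forall_of_forall_eventually fun u hu => ?_
  rcases (hp0 u hu).eq_or_lt with hzero | hpos
  · have hq2 : Continuous fun z : ℝ × X => q z.2 := by fun_prop
    filter_upwards [hq2.continuousAt.eventually_const_lt (hpq u hu hzero.symm)] with z hz ht hzS
    exact add_nonneg (hp0 z.2 hzS) (mul_pos ht hz).le
  · have hcont : Continuous fun z : ℝ × X => p z.2 + z.1 * q z.2 := by fun_prop
    have hval : 0 < p u + 0 * q u := by simpa using hpos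
    filter_upwards [hcont.continuousAt.eventually_const_lt hval] with z hz _ _ using hz.le

theorem abs_pow_sub_one_div_le {θ t C : ℝ} (ht : 0 < t) (htC : t * C < 1)
    (h : |θ - 1| ≤ t * C) (k : ℕ) : |(θ ^ (k + 1) - 1) / t| ≤ C * (k + 1) * 2 ^ k := by
  have hθ : |θ| ≤ 2 := by
    have := abs_le.1 h
    exact abs_le.2 ⟨by linarith, by linarith⟩
  rw [abs_div, abs_of_pos ht, div_le_iff₀ ht]
  calc |θ ^ (k + 1) - 1| ≤ |θ - 1| * (k + 1 : ℕ) * max |θ| 1 ^ k := by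
        simpa using abs_pow_sub_pow_le θ 1 (k + 1)
    _ ≤ t * C * (k + 1 : ℕ) * 2 ^ k := by
        have hC : 0 ≤ t * C := (abs_nonneg _).trans h
        gcongr
        exact max_le hθ one_le_two
    _ = C * (k + 1) * 2 ^ k * t := by push_cast; ring

theorem gauge_div_gauge {E : Type*} [NormedAddCommGroup E] [NormedSpace ℝ E] (K L : Set E)
    (x : E) : gauge K x / gauge L x = (gauge L (radial K x))⁻¹ := by
  rw [radial, gauge_smul_of_nonneg (inv_nonneg.2 (gauge_nonneg x)), smul_eq_mul, mul_inv, inv_inv,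
    div_eq_mul_inv]

/-- The Wulff shape of `h_K + t f`, where `h_K` is the support function of `K`. -/
def wulffPerturbation {E : Type*} [NormedAddCommGroup E] [InnerProductSpace ℝ E] (K : Set E)
    (f : E → ℝ) (t : ℝ) : Set E :=
  wulff fun u => supportFun K u + t * f u

namespace IsConvexBody

section Perturbation

variable {m : ℕ} {K : Set (Euc m)} {f : Euc m → ℝ} {p : Euc m} {t C : ℝ}

theorem smul_mem_iff_le_inv_gauge (hK : IsConvexBody K) (h0 : 0 ∈ interior K) (hp : p ≠ 0) {c : ℝ}
    (hc : 0 ≤ c) : c • p ∈ K ↔ c ≤ (gauge K p)⁻¹ := by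
  rw [← hK.gauge_le_one_iff h0, gauge_smul_of_nonneg hc, smul_eq_mul,
    ← le_div_iff₀ (hK.gauge_pos h0 hp), one_div]

theorem wulff_mul_supportFun (hK : IsConvexBody K) {c : ℝ} (hc : 0 < c) :
    wulff (fun u => c * supportFun K u) = c • K := by
  rw [← (hK.smul hc.ne').wulff_supportFun]
  exact wulff_congr fun u _ => (supportFun_smul K hc.le u).symm

theorem wulffPerturbation_zero (hK : IsConvexBody K) (f : Euc m → ℝ) :
    wulffPerturbation K f 0 = K := by
  simp only [wulffPerturbation, zero_mul, add_zero, hK.wulff_supportFun]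

theorem exists_abs_le_mul_supportFun (hK : IsConvexBody K) (h0 : 0 ∈ interior K)
    (hf : Continuous f) : ∃ C, 0 ≤ C ∧ ∀ u, ‖u‖ = 1 → |f u| ≤ C * supportFun K u := by
  obtain ⟨r, hr, hrK⟩ := hK.exists_pos_le_supportFun h0
  obtain ⟨M, hM⟩ := (isCompact_sphere (0 : Euc m) 1).exists_bound_of_continuousOn hf.continuousOn
  refine ⟨max M 0 / r, by positivity, fun u hu => ?_⟩
  calc |f u| ≤ max M 0 := (hM u (mem_sphere_zero_iff_norm.2 hu)).trans (le_max_left _ _)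
    _ = max M 0 / r * r := by field_simp
    _ ≤ max M 0 / r * supportFun K u := by
        gcongr
        exact hrK u hu

theorem smul_subset_wulffPerturbation (hK : IsConvexBody K)
    (hC : ∀ u, ‖u‖ = 1 → |f u| ≤ C * supportFun K u) (ht : 0 ≤ t) (htC : t * C < 1) :
    (1 - t * C) • K ⊆ wulffPerturbation K f t := by
  rw [← hK.wulff_mul_supportFun (sub_pos.2 htC)]
  refine wulff_mono fun u hu => ?_
  have hlow := mul_le_mul_of_nonneg_left (abs_le.1 (hC u hu)).1 ht
  linarith

theorem wulffPerturbation_subset_smul (hK : IsConvexBody K)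
    (hC : ∀ u, ‖u‖ = 1 → |f u| ≤ C * supportFun K u) (hC0 : 0 ≤ C) (ht : 0 ≤ t) :
    wulffPerturbation K f t ⊆ (1 + t * C) • K := by
  rw [← hK.wulff_mul_supportFun (by positivity)]
  refine wulff_mono fun u hu => ?_
  have hup := mul_le_mul_of_nonneg_left (abs_le.1 (hC u hu)).2 ht
  linarith

theorem zero_mem_interior_wulffPerturbation (hK : IsConvexBody K) (h0 : 0 ∈ interior K)
    (hC : ∀ u, ‖u‖ = 1 → |f u| ≤ C * supportFun K u) (ht : 0 ≤ t) (htC : t * C < 1) :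
    0 ∈ interior (wulffPerturbation K f t) := by
  refine interior_mono (hK.smul_subset_wulffPerturbation hC ht htC) ?_
  rw [interior_smul₀ (sub_pos.2 htC).ne']
  exact ⟨0, h0, smul_zero _⟩

theorem isConvexBody_wulffPerturbation (hK : IsConvexBody K) (h0 : 0 ∈ interior K)
    (hC : ∀ u, ‖u‖ = 1 → |f u| ≤ C * supportFun K u) (hC0 : 0 ≤ C) (ht : 0 ≤ t)
    (htC : t * C < 1) : IsConvexBody (wulffPerturbation K f t) :=
  ⟨convex_wulff _, (hK.isCompact.smul (1 + t * C)).of_isClosed_subset (isClosed_wulff _)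
    (hK.wulffPerturbation_subset_smul hC hC0 ht), 0,
    hK.zero_mem_interior_wulffPerturbation h0 hC ht htC⟩

theorem abs_inv_gauge_wulffPerturbation_sub_one_le (hK : IsConvexBody K) (h0 : 0 ∈ interior K)
    (hC : ∀ u, ‖u‖ = 1 → |f u| ≤ C * supportFun K u) (hC0 : 0 ≤ C) (ht : 0 ≤ t)
    (htC : t * C < 1) (hp : p ∈ frontier K) :
    |(gauge (wulffPerturbation K f t) p)⁻¹ - 1| ≤ t * C := by
  have hW := hK.isConvexBody_wulffPerturbation h0 hC hC0 ht htC
  have h0W := hK.zero_mem_interior_wulffPerturbation h0 hC ht htC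
  have hp0 := ne_zero_of_mem_frontier h0 hp
  have hpK := (hK.gauge_eq_one_iff h0).2 hp
  have hlow : 1 - t * C ≤ (gauge (wulffPerturbation K f t) p)⁻¹ :=
    (hW.smul_mem_iff_le_inv_gauge h0W hp0 (sub_pos.2 htC).le).1
      (hK.smul_subset_wulffPerturbation hC ht htC (smul_mem_smul_set (hK.frontier_subset hp)))
  have hup : (gauge (wulffPerturbation K f t) p)⁻¹ ≤ 1 + t * C := by
    have hscale : 0 < 1 + t * C := by positivity
    have hgauge : 0 ≤ (gauge (wulffPerturbation K f t) p)⁻¹ := inv_nonneg.2 (gauge_nonneg p)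
    have hmem := hK.wulffPerturbation_subset_smul hC hC0 ht
      (hW.frontier_subset (hW.radial_mem_frontier h0W hp0))
    rwa [mem_smul_set_iff_inv_smul_mem₀ hscale.ne', radial, smul_smul,
      hK.smul_mem_iff_le_inv_gauge h0 hp0 (by positivity), hpK, inv_one,
      inv_mul_le_iff₀ hscale, mul_one] at hmem
  exact abs_le.2 ⟨by linarith, by linarith⟩

theorem eventually_isConvexBody_wulffPerturbation (hK : IsConvexBody K) (h0 : 0 ∈ interior K)
    (hf : Continuous f) :
    ∀ᶠ t in 𝓝[>] (0 : ℝ), IsConvexBody (wulffPerturbation K f t) ∧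
      0 ∈ interior (wulffPerturbation K f t) := by
  obtain ⟨C, hC0, hC⟩ := hK.exists_abs_le_mul_supportFun h0 hf
  filter_upwards [eventually_mul_lt_one C, self_mem_nhdsWithin] with t htC ht
  exact ⟨hK.isConvexBody_wulffPerturbation h0 hC hC0 (le_of_lt ht) htC,
    hK.zero_mem_interior_wulffPerturbation h0 hC (le_of_lt ht) htC⟩

theorem inv_gauge_wulffPerturbation_le (hK : IsConvexBody K) (h0 : 0 ∈ interior K)
    (hW : IsConvexBody (wulffPerturbation K f t)) (h0W : 0 ∈ interior (wulffPerturbation K f t))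
    {n : Euc m} (hn : IsOutwardNormalAt K p n) :
    (gauge (wulffPerturbation K f t) p)⁻¹ ≤ 1 + t * (f n / ⟪p, n⟫) := by
  have hpn := hK.inner_pos h0 hn
  have hmem : ⟪(gauge (wulffPerturbation K f t) p)⁻¹ • p, n⟫ ≤ supportFun K n + t * f n :=
    hW.frontier_subset (hW.radial_mem_frontier h0W (ne_zero_of_mem_frontier h0 hn.1)) n hn.2.1
  rw [real_inner_smul_left, ← hK.inner_eq_supportFun hn, ← le_div_iff₀ hpn] at hmem
  exact hmem.trans_eq (by field_simp)

theorem eventually_le_inv_gauge_wulffPerturbation (hK : IsConvexBody K) (h0 : 0 ∈ interior K)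
    (hf : Continuous f) (hp : p ∈ regularBoundary K) {n : Euc m} (hn : IsOutwardNormalAt K p n)
    {c : ℝ} (hc : c < f n / ⟪p, n⟫) :
    ∀ᶠ t in 𝓝[>] (0 : ℝ), 1 + t * c ≤ (gauge (wulffPerturbation K f t) p)⁻¹ := by
  have hcont := continuous_supportFun hK.isCompact
  have hhalfspaces : ∀ᶠ t in 𝓝[>] (0 : ℝ), ∀ u ∈ Metric.sphere (0 : Euc m) 1,
      0 ≤ (supportFun K u - ⟪p, u⟫) + t * (f u - c * ⟪p, u⟫) := by
    refine eventually_forall_nonneg_add_mul (isCompact_sphere _ _) (by fun_prop) (by fun_prop)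
      (fun u _ => sub_nonneg.2 (inner_le_supportFun hK.isCompact (hK.frontier_subset hp.1) u))
      fun u hu htouch => ?_
    have hun : IsOutwardNormalAt K p u := by
      refine ⟨hp.1, mem_sphere_zero_iff_norm.1 hu, fun y hy => ?_⟩
      rw [inner_sub_left, sub_nonpos, ← sub_eq_zero.1 htouch]
      exact inner_le_supportFun hK.isCompact hy u
    rw [hK.isOutwardNormalAt_unique h0 hp hun hn, sub_pos, ← lt_div_iff₀ (hK.inner_pos h0 hn)]
    exact hc
  filter_upwards [hhalfspaces, hK.eventually_isConvexBody_wulffPerturbation h0 hf]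
    with t hlow ⟨hW, h0W⟩
  rcases lt_or_ge (1 + t * c) 0 with hneg | hpos
  · exact hneg.le.trans (inv_nonneg.2 (gauge_nonneg p))
  rw [← hW.smul_mem_iff_le_inv_gauge h0W (ne_zero_of_mem_frontier h0 hp.1) hpos]
  intro u hu
  rw [real_inner_smul_left]
  linarith [hlow u (mem_sphere_zero_iff_norm.2 hu)]

theorem inv_gauge_wulffPerturbation_zero (hK : IsConvexBody K) (h0 : 0 ∈ interior K)
    (hp : p ∈ frontier K) : (gauge (wulffPerturbation K f 0) p)⁻¹ = 1 := by
  rw [hK.wulffPerturbation_zero, (hK.gauge_eq_one_iff h0).2 hp, inv_one]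

theorem hasDerivWithinAt_inv_gauge_wulffPerturbation (hK : IsConvexBody K) (h0 : 0 ∈ interior K)
    (hf : Continuous f) (hp : p ∈ regularBoundary K) {n : Euc m} (hn : IsOutwardNormalAt K p n) :
    HasDerivWithinAt (fun t => (gauge (wulffPerturbation K f t) p)⁻¹) (f n / ⟪p, n⟫) (Ioi 0) 0 := by
  rw [hasDerivWithinAt_iff_tendsto_slope' self_notMem_Ioi]
  simp only [slope_fun_def_field, hK.inv_gauge_wulffPerturbation_zero h0 hp.1, sub_zero]
  refine tendsto_order.2 ⟨fun a ha => ?_, fun a ha => ?_⟩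
  · obtain ⟨c, hac, hc⟩ := exists_between ha
    filter_upwards [hK.eventually_le_inv_gauge_wulffPerturbation h0 hf hp hn hc,
      self_mem_nhdsWithin] with t hlow ht
    exact hac.trans_le ((le_div_iff₀ ht).2 (by linarith))
  · filter_upwards [hK.eventually_isConvexBody_wulffPerturbation h0 hf, self_mem_nhdsWithin]
      with t ⟨hW, h0W⟩ ht
    have hup := hK.inv_gauge_wulffPerturbation_le h0 hW h0W hn
    exact ((div_le_iff₀ ht).2 (by linarith)).trans_lt ha

end Perturbation

variable {k : ℕ} {K L : Set (Euc (k + 1))} {f : Euc (k + 1) → ℝ}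

theorem tendsto_div_inv_gauge_pow (hK : IsConvexBody K) (h0 : 0 ∈ interior K)
    (hf : Continuous f) {p n : Euc (k + 1)} (hp : p ∈ regularBoundary K)
    (hn : IsOutwardNormalAt K p n) :
    Filter.Tendsto (fun t => ((gauge (wulffPerturbation K f t) p)⁻¹ ^ (k + 1) - 1) / t) (𝓝[>] 0)
      (𝓝 ((k + 1) * (f n / ⟪p, n⟫))) := by
  have hderiv := (hK.hasDerivWithinAt_inv_gauge_wulffPerturbation h0 hf hp hn).pow (k + 1)
  rw [hasDerivWithinAt_iff_tendsto_slope' self_notMem_Ioi] at hderiv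
  simpa only [slope_fun_def_field, Pi.pow_apply, hK.inv_gauge_wulffPerturbation_zero h0 hp.1,
    one_pow, sub_zero, mul_one, Nat.cast_succ] using hderiv

theorem tendsto_integral_gauge_div_gauge_pow (hK : IsConvexBody K) (h0 : 0 ∈ interior K)
    (hf : Continuous f) :
    Filter.Tendsto
      (fun t => ∫ x in K, ((gauge K x / gauge (wulffPerturbation K f t) x) ^ (k + 1) - 1) / t)
      (𝓝[>] 0) (𝓝 (∫ x in K, (k + 1) * (f (gaussMap K (radial K x)) /
        ⟪radial K x, gaussMap K (radial K x)⟫))) := by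
  obtain ⟨C, hC0, hC⟩ := hK.exists_abs_le_mul_supportFun h0 hf
  refine tendsto_integral_filter_of_dominated_convergence (fun _ => C * (k + 1) * 2 ^ k)
    ?_ ?_ (integrableOn_const hK.isCompact.measure_ne_top) ?_
  · filter_upwards [hK.eventually_isConvexBody_wulffPerturbation h0 hf] with t ⟨hW, h0W⟩
    exact (((((hK.continuous_gauge h0).measurable.div
      (hW.continuous_gauge h0W).measurable).pow_const _).sub_const 1).div_const
        t).aestronglyMeasurable
  · filter_upwards [eventually_mul_lt_one C, self_mem_nhdsWithin] with t htC ht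
    filter_upwards [ae_restrict_of_ae (Measure.ae_ne volume 0)] with x hx
    rw [gauge_div_gauge, Real.norm_eq_abs]
    exact abs_pow_sub_one_div_le ht htC (hK.abs_inv_gauge_wulffPerturbation_sub_one_le h0 hC hC0
      (le_of_lt ht) htC (hK.radial_mem_frontier h0 hx)) k
  · filter_upwards [ae_restrict_of_ae (hK.ae_radial_mem_regularBoundary h0 k.succ_ne_zero)]
      with x hx
    simp only [gauge_div_gauge]
    exact hK.tendsto_div_inv_gauge_pow h0 hf hx (hK.isOutwardNormalAt_gaussMap hx.1)

theorem integral_surfMeasure_eq_integral_div_inner (hK : IsConvexBody K) (h0 : 0 ∈ interior K)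
    (hf : Continuous f) :
    (hausdorffFactor k)⁻¹ * ∫ u, f u ∂(surfMeasure K) =
      ∫ x in K, (k + 1) * (f (gaussMap K (radial K x)) /
        ⟪radial K x, gaussMap K (radial K x)⟫) := by
  have hκ := (hausdorffFactor_pos k).ne'
  rw [hK.integral_surfMeasure h0 hf, ← integral_const_mul]
  refine integral_congr_ae (Filter.Eventually.of_forall fun x => ?_)
  simp only [surfaceDensity]
  field_simp

theorem volume_real_sub_div_eq_integral (hK : IsConvexBody K) (h0 : 0 ∈ interior K)
    (hL : IsConvexBody L) (h0L : 0 ∈ interior L) (t : ℝ) :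
    (volume.real L - volume.real K) / t =
      ∫ x in K, ((gauge K x / gauge L x) ^ (k + 1) - 1) / t := by
  have hint : IntegrableOn (fun x => (gauge K x / gauge L x) ^ (k + 1)) K := by
    refine Integrable.of_integral_ne_zero ?_
    rw [← hK.volume_real_eq_integral h0 hL h0L]
    exact hL.volume_pos.ne'
  rw [integral_div, integral_sub hint (integrableOn_const hK.isCompact.measure_ne_top),
    ← hK.volume_real_eq_integral h0 hL h0L, setIntegral_const, smul_eq_mul, mul_one]

theorem tendsto_volume_wulffPerturbation (hK : IsConvexBody K) (h0 : 0 ∈ interior K)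
    (hf : Continuous f) :
    Filter.Tendsto (fun t => (volume.real (wulffPerturbation K f t) - volume.real K) / t)
      (𝓝[>] 0) (𝓝 ((hausdorffFactor k)⁻¹ * ∫ u, f u ∂(surfMeasure K))) := by
  rw [hK.integral_surfMeasure_eq_integral_div_inner h0 hf]
  refine (hK.tendsto_integral_gauge_div_gauge_pow h0 hf).congr' ?_
  filter_upwards [hK.eventually_isConvexBody_wulffPerturbation h0 hf] with t ⟨hW, h0W⟩
  exact (hK.volume_real_sub_div_eq_integral h0 hW h0W t).symm

end IsConvexBody

/-! ### Minkowski's first inequality and uniqueness -/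

theorem exists_pos_pow_eq {n : ℕ} (hn : n ≠ 0) {a : ℝ} (ha : 0 < a) :
    ∃ r : ℝ, 0 < r ∧ r ^ n = a :=
  ⟨a ^ (n : ℝ)⁻¹, Real.rpow_pos_of_pos ha _, Real.rpow_inv_natCast_pow ha.le hn⟩

/-- The integral `∫ h_L dμ` of the support function of `L`; for `μ = surfMeasure K` it is a multiple
of the mixed volume of `K` and `L`, and Minkowski's problem for `μ` is solved by minimising it. -/
def supportIntegral {m : ℕ} (μ : Measure (Euc m)) (L : Set (Euc m)) : ℝ := ∫ u, supportFun L u ∂μ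

theorem supportIntegral_smul {m : ℕ} (μ : Measure (Euc m)) (L : Set (Euc m)) {c : ℝ}
    (hc : 0 ≤ c) : supportIntegral μ (c • L) = c * supportIntegral μ L := by
  simp only [supportIntegral, supportFun_smul L hc, integral_const_mul]

theorem supportIntegral_add {m : ℕ} {μ : Measure (Euc m)} [IsFiniteMeasure μ]
    (hμ : μ (unitSphere m)ᶜ = 0) {L M : Set (Euc m)} (hL : IsCompact L) (hM : IsCompact M)
    (hLne : L.Nonempty) (hMne : M.Nonempty) :
    supportIntegral μ (L + M) = supportIntegral μ L + supportIntegral μ M := by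
  simp only [supportIntegral, supportFun_add hL hM hLne hMne]
  exact integral_add (integrable_of_measure_compl_unitSphere hμ (continuous_supportFun hL))
    (integrable_of_measure_compl_unitSphere hμ (continuous_supportFun hM))

/-- The mixed volume `V(K, …, K, L)` of convex bodies, normalised by `V(K, …, K) = vol K`. -/
def mixedVolume {k : ℕ} (K L : Set (Euc (k + 1))) : ℝ :=
  (hausdorffFactor k)⁻¹ * supportIntegral (surfMeasure K) L / (k + 1)

theorem mixedVolume_smul_right {k : ℕ} (K L : Set (Euc (k + 1))) {c : ℝ} (hc : 0 ≤ c) :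
    mixedVolume K (c • L) = c * mixedVolume K L := by
  rw [mixedVolume, supportIntegral_smul _ L hc, mixedVolume]
  ring

theorem volume_real_vadd {m : ℕ} (v : Euc m) (K : Set (Euc m)) :
    volume.real (v +ᵥ K) = volume.real K := by
  rw [measureReal_def, measure_vadd, measureReal_def]

theorem volume_real_smul {m : ℕ} (K : Set (Euc m)) {c : ℝ} (hc : 0 ≤ c) :
    volume.real (c • K) = c ^ m * volume.real K := by
  rw [measureReal_def, Measure.addHaar_smul_of_nonneg _ hc, ENNReal.toReal_mul,
    ENNReal.toReal_ofReal (by positivity), finrank_euclideanSpace_fin, measureReal_def]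

theorem combo_subset_wulffPerturbation {E : Type*} [NormedAddCommGroup E] [InnerProductSpace ℝ E]
    {K L : Set E} (hK : IsCompact K) (hL : IsCompact L) {t : ℝ} (ht0 : 0 ≤ t) (ht1 : t ≤ 1) :
    (1 - t) • K + t • L ⊆ wulffPerturbation K (fun u => supportFun L u - supportFun K u) t := by
  rintro _ ⟨_, ⟨x, hx, rfl⟩, _, ⟨y, hy, rfl⟩, rfl⟩ u -
  have hxu := mul_le_mul_of_nonneg_left (inner_le_supportFun hK hx u) (sub_nonneg.2 ht1)
  have hyu := mul_le_mul_of_nonneg_left (inner_le_supportFun hL hy u) ht0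
  simp only [inner_add_left, real_inner_smul_left]
  linarith

namespace IsConvexBody

theorem exists_zero_mem_interior_vadd {m : ℕ} {K : Set (Euc m)} (hK : IsConvexBody K) :
    ∃ v : Euc m, 0 ∈ interior (v +ᵥ K) := by
  obtain ⟨x, hx⟩ := hK.2.2
  refine ⟨-x, ?_⟩
  rw [interior_vadd]
  exact ⟨x, hx, neg_add_cancel x⟩

variable {k : ℕ} {K L M : Set (Euc (k + 1))}

theorem mixedVolume_self (hK : IsConvexBody K) (h0 : 0 ∈ interior K) :
    mixedVolume K K = volume.real K := by
  rw [mixedVolume, supportIntegral, hK.integral_surfMeasure_eq_integral_div_inner h0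
    (continuous_supportFun hK.isCompact), div_eq_iff (by positivity)]
  calc ∫ x in K, ((k : ℝ) + 1) * (supportFun K (gaussMap K (radial K x)) /
        ⟪radial K x, gaussMap K (radial K x)⟫) = ∫ _ in K, ((k : ℝ) + 1) := by
        refine integral_congr_ae ?_
        filter_upwards [ae_restrict_of_ae (Measure.ae_ne volume 0)] with x hx
        have hfr := hK.radial_mem_frontier h0 hx
        rw [← hK.inner_eq_supportFun (hK.isOutwardNormalAt_gaussMap hfr),
          div_self (hK.inner_gaussMap_pos h0 hfr).ne', mul_one]
    _ = volume.real K * (k + 1) := by rw [setIntegral_const, smul_eq_mul]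

theorem mixedVolume_add_right (hK : IsConvexBody K) (h0 : 0 ∈ interior K) (hL : IsConvexBody L)
    (hM : IsConvexBody M) : mixedVolume K (L + M) = mixedVolume K L + mixedVolume K M := by
  have : IsFiniteMeasure (surfMeasure K) := ⟨hK.surfMeasure_univ_lt_top h0⟩
  rw [mixedVolume, supportIntegral_add (hK.surfMeasure_compl_unitSphere h0) hL.isCompact
    hM.isCompact hL.nonempty hM.nonempty, mixedVolume, mixedVolume]
  ring

theorem volume_le_mixedVolume (hK : IsConvexBody K) (h0 : 0 ∈ interior K) (hL : IsConvexBody L)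
    (hvol : volume.real L = volume.real K) : volume.real K ≤ mixedVolume K L := by
  have hcK := continuous_supportFun hK.isCompact
  have hcL := continuous_supportFun hL.isCompact
  have hcont : Continuous fun u => supportFun L u - supportFun K u := hcL.sub hcK
  have hnonneg : 0 ≤ (hausdorffFactor k)⁻¹ *
      ∫ u, supportFun L u - supportFun K u ∂(surfMeasure K) := by
    refine ge_of_tendsto (hK.tendsto_volume_wulffPerturbation h0 hcont) ?_
    filter_upwards [hK.eventually_isConvexBody_wulffPerturbation h0 hcont,
      eventually_mul_lt_one 1, self_mem_nhdsWithin] with t ⟨hW, _⟩ ht1 ht0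
    rw [mul_one] at ht1
    have hBM := brunnMinkowski (k + 1) K L hK.convex hL.convex hK.isCompact hL.isCompact
      hK.nonempty hL.nonempty (1 - t) t (sub_pos.2 ht1) ht0 (sub_add_cancel 1 t)
    rw [hvol, ← Real.rpow_add hK.volume_pos, sub_add_cancel, Real.rpow_one] at hBM
    refine div_nonneg (sub_nonneg.2 (hBM.trans (measureReal_mono ?_ hW.isCompact.measure_ne_top)))
      (le_of_lt ht0)
    exact combo_subset_wulffPerturbation hK.isCompact hL.isCompact (le_of_lt ht0) ht1.le
  rw [integral_sub (hK.integrable_surfMeasure h0 hcL) (hK.integrable_surfMeasure h0 hcK), mul_sub,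
    sub_nonneg] at hnonneg
  rw [← hK.mixedVolume_self h0]
  exact div_le_div_of_nonneg_right hnonneg (by positivity)

theorem minkowski_first_inequality (hK : IsConvexBody K) (h0 : 0 ∈ interior K)
    (hL : IsConvexBody L) : volume.real K ^ k * volume.real L ≤ mixedVolume K L ^ (k + 1) := by
  have hVK := hK.volume_pos
  have hVL := hL.volume_pos
  obtain ⟨c, hc, hcpow⟩ := exists_pos_pow_eq k.succ_ne_zero (div_pos hVK hVL)
  have hle : volume.real K ≤ c * mixedVolume K L := by
    rw [← mixedVolume_smul_right K L hc.le]
    refine hK.volume_le_mixedVolume h0 (hL.smul hc.ne') ?_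
    rw [volume_real_smul L hc.le, hcpow, div_mul_cancel₀ _ hVL.ne']
  have hpow := pow_le_pow_left₀ hVK.le hle (k + 1)
  rw [mul_pow, hcpow, pow_succ, div_mul_eq_mul_div, le_div_iff₀ hVL] at hpow
  nlinarith

theorem volume_le_of_surfMeasure_eq (hk : k ≠ 0) (hK : IsConvexBody K) (h0 : 0 ∈ interior K)
    (hL : IsConvexBody L) (h0L : 0 ∈ interior L) (h : surfMeasure K = surfMeasure L) :
    volume.real K ≤ volume.real L := by
  have hmixed : mixedVolume K L = volume.real L := by
    rw [mixedVolume, h, ← hL.mixedVolume_self h0L, mixedVolume]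
  have hpow := hK.minkowski_first_inequality h0 hL
  rw [hmixed, pow_succ] at hpow
  exact (pow_le_pow_iff_left₀ measureReal_nonneg measureReal_nonneg hk).1
    (le_of_mul_le_mul_right hpow hL.volume_pos)

theorem eq_vadd_of_mixedVolume_eq (hK : IsConvexBody K) (h0 : 0 ∈ interior K)
    (hL : IsConvexBody L) (hvol : volume.real L = volume.real K)
    (hmixed : mixedVolume K L = volume.real K) : ∃ v : Euc (k + 1), L = v +ᵥ K := by
  have hVK := hK.volume_pos
  have hhalf : (2⁻¹ : ℝ) + 2⁻¹ = 1 := by norm_num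
  have hKhalf : IsConvexBody ((2⁻¹ : ℝ) • K) := hK.smul (by norm_num)
  have hLhalf : IsConvexBody ((2⁻¹ : ℝ) • L) := hL.smul (by norm_num)
  have hM : IsConvexBody ((2⁻¹ : ℝ) • K + (2⁻¹ : ℝ) • L) := hKhalf.add hLhalf
  have hmid : mixedVolume K ((2⁻¹ : ℝ) • K + (2⁻¹ : ℝ) • L) = volume.real K := by
    rw [hK.mixedVolume_add_right h0 hKhalf hLhalf, mixedVolume_smul_right _ _ (by norm_num),
      mixedVolume_smul_right _ _ (by norm_num), hK.mixedVolume_self h0, hmixed]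
    ring
  have hle : volume.real ((2⁻¹ : ℝ) • K + (2⁻¹ : ℝ) • L) ≤ volume.real K := by
    have hpow := hK.minkowski_first_inequality h0 hM
    rw [hmid, pow_succ] at hpow
    exact le_of_mul_le_mul_left hpow (pow_pos hVK k)
  refine ⟨_, eq_vadd_of_volume_combo_le hK hL (w₁ := 2⁻¹) (w₂ := 2⁻¹) (by norm_num) (by norm_num)
    hhalf ?_⟩
  rwa [hvol, ← Real.rpow_add hVK, hhalf, Real.rpow_one]

theorem exists_eq_vadd_of_surfMeasure_eq (hk : k ≠ 0) (hK : IsConvexBody K) (hL : IsConvexBody L)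
    (h : surfMeasure K = surfMeasure L) : ∃ v : Euc (k + 1), L = v +ᵥ K := by
  obtain ⟨a, ha⟩ := hK.exists_zero_mem_interior_vadd
  obtain ⟨b, hb⟩ := hL.exists_zero_mem_interior_vadd
  have hKa := hK.vadd a
  have hLb := hL.vadd b
  have hab : surfMeasure (a +ᵥ K) = surfMeasure (b +ᵥ L) := by
    rw [surfMeasure_vadd, surfMeasure_vadd, h]
  have hvol : volume.real (b +ᵥ L) = volume.real (a +ᵥ K) :=
    le_antisymm (hLb.volume_le_of_surfMeasure_eq hk hb hKa ha hab.symm)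
      (hKa.volume_le_of_surfMeasure_eq hk ha hLb hb hab)
  have hmixed : mixedVolume (a +ᵥ K) (b +ᵥ L) = volume.real (a +ᵥ K) := by
    rw [← hvol, ← hLb.mixedVolume_self hb, mixedVolume, hab, mixedVolume]
  obtain ⟨v, hv⟩ := hKa.eq_vadd_of_mixedVolume_eq ha hLb hvol hmixed
  exact ⟨-b + v + a, by rw [← neg_vadd_vadd b L, hv, vadd_vadd, vadd_vadd]⟩

end IsConvexBody

/-! ### Blaschke selection -/

theorem exists_subseq_tendstoUniformly {S : Type*} [PseudoMetricSpace S] [CompactSpace S]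
    {g : ℕ → S → ℝ} {R : NNReal} {C : ℝ} (hbound : ∀ n s, |g n s| ≤ C)
    (hlip : ∀ n, LipschitzWith R (g n)) :
    ∃ (φ : S → ℝ) (ψ : ℕ → ℕ), StrictMono ψ ∧
      TendstoUniformly (fun i => g (ψ i)) φ Filter.atTop := by
  let G : ℕ → BoundedContinuousFunction S ℝ := fun n =>
    BoundedContinuousFunction.mkOfCompact ⟨g n, (hlip n).continuous⟩
  have hcompact : IsCompact (closure (range G)) := by
    refine BoundedContinuousFunction.arzela_ascoli (Icc (-C) C) isCompact_Icc _ ?_ ?_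
    · rintro _ s ⟨n, rfl⟩
      exact abs_le.1 (hbound n s)
    · refine (LipschitzWith.uniformEquicontinuous _ R ?_).equicontinuous
      rintro ⟨_, n, rfl⟩
      exact hlip n
  obtain ⟨φ, -, ψ, hψ, hlim⟩ := hcompact.tendsto_subseq fun n => subset_closure (mem_range_self n)
  exact ⟨φ, ψ, hψ, BoundedContinuousFunction.tendsto_iff_tendstoUniformly.1 hlim⟩

theorem exists_subseq_tendstoUniformlyOn_supportFun {E : Type*} [NormedAddCommGroup E]
    [InnerProductSpace ℝ E] [ProperSpace E] {L : ℕ → Set E} (hL : ∀ n, IsCompact (L n))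
    (hne : ∀ n, (L n).Nonempty) {R : NNReal} (hR : ∀ n, L n ⊆ Metric.closedBall 0 R) :
    ∃ (φ : E → ℝ) (ψ : ℕ → ℕ), StrictMono ψ ∧
      TendstoUniformlyOn (fun i => supportFun (L (ψ i))) φ Filter.atTop (Metric.sphere 0 1) := by
  have hlip (n : ℕ) :
      LipschitzWith R fun u : Metric.sphere (0 : E) 1 => supportFun (L n) u := by
    rw [← mul_one R]
    exact (lipschitzWith_supportFun (hL n) (hne n) (hR n)).comp (LipschitzWith.subtype_val _)
  obtain ⟨φ, ψ, hψ, hlim⟩ := exists_subseq_tendstoUniformly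
    (fun n u => abs_supportFun_le (hL n) (hne n) (hR n) (mem_sphere_zero_iff_norm.1 u.2)) hlip
  refine ⟨Function.extend Subtype.val φ 0, ψ, hψ, ?_⟩
  rwa [tendstoUniformlyOn_iff_tendstoUniformly_comp_coe, Function.extend_comp
    Subtype.val_injective]

section WulffLimit

variable {E : Type*} [NormedAddCommGroup E] [InnerProductSpace ℝ E]

theorem iInter_wulff_add_one_div (φ : E → ℝ) :
    ⋂ j : ℕ, wulff (fun u => φ u + 1 / ((j : ℝ) + 1)) = wulff φ := by
  refine Subset.antisymm (fun x hx u hu => ?_) (subset_iInter fun j => wulff_mono fun u _ => ?_)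
  · have hlim : Filter.Tendsto (fun j : ℕ => φ u + 1 / ((j : ℝ) + 1)) Filter.atTop (𝓝 (φ u)) := by
      simpa using tendsto_one_div_add_atTop_nhds_zero_nat.const_add (φ u)
    exact ge_of_tendsto' hlim fun j => mem_iInter.1 hx j u hu
  · exact le_add_of_nonneg_right (by positivity)

variable [ProperSpace E] {φ : E → ℝ} {R : ℝ}

theorem isCompact_wulff (hφ : ∀ u, ‖u‖ = 1 → φ u ≤ R) : IsCompact (wulff φ) :=
  (isCompact_closedBall (0 : E) (max R 0)).of_isClosed_subset (isClosed_wulff φ)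
    (wulff_subset_closedBall (le_max_right R 0) fun u hu => (hφ u hu).trans (le_max_left R 0))

theorem le_measure_wulff [MeasurableSpace E] [BorelSpace E] (ν : Measure E)
    [IsFiniteMeasureOnCompacts ν] {v : ℝ} (hφ : ∀ u, ‖u‖ = 1 → φ u ≤ R)
    (hv : ∀ ε > 0, v ≤ ν.real (wulff fun u => φ u + ε)) : v ≤ ν.real (wulff φ) := by
  have hfinite : ν (wulff fun u => φ u + 1 / (((0 : ℕ) : ℝ) + 1)) ≠ ∞ :=
    (isCompact_wulff fun u hu => add_le_add_left (hφ u hu) _).measure_ne_top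
  have hanti : Antitone fun j : ℕ => wulff fun u => φ u + 1 / ((j : ℝ) + 1) :=
    fun i j hij => wulff_mono fun u _ => by gcongr
  have hlim := tendsto_measure_iInter_atTop (μ := ν)
    (fun j => (isClosed_wulff _).measurableSet.nullMeasurableSet) hanti ⟨0, hfinite⟩
  rw [iInter_wulff_add_one_div] at hlim
  exact ge_of_tendsto' ((ENNReal.tendsto_toReal (isCompact_wulff hφ).measure_ne_top).comp hlim)
    fun j => hv _ (by positivity)

end WulffLimit

theorem exists_isConvexBody_subseq_limit {m : ℕ} {L : ℕ → Set (Euc m)}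
    (hL : ∀ n, IsConvexBody (L n)) {R : NNReal} (hR : ∀ n, L n ⊆ Metric.closedBall 0 R) {v : ℝ}
    (hv : 0 < v) (hV : ∀ n, v ≤ volume.real (L n)) :
    ∃ K, IsConvexBody K ∧ v ≤ volume.real K ∧ ∃ ψ : ℕ → ℕ, StrictMono ψ ∧
      ∀ ε > 0, ∀ᶠ i in Filter.atTop, ∀ u, ‖u‖ = 1 →
        supportFun K u ≤ supportFun (L (ψ i)) u + ε := by
  obtain ⟨φ, ψ, hψ, hlim⟩ := exists_subseq_tendstoUniformlyOn_supportFun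
    (fun n => (hL n).isCompact) (fun n => (hL n).nonempty) hR
  have hclose (ε : ℝ) (hε : 0 < ε) : ∀ᶠ i in Filter.atTop, ∀ u, ‖u‖ = 1 →
      |φ u - supportFun (L (ψ i)) u| < ε := by
    filter_upwards [Metric.tendstoUniformlyOn_iff.1 hlim ε hε] with i hi u hu
    exact hi u (mem_sphere_zero_iff_norm.2 hu)
  have hφR (u : Euc m) (hu : ‖u‖ = 1) : φ u ≤ R :=
    le_of_tendsto (hlim.tendsto_at (mem_sphere_zero_iff_norm.2 hu)) (Filter.Eventually.of_forall
      fun i => (abs_le.1 (abs_supportFun_le (hL _).isCompact (hL _).nonempty (hR _) hu)).2)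
  have hvol : v ≤ volume.real (wulff φ) := by
    refine le_measure_wulff volume hφR fun ε hε => ?_
    obtain ⟨i, hi⟩ := (hclose ε hε).exists
    refine (hV (ψ i)).trans (measureReal_mono (fun x hx u hu => ?_)
      (isCompact_wulff fun u hu => add_le_add_left (hφR u hu) ε).measure_ne_top)
    linarith [inner_le_supportFun (hL _).isCompact hx u, (abs_lt.1 (hi u hu)).1]
  have hK : IsConvexBody (wulff φ) := isConvexBody_of_volume_ne_zero (convex_wulff φ)
    (isCompact_wulff hφR) (measureReal_ne_zero_iff (isCompact_wulff hφR).measure_ne_top |>.1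
      (hv.trans_le hvol).ne')
  refine ⟨wulff φ, hK, hvol, ψ, hψ, fun ε hε => ?_⟩
  filter_upwards [hclose ε hε] with i hi u hu
  linarith [supportFun_wulff_le hK.nonempty hu, (abs_lt.1 (hi u hu)).2]

/-! ### Minkowski's problem -/

theorem integral_inner_eq_zero {m : ℕ} {μ : Measure (Euc m)} [IsFiniteMeasure μ]
    (hμ : μ (unitSphere m)ᶜ = 0) (hbary : ∫ x, x ∂μ = 0) (v : Euc m) : ∫ u, ⟪v, u⟫ ∂μ = 0 := by
  rw [integral_inner (𝕜 := ℝ) (f := fun u => u)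
    (integrable_of_measure_compl_unitSphere hμ continuous_id) v, hbary, inner_zero_right]

theorem exists_pos_mul_norm_le {E : Type*} [NormedAddCommGroup E] [NormedSpace ℝ E]
    [ProperSpace E] {p : E → ℝ} (hp : Continuous p)
    (hsmul : ∀ (r : ℝ) x, 0 ≤ r → p (r • x) = r * p x) (hpos : ∀ x, x ≠ 0 → 0 < p x) :
    ∃ c, 0 < c ∧ ∀ x, c * ‖x‖ ≤ p x := by
  have hp0 : p 0 = 0 := by simpa using hsmul 0 0 le_rfl
  rcases subsingleton_or_nontrivial E with _ | _
  · exact ⟨1, one_pos, fun x => by simp [Subsingleton.elim x 0, hp0]⟩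
  obtain ⟨y, hy, hmin⟩ := (isCompact_sphere (0 : E) 1).exists_isMinOn
    (NormedSpace.sphere_nonempty.2 zero_le_one) hp.continuousOn
  refine ⟨p y, hpos y (ne_zero_of_mem_unit_sphere ⟨y, hy⟩), fun x => ?_⟩
  rcases eq_or_ne x 0 with rfl | hx
  · simp [hp0]
  have hle : p y ≤ p (‖x‖⁻¹ • x) := hmin (mem_sphere_zero_iff_norm.2 (norm_smul_inv_norm hx))
  rwa [hsmul _ _ (by positivity), ← div_eq_inv_mul, le_div_iff₀ (norm_pos_iff.2 hx)] at hle

section SupportIntegral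

variable {m : ℕ} {μ : Measure (Euc m)} [IsFiniteMeasure μ] {L : Set (Euc m)}

theorem supportIntegral_vadd (hμ : μ (unitSphere m)ᶜ = 0) (hbary : ∫ x, x ∂μ = 0)
    (hL : IsCompact L) (hne : L.Nonempty) (v : Euc m) :
    supportIntegral μ (v +ᵥ L) = supportIntegral μ L := by
  simp only [supportIntegral, supportFun_vadd hL hne]
  rw [integral_add (integrable_of_measure_compl_unitSphere hμ (by fun_prop))
    (integrable_of_measure_compl_unitSphere hμ (continuous_supportFun hL)),
    integral_inner_eq_zero hμ hbary, zero_add]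

theorem supportIntegral_le_integral (hμ : μ (unitSphere m)ᶜ = 0) (hL : IsCompact L)
    {φ : Euc m → ℝ} (hφ : Continuous φ) (h : ∀ u, ‖u‖ = 1 → supportFun L u ≤ φ u) :
    supportIntegral μ L ≤ ∫ u, φ u ∂μ := by
  have hsphere : ∀ᵐ u ∂μ, u ∈ unitSphere m := hμ
  refine integral_mono_ae (integrable_of_measure_compl_unitSphere hμ (continuous_supportFun hL))
    (integrable_of_measure_compl_unitSphere hμ hφ) ?_
  filter_upwards [hsphere] with u hu using h u (mem_sphere_zero_iff_norm.1 hu)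

theorem integral_max_inner_le_supportIntegral (hμ : μ (unitSphere m)ᶜ = 0) (hL : IsCompact L)
    (h0 : 0 ∈ L) {x : Euc m} (hx : x ∈ L) : ∫ u, max ⟪x, u⟫ 0 ∂μ ≤ supportIntegral μ L := by
  refine integral_mono (integrable_of_measure_compl_unitSphere hμ (by fun_prop))
    (integrable_of_measure_compl_unitSphere hμ (continuous_supportFun hL)) fun u => ?_
  exact max_le (inner_le_supportFun hL hx u) (by simpa using inner_le_supportFun hL h0 u)

theorem supportIntegral_le_of_tendsto (hμ : μ (unitSphere m)ᶜ = 0) {K : Set (Euc m)}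
    (hK : IsCompact K) {L : ℕ → Set (Euc m)} (hL : ∀ i, IsCompact (L i))
    (hle : ∀ ε > 0, ∀ᶠ i in Filter.atTop, ∀ u, ‖u‖ = 1 → supportFun K u ≤ supportFun (L i) u + ε)
    {s : ℝ} (hs : Filter.Tendsto (fun i => supportIntegral μ (L i)) Filter.atTop (𝓝 s)) :
    supportIntegral μ K ≤ s := by
  have hstep (ε : ℝ) (hε : 0 < ε) : supportIntegral μ K ≤ s + μ.real univ * ε := by
    refine ge_of_tendsto (hs.add_const _) ?_
    filter_upwards [hle ε hε] with i hi
    have hcont := continuous_supportFun (hL i)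
    calc supportIntegral μ K ≤ ∫ u, (supportFun (L i) u + ε) ∂μ :=
          supportIntegral_le_integral hμ hK (hcont.add_const ε) hi
      _ = supportIntegral μ (L i) + μ.real univ * ε := by
          rw [integral_add (integrable_of_measure_compl_unitSphere hμ hcont) (integrable_const ε),
            integral_const, smul_eq_mul, supportIntegral]
  have hlim : Filter.Tendsto (fun ε => s + μ.real univ * ε) (𝓝[>] 0) (𝓝 s) := by
    have hcont : Continuous fun ε => s + μ.real univ * ε := by fun_prop
    simpa using (hcont.tendsto 0).mono_left nhdsWithin_le_nhds
  exact ge_of_tendsto hlim (eventually_mem_nhdsWithin.mono hstep)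

end SupportIntegral

/-- The extremal property characterising solutions of Minkowski's problem for `μ` up to homothety:
`K` minimises the homothety-invariant ratio `(∫ h_L dμ)^m / vol L` among convex bodies `L`. -/
def IsMinkowskiMinimizer {m : ℕ} (μ : Measure (Euc m)) (K : Set (Euc m)) : Prop :=
  ∀ L, IsConvexBody L →
    volume.real L * supportIntegral μ K ^ m ≤ volume.real K * supportIntegral μ L ^ m

theorem IsConvexBody.nontrivial {k : ℕ} {K : Set (Euc (k + 1))} (hK : IsConvexBody K) :
    K.Nontrivial := by
  obtain ⟨x, hx⟩ := hK.2.2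
  exact (infinite_of_mem_nhds x (mem_interior_iff_mem_nhds.1 hx)).nontrivial

theorem IsConvexBody.exists_normalization {k : ℕ} {L : Set (Euc (k + 1))} (hL : IsConvexBody L) :
    ∃ c : ℝ, 0 < c ∧ ∃ v : Euc (k + 1), 0 ∈ v +ᵥ c • L ∧ volume.real (v +ᵥ c • L) = 1 := by
  have hVL := hL.volume_pos
  obtain ⟨c, hc, hcpow⟩ := exists_pos_pow_eq k.succ_ne_zero (inv_pos.2 hVL)
  obtain ⟨v, hv⟩ := (hL.smul hc.ne').exists_zero_mem_interior_vadd
  refine ⟨c, hc, v, interior_subset hv, ?_⟩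
  rw [volume_real_vadd, volume_real_smul L hc.le, hcpow, inv_mul_cancel₀ hVL.ne']

theorem exists_isConvexBody_volume_eq_one (k : ℕ) :
    ∃ L : Set (Euc (k + 1)), IsConvexBody L ∧ 0 ∈ L ∧ volume.real L = 1 := by
  have hball : IsConvexBody (Metric.closedBall (0 : Euc (k + 1)) 1) :=
    ⟨convex_closedBall 0 1, isCompact_closedBall 0 1, 0,
      Metric.ball_subset_interior_closedBall (Metric.mem_ball_self one_pos)⟩
  obtain ⟨c, hc, v, h0, hvol⟩ := hball.exists_normalization
  exact ⟨_, (hball.smul hc.ne').vadd v, h0, hvol⟩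

/-- The hypotheses of Minkowski's theorem on a measure on `ℝ^m`: it is carried by the unit sphere,
has barycentre `0` and is not carried by a hyperplane through `0`. -/
structure IsMinkowskiMeasure {m : ℕ} (μ : Measure (Euc m)) : Prop where
  measure_compl_unitSphere : μ (unitSphere m)ᶜ = 0
  integral_eq_zero : ∫ x, x ∂μ = 0
  measure_sdiff_ker_pos : ∀ f : Euc m →ₗ[ℝ] ℝ, f ≠ 0 → 0 < μ (unitSphere m \ {x | f x = 0})

namespace IsMinkowskiMeasure

section

variable {m : ℕ} {μ : Measure (Euc m)} [IsFiniteMeasure μ]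

theorem integrable (hμ : IsMinkowskiMeasure μ) {f : Euc m → ℝ} (hf : Continuous f) :
    Integrable f μ :=
  integrable_of_measure_compl_unitSphere hμ.measure_compl_unitSphere hf

theorem integral_max_inner_pos (hμ : IsMinkowskiMeasure μ) {x : Euc m} (hx : x ≠ 0) :
    0 < ∫ u, max ⟪x, u⟫ 0 ∂μ := by
  have habs : ∫ u, |⟪x, u⟫| ∂μ = 2 * ∫ u, max ⟪x, u⟫ 0 ∂μ := by
    have hpointwise (u : Euc m) : |⟪x, u⟫| = 2 * max ⟪x, u⟫ 0 - ⟪x, u⟫ := by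
      rw [← posPart_def, eq_sub_iff_add_eq, abs_add_eq_two_nsmul_posPart, two_nsmul, two_mul]
    simp only [hpointwise]
    rw [integral_sub (hμ.integrable (by fun_prop)) (hμ.integrable (by fun_prop)),
      integral_const_mul, integral_inner_eq_zero hμ.measure_compl_unitSphere hμ.integral_eq_zero,
      sub_zero]
  refine lt_of_le_of_ne (integral_nonneg fun u => le_max_right _ _) fun hzero => ?_
  rw [← hzero, mul_zero, integral_eq_zero_iff_of_nonneg (fun u => abs_nonneg _)
    (hμ.integrable (by fun_prop))] at habs
  have hx' : (innerₛₗ ℝ x : Euc m →ₗ[ℝ] ℝ) ≠ 0 := fun h =>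
    hx (inner_self_eq_zero.1 (LinearMap.congr_fun h x))
  refine (hμ.measure_sdiff_ker_pos _ hx').ne' (measure_mono_null (fun u hu => ?_) habs)
  exact fun h => hu.2 (abs_eq_zero.1 h)

theorem exists_pos_mul_norm_le_integral_max_inner (hμ : IsMinkowskiMeasure μ) :
    ∃ c, 0 < c ∧ ∀ x : Euc m, c * ‖x‖ ≤ ∫ u, max ⟪x, u⟫ 0 ∂μ := by
  refine exists_pos_mul_norm_le ?_ (fun r x hr => ?_) fun x hx => hμ.integral_max_inner_pos hx
  · rw [← Measure.restrict_eq_self_of_ae_mem (s := unitSphere m) hμ.measure_compl_unitSphere]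
    exact continuous_parametric_integral_of_continuous (by fun_prop) (isCompact_sphere 0 1)
  · simp only [← integral_const_mul, real_inner_smul_left, mul_max_of_nonneg _ _ hr, mul_zero]

theorem exists_subset_closedBall_supportIntegral (hμ : IsMinkowskiMeasure μ) :
    ∃ C, 0 ≤ C ∧ ∀ L : Set (Euc m), IsCompact L → 0 ∈ L →
      L ⊆ Metric.closedBall 0 (C * supportIntegral μ L) := by
  obtain ⟨c, hc, hcx⟩ := hμ.exists_pos_mul_norm_le_integral_max_inner
  refine ⟨c⁻¹, (inv_pos.2 hc).le, fun L hL h0 x hx => ?_⟩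
  rw [mem_closedBall_zero_iff, ← div_eq_inv_mul, le_div_iff₀' hc]
  exact (hcx x).trans
    (integral_max_inner_le_supportIntegral hμ.measure_compl_unitSphere hL h0 hx)

theorem supportIntegral_pos (hμ : IsMinkowskiMeasure μ) {L : Set (Euc m)} (hL : IsCompact L)
    (hnt : L.Nontrivial) : 0 < supportIntegral μ L := by
  obtain ⟨a, ha, b, hb, hab⟩ := hnt
  rw [← supportIntegral_vadd hμ.measure_compl_unitSphere hμ.integral_eq_zero hL ⟨a, ha⟩ (-a)]
  exact (hμ.integral_max_inner_pos (x := -a + b) fun h => hab (neg_add_eq_zero.1 h)).trans_le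
    (integral_max_inner_le_supportIntegral hμ.measure_compl_unitSphere (hL.vadd _)
      ⟨a, ha, neg_add_cancel a⟩ ⟨b, hb, rfl⟩)

end

variable {k : ℕ} {μ : Measure (Euc (k + 1))} [IsFiniteMeasure μ]

theorem exists_supportIntegral_le_of_volume_eq_one (hμ : IsMinkowskiMeasure μ) :
    ∃ K, IsConvexBody K ∧ 1 ≤ volume.real K ∧ ∀ L, IsConvexBody L → 0 ∈ L → volume.real L = 1 →
      supportIntegral μ K ≤ supportIntegral μ L := by
  obtain ⟨C, hC, hCL⟩ := hμ.exists_subset_closedBall_supportIntegral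
  let T := supportIntegral μ '' {L | IsConvexBody L ∧ 0 ∈ L ∧ volume.real L = 1}
  have hTne : T.Nonempty := by
    obtain ⟨L, hL⟩ := exists_isConvexBody_volume_eq_one k
    exact ⟨_, mem_image_of_mem _ hL⟩
  have hTbdd : BddBelow T := ⟨0, by
    rintro _ ⟨L, hL, rfl⟩
    exact (hμ.supportIntegral_pos hL.1.isCompact hL.1.nontrivial).le⟩
  obtain ⟨s, hanti, hslim, hsT⟩ := exists_seq_tendsto_sInf hTne hTbdd
  choose L hL hLs using hsT
  have hLR (n : ℕ) : L n ⊆ Metric.closedBall 0 (C * s 0).toNNReal := by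
    refine (hCL _ (hL n).1.isCompact (hL n).2.1).trans (Metric.closedBall_subset_closedBall ?_)
    rw [hLs]
    exact (mul_le_mul_of_nonneg_left (hanti n.zero_le) hC).trans (Real.le_coe_toNNReal _)
  obtain ⟨K, hK, hVK, ψ, hψ, hlim⟩ := exists_isConvexBody_subseq_limit (fun n => (hL n).1) hLR
    one_pos fun n => (hL n).2.2.ge
  refine ⟨K, hK, hVK, fun M hM h0M hVM => ?_⟩
  refine (supportIntegral_le_of_tendsto hμ.measure_compl_unitSphere hK.isCompact
    (fun i => (hL (ψ i)).1.isCompact) hlim ?_).trans (csInf_le hTbdd ⟨M, ⟨hM, h0M, hVM⟩, rfl⟩)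
  simp only [hLs]
  exact hslim.comp hψ.tendsto_atTop

theorem exists_isMinkowskiMinimizer (hμ : IsMinkowskiMeasure μ) :
    ∃ K, IsConvexBody K ∧ IsMinkowskiMinimizer μ K := by
  obtain ⟨K, hK, hVK, hmin⟩ := hμ.exists_supportIntegral_le_of_volume_eq_one
  refine ⟨K, hK, fun L hL => ?_⟩
  have hKpos := hμ.supportIntegral_pos hK.isCompact hK.nontrivial
  have hLpos := hμ.supportIntegral_pos hL.isCompact hL.nontrivial
  have hVL := hL.volume_pos
  obtain ⟨c, hc, v, h0, hvol⟩ := hL.exists_normalization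
  have hle : supportIntegral μ K ≤ c * supportIntegral μ L := by
    have hcL := hL.smul hc.ne'
    rw [← supportIntegral_smul μ L hc.le, ← supportIntegral_vadd hμ.measure_compl_unitSphere
      hμ.integral_eq_zero hcL.isCompact hcL.nonempty v]
    exact hmin _ (hcL.vadd v) h0 hvol
  rw [volume_real_vadd, volume_real_smul L hc.le] at hvol
  calc volume.real L * supportIntegral μ K ^ (k + 1)
      ≤ volume.real L * (c * supportIntegral μ L) ^ (k + 1) := by gcongr
    _ = c ^ (k + 1) * volume.real L * supportIntegral μ L ^ (k + 1) := by ring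
    _ ≤ volume.real K * supportIntegral μ L ^ (k + 1) := by rw [hvol]; gcongr

theorem exists_normalized_isMinkowskiMinimizer (hk : k ≠ 0) (hμ : IsMinkowskiMeasure μ) :
    ∃ K, IsConvexBody K ∧ 0 ∈ interior K ∧ IsMinkowskiMinimizer μ K ∧
      supportIntegral μ K = hausdorffFactor k * (k + 1) * volume.real K := by
  obtain ⟨K, hK, hmin⟩ := hμ.exists_isMinkowskiMinimizer
  obtain ⟨v, hv⟩ := hK.exists_zero_mem_interior_vadd
  have hVK := hK.volume_pos
  have hΛ := hμ.supportIntegral_pos hK.isCompact hK.nontrivial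
  have hκ := hausdorffFactor_pos k
  have hvadd := supportIntegral_vadd hμ.measure_compl_unitSphere hμ.integral_eq_zero hK.isCompact
    hK.nonempty v
  obtain ⟨r, hr, hrpow⟩ := exists_pos_pow_eq hk (a := supportIntegral μ K /
    (hausdorffFactor k * (k + 1) * volume.real K)) (by positivity)
  refine ⟨r • (v +ᵥ K), (hK.vadd v).smul hr.ne', ?_, fun L hL => ?_, ?_⟩
  · rw [interior_smul₀ hr.ne']
    exact ⟨0, hv, smul_zero r⟩
  · rw [supportIntegral_smul μ _ hr.le, hvadd, volume_real_smul _ hr.le, volume_real_vadd, mul_pow,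
      mul_left_comm, mul_assoc]
    exact mul_le_mul_of_nonneg_left (hmin L hL) (by positivity)
  · rw [supportIntegral_smul μ _ hr.le, hvadd, volume_real_smul _ hr.le, volume_real_vadd, pow_succ,
      hrpow]
    field_simp

variable {K : Set (Euc (k + 1))} {f : Euc (k + 1) → ℝ}

theorem eventually_volume_mul_le (hμ : IsMinkowskiMeasure μ) (hK : IsConvexBody K)
    (h0 : 0 ∈ interior K) (hmin : IsMinkowskiMinimizer μ K) (hf : Continuous f) :
    ∀ᶠ t in 𝓝[>] (0 : ℝ),
      volume.real (wulffPerturbation K f t) * supportIntegral μ K ^ (k + 1) ≤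
        volume.real K * (supportIntegral μ K + t * ∫ u, f u ∂μ) ^ (k + 1) := by
  filter_upwards [hK.eventually_isConvexBody_wulffPerturbation h0 hf] with t ⟨hW, _⟩
  have hcK := continuous_supportFun hK.isCompact
  have hle : supportIntegral μ (wulffPerturbation K f t) ≤
      supportIntegral μ K + t * ∫ u, f u ∂μ := by
    refine (supportIntegral_le_integral hμ.measure_compl_unitSphere hW.isCompact
      (φ := fun u => supportFun K u + t * f u) (by fun_prop)
      fun u hu => supportFun_wulff_le hW.nonempty hu).trans_eq ?_
    rw [integral_add (hμ.integrable hcK) (hμ.integrable (by fun_prop)), integral_const_mul,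
      supportIntegral]
  have hpos := hμ.supportIntegral_pos hW.isCompact hW.nontrivial
  exact (hmin _ hW).trans (by gcongr)

theorem integral_surfMeasure_le (hμ : IsMinkowskiMeasure μ) (hK : IsConvexBody K)
    (h0 : 0 ∈ interior K) (hmin : IsMinkowskiMinimizer μ K)
    (hnorm : supportIntegral μ K = hausdorffFactor k * (k + 1) * volume.real K)
    (hf : Continuous f) : ∫ u, f u ∂(surfMeasure K) ≤ ∫ u, f u ∂μ := by
  have hκ := hausdorffFactor_pos k
  have hΛ := hμ.supportIntegral_pos hK.isCompact hK.nontrivial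
  have hder : HasDerivAt
      (fun t => volume.real K * (supportIntegral μ K + t * ∫ u, f u ∂μ) ^ (k + 1))
      (volume.real K * ((k + 1) * supportIntegral μ K ^ k * ∫ u, f u ∂μ)) 0 := by
    simpa using ((((hasDerivAt_id (0 : ℝ)).mul_const (∫ u, f u ∂μ)).const_add
      (supportIntegral μ K)).fun_pow (k + 1)).const_mul (volume.real K)
  have hle := le_of_tendsto_of_tendsto
    ((hK.tendsto_volume_wulffPerturbation h0 hf).mul_const (supportIntegral μ K ^ (k + 1)))
    ((hasDerivAt_iff_tendsto_slope.1 hder).mono_left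
      (nhdsWithin_mono 0 fun t ht => ne_of_gt ht)) (by
      filter_upwards [hμ.eventually_volume_mul_le hK h0 hmin hf, self_mem_nhdsWithin] with t hle ht
      rw [slope_def_field, sub_zero, zero_mul, add_zero, div_mul_eq_mul_div, sub_mul]
      exact div_le_div_of_nonneg_right (sub_le_sub_right hle _) (le_of_lt ht))
  have hscale : volume.real K * ((k + 1) * supportIntegral μ K ^ k * ∫ u, f u ∂μ) =
      (hausdorffFactor k)⁻¹ * (∫ u, f u ∂μ) * supportIntegral μ K ^ (k + 1) := by
    rw [pow_succ, ← mul_assoc _ (supportIntegral μ K ^ k), hnorm]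
    field_simp
  rw [hscale] at hle
  exact le_of_mul_le_mul_left (le_of_mul_le_mul_right hle (by positivity)) (inv_pos.2 hκ)

theorem exists_surfMeasure_eq (hk : k ≠ 0) (hμ : IsMinkowskiMeasure μ) :
    ∃ K, IsConvexBody K ∧ surfMeasure K = μ := by
  obtain ⟨K, hK, h0, hmin, hnorm⟩ := hμ.exists_normalized_isMinkowskiMinimizer hk
  have : IsFiniteMeasure (surfMeasure K) := ⟨hK.surfMeasure_univ_lt_top h0⟩
  refine ⟨K, hK, ext_of_forall_integral_eq_of_IsFiniteMeasure fun f => le_antisymm ?_ ?_⟩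
  · exact hμ.integral_surfMeasure_le hK h0 hmin hnorm f.continuous
  · simpa [integral_neg] using hμ.integral_surfMeasure_le hK h0 hmin hnorm f.continuous.neg

end IsMinkowskiMeasure

/-- Minkowski's existence and uniqueness theorem
(Alexandrov–Fenchel–Jessen form). -/
theorem minkowski_existence_uniqueness {m : ℕ} (hm : 2 ≤ m)
    (μ : Measure (Euc m)) [IsFiniteMeasure μ]
    (hsupp : μ (unitSphere m)ᶜ = 0)
    (hbary : ∫ x, x ∂μ = 0)
    (hnondeg : ∀ f : Euc m →ₗ[ℝ] ℝ, f ≠ 0 → 0 < μ (unitSphere m \ {x | f x = 0})) :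
    (∃ K : Set (Euc m), IsConvexBody K ∧
        ∀ U : Set (Euc m), MeasurableSet U → surfMeasure K U = μ U) ∧
    ∀ K K' : Set (Euc m),
      (IsConvexBody K ∧ ∀ U : Set (Euc m), MeasurableSet U → surfMeasure K U = μ U) →
      (IsConvexBody K' ∧ ∀ U : Set (Euc m), MeasurableSet U → surfMeasure K' U = μ U) →
      ∃ v : Euc m, K' = v +ᵥ K := by
  obtain ⟨k, rfl⟩ : ∃ k, m = k + 1 := ⟨m - 1, by lia⟩
  have hk : k ≠ 0 := by lia
  refine ⟨?_, fun K K' hK hK' => ?_⟩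
  · obtain ⟨K, hK, rfl⟩ := IsMinkowskiMeasure.exists_surfMeasure_eq hk ⟨hsupp, hbary, hnondeg⟩
    exact ⟨K, hK, fun _ _ => rfl⟩
  · refine hK.1.exists_eq_vadd_of_surfMeasure_eq hk hK'.1 (Measure.ext fun U hU => ?_)
    rw [hK.2 U hU, hK'.2 U hU]
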